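/- Every continuous expansive flow with the shadowing property on a compact metric space has entropy flexibility. -/

import Mathlib

/-!
The set `Λ` is built from pseudo-orbits that concatenate loops, with the freedom of concatenation
cut down until the entropy is exactly `c`. The measure is an extreme point of the set of invariant
measures on `Λ` with entropy at least `c`.

**Consequences of expansiveness.** When one orbit stays close to another up to a time change of
speed near `1`, the time offset between them is almost constant (`drift`, `DriftConst`). Counting
the possible offsets gives `master_count`: the separated orbits that follow one given orbit, except
for a small proportion of the time, number at most `C * exp (κ * n)` with `κ` small. Therefore the
whole entropy is visible at one fixed scale (`bowen_ball_count`, `topEntropyOn_le_of_scale`), and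
two families of orbits that follow each other most of the time have almost the same entropy
(`entropy_compare`).

**The compact invariant set.** If `c` is less than the topological entropy, then for arbitrarily
long times `n` there are at least `exp (a * n)` separated orbit segments, with some `a > c`, that
begin and end near one common point (`exists_loops`). Shadowing provides an orbit tracing each
bi-infinite concatenation of them (`exists_traces`), and expansiveness keeps the speed of the
reparametrization close to `1` (`traces_speed`); these data form a `LoopSystem`. Fix one
distinguished loop, and for a real `t` let `LoopSystem.orb t` collect the orbits tracing the
concatenations whose `i`-th loop is free when the fractional part of `i * √2` is at most `t` and is
the distinguished loop otherwise. Since `√2` is badly approximable, raising `t` a little frees only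
a small proportion of the places in any long window (`kro_sep`, `kro_count`), so the entropy is
continuous in `t` (`LoopSystem.entropy_step`). It runs from `0` (`LoopSystem.entropy_bot`) to a
value above `c` (`LoopSystem.entropy_top`), hence equals `c` for some `t`; the closure of that
family is `Λ` (`exists_subsystem`).

**The ergodic measure.** The entropy rate of a partition exceeds that of a second one by at most the
growth rate of separated sets whose points share their itinerary through the second partition
(`rate_le_rate_add`). With a trivial second partition this gives the inequality between the entropy
of an invariant measure and the topological entropy of its support (`rate_le_top`); with a fine one,
where expansiveness makes the growth rate vanish, it shows that fine partitions compute the entropy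
(`measEntropy_eq_rate`) and yields upper semicontinuity of the entropy
(`le_measEntropy_of_tendsto`). A weak limit of averages over separated sets is then an invariant
measure of the time-one map with entropy at least `c` (`exists_inv_measure`), and averaging it along
the flow (`flowAvg`) makes it flow-invariant. The flow-invariant measures on `Λ` of entropy at least
`c` form a nonempty compact set `bigMeas`; an extreme point of it is ergodic (`exists_ergodic`),
because conditioning on an invariant set yields measures of entropy at most `c` whose average is at
least `c`, so both lie in the set again.
-/

open Filter MeasureTheory Set Topology
open scoped ENNReal NNReal

attribute [local instance] PiCountable.metricSpace

namespace EF

/-! ### Topological entropy via separated sets -/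

section Entropy

variable {M : Type*} [MetricSpace M]

/-- `Q` is an `(n,ε)`-separated set for `f`. -/
def IsDynSep (f : M → M) (n : ℕ) (ε : ℝ) (Q : Set M) : Prop :=
  Q.Pairwise fun x y => ∃ j : ℕ, j ≤ n ∧ ε < dist (f^[j] x) (f^[j] y)

/-- Maximal cardinality of an `(n,ε)`-separated subset of `K`. -/
noncomputable def sepCount (f : M → M) (K : Set M) (n : ℕ) (ε : ℝ) : ℕ :=
  sSup {k : ℕ | ∃ Q : Finset M, ↑Q ⊆ K ∧ IsDynSep f n ε ↑Q ∧ Q.card = k}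

/-- Topological entropy of `f` on the (not necessarily invariant) set `K`. -/
noncomputable def topEntropyOn (f : M → M) (K : Set M) : EReal :=
  ⨆ (ε : ℝ) (_ : 0 < ε),
    Filter.atTop.limsup fun n : ℕ => ((Real.log (sepCount f K n ε) / n : ℝ) : EReal)

/-- Topological entropy of `f`. -/
noncomputable def topEntropy (f : M → M) : EReal :=
  topEntropyOn f Set.univ

end Entropy

/-! ### Measure-theoretic (Kolmogorov–Sinai) entropy -/

section MeasEntropy

variable {α : Type*} [MeasurableSpace α]

/-- A finite measurable partition of the whole space. -/
def IsMeasPartition (P : Finset (Set α)) : Prop :=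
  (∀ p ∈ P, MeasurableSet p) ∧ ⋃₀ (↑P : Set (Set α)) = Set.univ ∧
    (↑P : Set (Set α)).Pairwise Disjoint

/-- The function `x ↦ - x log x`. -/
noncomputable def negMulLog (x : ℝ) : ℝ := -(x * Real.log x)

/-- Information of the refinement `P ∨ f⁻¹ P ∨ ⋯ ∨ f⁻⁽ⁿ⁻¹⁾ P` with respect to `μ`. -/
noncomputable def refinedInfo (f : α → α) (μ : Measure α) (P : Finset (Set α)) (n : ℕ) : ℝ :=
  ∑ a : Fin n → {p // p ∈ P},
    negMulLog (μ (⋂ i : Fin n, f^[(i : ℕ)] ⁻¹' ((a i : Set α)))).toReal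

/-- Entropy of `f` w.r.t. `μ` and the partition `P`. -/
noncomputable def partEntropy (f : α → α) (μ : Measure α) (P : Finset (Set α)) : ℝ :=
  Filter.atTop.limsup fun n : ℕ => refinedInfo f μ P n / n

/-- Kolmogorov–Sinai entropy of `f` with respect to `μ`. -/
noncomputable def measEntropy (f : α → α) (μ : Measure α) : EReal :=
  ⨆ (P : Finset (Set α)) (_ : IsMeasPartition P), ((partEntropy f μ P : ℝ) : EReal)

end MeasEntropy

/-! ### Discrete-time dynamics -/

section Discrete

variable {M : Type*} [MetricSpace M]

/-- A set invariant under `f`. -/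
def InvSet (f : M → M) (Λ : Set M) : Prop := f '' Λ = Λ

/-- `f` is minimal on the invariant set `Λ`. -/
def MinimalOn (f : M → M) (Λ : Set M) : Prop :=
  ∀ K : Set M, K ⊆ Λ → K.Nonempty → IsClosed K → f '' K = K → K = Λ

variable [MeasurableSpace M]

/-- `f` is uniquely ergodic on `Λ`: there is exactly one invariant Borel probability
measure supported in `Λ`. -/
def UniquelyErgodicOn (f : M → M) (Λ : Set M) : Prop :=
  ∃! μ : Measure M, IsProbabilityMeasure μ ∧ MeasurePreserving f μ μ ∧ μ Λᶜ = 0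

/-- `f` is strictly ergodic on `Λ`: minimal and uniquely ergodic. -/
def StrictlyErgodicOn (f : M → M) (Λ : Set M) : Prop :=
  MinimalOn f Λ ∧ UniquelyErgodicOn f Λ

/-- Entropy flexibility of `f` on an invariant set `S`. -/
def EntropyFlexibleOn (f : M → M) (S : Set M) : Prop :=
  ∀ c : ℝ, 0 ≤ c → (c : EReal) < topEntropyOn f S →
    ∃ (μ : Measure M) (Λ : Set M), IsProbabilityMeasure μ ∧ Ergodic f μ ∧ μ Sᶜ = 0 ∧
      Λ ⊆ S ∧ IsCompact Λ ∧ f '' Λ = Λ ∧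
      topEntropyOn f Λ = (c : EReal) ∧ measEntropy f μ = (c : EReal)

/-- Entropy flexibility of `f` (on the whole space). -/
def EntropyFlexible (f : M → M) : Prop :=
  ∀ c : ℝ, 0 ≤ c → (c : EReal) < topEntropy f →
    ∃ (μ : Measure M) (Λ : Set M), IsProbabilityMeasure μ ∧ Ergodic f μ ∧
      IsCompact Λ ∧ f '' Λ = Λ ∧
      topEntropyOn f Λ = (c : EReal) ∧ measEntropy f μ = (c : EReal)

end Discrete

/-! ### Shadowing and expansiveness (discrete time) -/

section Shadowing

variable {M : Type*} [MetricSpace M]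

/-- The shadowing property for a homeomorphism `f` (full orbits indexed by `ℤ`,
encoded via orbit functions `z` with `z (n+1) = f (z n)`). -/
def ShadowingProperty (f : M → M) : Prop :=
  ∀ ε : ℝ, 0 < ε → ∃ δ : ℝ, 0 < δ ∧ ∀ x : ℤ → M,
    (∀ n : ℤ, dist (f (x n)) (x (n + 1)) ≤ δ) →
    ∃ z : ℤ → M, (∀ n : ℤ, z (n + 1) = f (z n)) ∧ ∀ n : ℤ, dist (z n) (x n) ≤ ε

/-- The shadowing property relative to an invariant set `Λ`. -/
def ShadowingOn (f : M → M) (Λ : Set M) : Prop :=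
  ∀ ε : ℝ, 0 < ε → ∃ δ : ℝ, 0 < δ ∧ ∀ x : ℤ → M, (∀ n : ℤ, x n ∈ Λ) →
    (∀ n : ℤ, dist (f (x n)) (x (n + 1)) ≤ δ) →
    ∃ z : ℤ → M, (∀ n : ℤ, z n ∈ Λ) ∧ (∀ n : ℤ, z (n + 1) = f (z n)) ∧
      ∀ n : ℤ, dist (z n) (x n) ≤ ε

/-- Expansiveness of a homeomorphism, phrased via full orbit functions. -/
def Expansive (f : M → M) : Prop :=
  ∃ e : ℝ, 0 < e ∧ ∀ z w : ℤ → M,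
    (∀ n : ℤ, z (n + 1) = f (z n)) → (∀ n : ℤ, w (n + 1) = f (w n)) →
    (∀ n : ℤ, dist (z n) (w n) ≤ e) → z 0 = w 0

/-- Topological transitivity of `f` on `Λ`. -/
def TransitiveOn (f : M → M) (Λ : Set M) : Prop :=
  ∀ U V : Set M, IsOpen U → IsOpen V → (U ∩ Λ).Nonempty → (V ∩ Λ).Nonempty →
    ∃ n : ℕ, 0 < n ∧ ((f^[n] '' (U ∩ Λ)) ∩ V).Nonempty

end Shadowing

/-! ### Continuous-time dynamics -/

section Flows

variable {M : Type*} [MetricSpace M]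

/-- A set invariant under all time-`t` maps of the flow. -/
def FlowInvSet (φ : Flow ℝ M) (Λ : Set M) : Prop := ∀ t : ℝ, φ.toFun t '' Λ = Λ

/-- Topological entropy of a flow on a set: entropy of its time-one map. -/
noncomputable def flowTopEntropyOn (φ : Flow ℝ M) (K : Set M) : EReal :=
  topEntropyOn (φ.toFun 1) K

/-- Topological entropy of a flow: the entropy of its time-one map. -/
noncomputable def flowTopEntropy (φ : Flow ℝ M) : EReal := topEntropy (φ.toFun 1)

/-- Minimality of a flow on `Λ`. -/
def FlowMinimalOn (φ : Flow ℝ M) (Λ : Set M) : Prop :=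
  ∀ K : Set M, K ⊆ Λ → K.Nonempty → IsClosed K → (∀ t : ℝ, φ.toFun t '' K = K) → K = Λ

variable [MeasurableSpace M]

/-- An invariant measure for a flow. -/
def FlowInvariant (φ : Flow ℝ M) (μ : Measure M) : Prop :=
  ∀ t : ℝ, MeasurePreserving (φ.toFun t) μ μ

/-- An ergodic measure for a flow. -/
def FlowErgodic (φ : Flow ℝ M) (μ : Measure M) : Prop :=
  FlowInvariant φ μ ∧
    ∀ s : Set M, MeasurableSet s → (∀ t : ℝ, φ.toFun t ⁻¹' s = s) → μ s = 0 ∨ μ s = 1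

/-- Measure-theoretic entropy of a flow: entropy of the time-one map. -/
noncomputable def flowMeasEntropy (φ : Flow ℝ M) (μ : Measure M) : EReal :=
  measEntropy (φ.toFun 1) μ

/-- Unique ergodicity of a flow on `Λ`. -/
def FlowUniquelyErgodicOn (φ : Flow ℝ M) (Λ : Set M) : Prop :=
  ∃! μ : Measure M, IsProbabilityMeasure μ ∧ FlowInvariant φ μ ∧ μ Λᶜ = 0

/-- Strict ergodicity of a flow on `Λ`. -/
def FlowStrictlyErgodicOn (φ : Flow ℝ M) (Λ : Set M) : Prop :=
  FlowMinimalOn φ Λ ∧ FlowUniquelyErgodicOn φ Λ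

/-- Entropy flexibility for flows. -/
def FlowEntropyFlexible (φ : Flow ℝ M) : Prop :=
  ∀ c : ℝ, 0 ≤ c → (c : EReal) < flowTopEntropy φ →
    ∃ (μ : Measure M) (Λ : Set M), IsProbabilityMeasure μ ∧ FlowErgodic φ μ ∧
      IsCompact Λ ∧ FlowInvSet φ Λ ∧
      flowTopEntropyOn φ Λ = (c : EReal) ∧ flowMeasEntropy φ μ = (c : EReal)

end Flows

/-! ### Suspension flows -/

section Suspension

variable {X : Type*} [MetricSpace X] {Λ : Type*} [MetricSpace Λ]

/-- `φ` (a flow on `Λ`) is, on the subset `Γ ⊆ Λ`, the suspension flow of the base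
map `f` restricted to `S ⊆ X` under the roof function `ρ`, witnessed by the
embedding `e : X → Λ` of the base. This characterizes the quotient of `S × ℝ` by
`(x, ρ x) ∼ (f x, 0)` with the unit-speed vertical flow. -/
def IsSuspensionOn (f : X → X) (S : Set X) (ρ : X → ℝ) (φ : Flow ℝ Λ) (Γ : Set Λ) : Prop :=
  ∃ e : X → Λ, ContinuousOn e S ∧ (∀ x ∈ S, e x ∈ Γ) ∧
    (∀ x ∈ S, φ.toFun (ρ x) (e x) = e (f x)) ∧
    (∀ z ∈ Γ, ∃ x ∈ S, ∃ s : ℝ, 0 ≤ s ∧ s < ρ x ∧ φ.toFun s (e x) = z) ∧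
    (∀ x ∈ S, ∀ y ∈ S, ∀ s u : ℝ, 0 ≤ s → s < ρ x → 0 ≤ u → u < ρ y →
      φ.toFun s (e x) = φ.toFun u (e y) → x = y ∧ s = u)

end Suspension

/-! ### Symbolic dynamics -/

section Symbolic

/-- The full shift map on `ℤ → A`. -/
def fullShift (A : Type*) : (ℤ → A) → (ℤ → A) := fun x i => x (i + 1)

variable {A : Type*} [MetricSpace A]

/-- A subshift: a closed shift-invariant subset of the full shift. -/
def IsSubshift (S : Set (ℤ → A)) : Prop :=
  IsClosed S ∧ fullShift A '' S = S

/-- The vertex shift determined by a transition relation `Adj`. -/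
def vertexShift {B : Type*} (Adj : B → B → Prop) : Set (ℤ → B) :=
  {x | ∀ i : ℤ, Adj (x i) (x (i + 1))}

/-- A topological conjugacy between two shift spaces (over possibly different
alphabets): a homeomorphism of the subspaces intertwining the shift maps. -/
def ShiftConj {B : Type*} [mB : MetricSpace B] (S : Set (ℤ → A)) (T : Set (ℤ → B)) : Prop :=
  ∃ h : ↥S ≃ₜ ↥T, ∀ x y : ↥S, (y : ℤ → A) = fullShift A (x : ℤ → A) →
    ((h y : ℤ → B)) = fullShift B ((h x : ℤ → B))

/-- A subshift of finite type: a subshift topologically conjugate to a vertex shift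
over some finite alphabet. -/
def IsSFT [Fintype A] (S : Set (ℤ → A)) : Prop :=
  IsSubshift S ∧ ∃ (B : Type) (_ : Fintype B) (mB : MetricSpace B) (Adj : B → B → Prop),
    @ShiftConj A _ B mB S (vertexShift Adj)

/-- The word `w` occurs in some point of `S`. -/
def occursIn (w : List A) (S : Set (ℤ → A)) : Prop :=
  ∃ x ∈ S, ∃ a : ℤ, ∀ i : Fin w.length, x (a + (i : ℕ)) = w.get i

/-- The words of length `s` in the language of `S`. -/
def langOf (s : ℕ) (S : Set (ℤ → A)) : Set (List A) :=
  {w | w.length = s ∧ occursIn w S}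

/-- `r` is a parsing of `x` into words from `𝒲`. -/
def ParsesAt (x : ℤ → A) (𝒲 : Finset (List A)) (r : ℤ → ℤ) : Prop :=
  ∀ j : ℤ, ∃ w ∈ 𝒲, r (j + 1) = r j + w.length ∧
    ∀ i : Fin w.length, x (r j + (i : ℕ)) = w.get i

/-- The renewal system over a finite set of words `𝒲`: all bi-infinite free
concatenations of words from `𝒲`. -/
def renewalSet (𝒲 : Finset (List A)) : Set (ℤ → A) :=
  {x | ∃ r : ℤ → ℤ, ParsesAt x 𝒲 r}

end Symbolic

/-! ### Horseshoes for flows -/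

section Horseshoe

variable {M : Type*} [MetricSpace M]

/-- Auxiliary: `Λ` is a horseshoe of `φ` with symbol space `B`. -/
def HorseshoeWitness (φ : Flow ℝ M) (Λ : Set M) (B : Type) [Fintype B] [MetricSpace B] : Prop :=
  2 ≤ Fintype.card B ∧ ∃ ρ : (ℤ → B) → ℝ, Continuous ρ ∧ (∀ x, 0 < ρ x) ∧
    IsSuspensionOn (fullShift B) Set.univ ρ φ Λ

/-- A horseshoe of a flow: a compact invariant set on which the flow is conjugate to
a suspension flow over a full shift on at least two symbols. -/
def IsHorseshoe (φ : Flow ℝ M) (Λ : Set M) : Prop :=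
  ∃ (B : Type) (iB : Fintype B) (mB : MetricSpace B), @HorseshoeWitness M _ φ Λ B iB mB

end Horseshoe

/-! ### The metric on measures and empirical measures -/

section MeasMetric

variable {M : Type*} [MetricSpace M] [MeasurableSpace M]

/-- The metric `𝔡` on Borel (probability) measures determined by a sequence of test
functions `Φ`. -/
noncomputable def measDist (Φ : ℕ → M → ℝ) (μ ν : Measure M) : ℝ :=
  ∑' n : ℕ, (1 / 2 : ℝ) ^ (n + 1) * |(∫ x, Φ n x ∂μ) - ∫ x, Φ n x ∂ν|

/-- A sequence of test functions with `‖Φ n‖_∞ + Lip (Φ n) ≤ 1`, dense in `C(M,ℝ)`. -/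
def GoodTestSeq (Φ : ℕ → M → ℝ) : Prop :=
  (∀ n : ℕ, ∃ C K : ℝ, 0 ≤ C ∧ 0 ≤ K ∧ C + K ≤ 1 ∧ (∀ x, |Φ n x| ≤ C) ∧
    ∀ x y, |Φ n x - Φ n y| ≤ K * dist x y) ∧
  ∀ g : M → ℝ, Continuous g → ∀ ε : ℝ, 0 < ε → ∃ n : ℕ, ∀ x, |g x - Φ n x| < ε

/-- The `n`-th empirical measure of the point `x` for the map `f`. -/
noncomputable def empMeasure (f : M → M) (n : ℕ) (x : M) : Measure M :=
  (n : ℝ≥0∞)⁻¹ • ∑ j ∈ Finset.range n, Measure.dirac (f^[j] x)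

/-- The topological support of a measure. -/
def measSupport (μ : Measure M) : Set M :=
  {x | ∀ U : Set M, IsOpen U → x ∈ U → 0 < μ U}

/-- A measure of maximal entropy of `f` on `Λ`. -/
def IsMaxEntropyMeasureOn (f : M → M) (Λ : Set M) (μ : Measure M) : Prop :=
  IsProbabilityMeasure μ ∧ MeasurePreserving f μ μ ∧ μ Λᶜ = 0 ∧
    measEntropy f μ = topEntropyOn f Λ

end MeasMetric

/-! ### Flow shadowing and expansiveness -/

section FlowShadow

variable {M : Type*} [MetricSpace M]

/-- Bowen–Walters expansiveness for flows. -/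
def FlowExpansive (φ : Flow ℝ M) : Prop :=
  ∀ ε : ℝ, 0 < ε → ∃ δ : ℝ, 0 < δ ∧ ∀ x y : M, ∀ s : ℝ → ℝ, Continuous s → s 0 = 0 →
    (∀ t : ℝ, dist (φ.toFun t x) (φ.toFun (s t) y) ≤ δ) →
    ∃ τ : ℝ, |τ| ≤ ε ∧ y = φ.toFun τ x

/-- The shadowing property for flows: every `(δ,1)`-pseudo-orbit is `ε`-traced,
up to an orientation preserving reparametrization of time, by a true orbit. -/
def FlowShadowing (φ : Flow ℝ M) : Prop :=
  ∀ ε : ℝ, 0 < ε → ∃ δ : ℝ, 0 < δ ∧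
    ∀ (x : ℤ → M) (T S : ℤ → ℝ), (∀ i : ℤ, 1 ≤ T i) →
      (∀ i : ℤ, dist (φ.toFun (T i) (x i)) (x (i + 1)) ≤ δ) →
      S 0 = 0 → (∀ i : ℤ, S (i + 1) = S i + T i) →
      ∃ (z : M) (h : ℝ → ℝ), StrictMono h ∧ Continuous h ∧ Function.Surjective h ∧
        ∀ i : ℤ, ∀ t : ℝ, S i ≤ t → t < S (i + 1) →
          dist (φ.toFun (h t) z) (φ.toFun (t - S i) (x i)) ≤ ε

end FlowShadow


/-! ### Lift of a measure to a suspension flow -/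

section Lift

variable {X : Type*} [MeasurableSpace X] {Y : Type*} [TopologicalSpace Y] [MeasurableSpace Y]

/-- The lift of a base measure `ν` to the suspension flow `φ` with roof `ρ`,
via the base embedding `e`: the normalized image of `ν ⊗ Leb` on the region
below the roof. -/
noncomputable def suspLift (φ : Flow ℝ Y) (e : X → Y) (ρ : X → ℝ) (ν : Measure X) :
    Measure Y :=
  (ENNReal.ofReal (∫ x, ρ x ∂ν))⁻¹ •
    Measure.map (fun p : X × ℝ => φ.toFun p.2 (e p.1))
      ((ν.prod (volume : Measure ℝ)).restrict {p : X × ℝ | 0 ≤ p.2 ∧ p.2 < ρ p.1})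

end Lift


end EF
open EF

namespace EFlow

/-! ### Uniform estimates for flows on compact spaces -/

section Basics

variable {M : Type*} [MetricSpace M]

/-- The point `x` is an equilibrium of the flow. -/
def IsFix (φ : Flow ℝ M) (x : M) : Prop := ∀ t : ℝ, φ t x = x

lemma IsFix.of_map {φ : Flow ℝ M} {x : M} {s : ℝ} (h : IsFix φ (φ s x)) : IsFix φ x := by
  intro t
  have h1 : x = φ (-s) (φ s x) := by rw [← φ.map_add]; simp
  have h2 := h (-s)
  rw [← h1] at h2
  have h3 := h t
  rw [← h2] at h3
  exact h3

lemma iterate_flow (φ : Flow ℝ M) (n : ℕ) (x : M) : (φ.toFun 1)^[n] x = φ (n : ℝ) x := by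
  induction n with
  | zero => simp
  | succ k ih => rw [Function.iterate_succ_apply', ih, ← φ.map_add]; push_cast; rw [add_comm]

lemma flow_unif [CompactSpace M] (φ : Flow ℝ M) (T : ℝ) {ε : ℝ} (hε : 0 < ε) :
    ∃ δ : ℝ, 0 < δ ∧ ∀ (a b : ℝ) (x y : M), |a| ≤ T → |b| ≤ T → |a - b| ≤ δ → dist x y ≤ δ →
      dist (φ a x) (φ b y) ≤ ε := by
  have hc : IsCompact (Icc (-T) T ×ˢ (univ : Set M)) := isCompact_Icc.prod isCompact_univ
  have hu := hc.uniformContinuousOn_of_continuous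
    (f := fun p : ℝ × M => φ p.1 p.2) (φ.continuous continuous_fst continuous_snd).continuousOn
  obtain ⟨δ, hδ, H⟩ := Metric.uniformContinuousOn_iff.1 hu ε hε
  refine ⟨δ / 2, by positivity, fun a b x y ha hb hab hxy => ?_⟩
  refine (H (a, x) ⟨abs_le.1 ha, mem_univ _⟩ (b, y) ⟨abs_le.1 hb, mem_univ _⟩ ?_).le
  rw [Prod.dist_eq, max_lt_iff]
  constructor
  · simp only [Real.dist_eq]; linarith
  · simp only; linarith

lemma flow_small_time [CompactSpace M] (φ : Flow ℝ M) {ε : ℝ} (hε : 0 < ε) :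
    ∃ β : ℝ, 0 < β ∧ ∀ (x : M) (a b : ℝ), |a - b| ≤ β → dist (φ a x) (φ b x) ≤ ε := by
  obtain ⟨δ, hδ, H⟩ := flow_unif φ 1 hε
  refine ⟨min δ 1, by positivity, fun x a b hu => ?_⟩
  have h := H (a - b) 0 (φ b x) (φ b x) (hu.trans (min_le_right _ _)) (by simp)
    (by simpa using hu.trans (min_le_left _ _)) (by simpa using hδ.le)
  rw [← φ.map_add, ← φ.map_add] at h
  simpa using h

/-- Equilibria of an expansive flow are uniformly isolated: the constant reparametrization
`s = 0` is allowed in the definition of expansiveness. -/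
lemma fix_isolated {φ : Flow ℝ M} (hexp : FlowExpansive φ) :
    ∃ δ : ℝ, 0 < δ ∧ ∀ p y : M, IsFix φ p → dist p y ≤ δ → y = p := by
  obtain ⟨δ, hδ, H⟩ := hexp 1 one_pos
  refine ⟨δ, hδ, fun p y hp hd => ?_⟩
  obtain ⟨τ, -, h⟩ := H p y (fun _ => 0) continuous_const rfl (fun t => by
    show dist (φ t p) (φ 0 y) ≤ δ
    rw [hp t, φ.map_zero_apply]; exact hd)
  exact h.trans (hp τ)

lemma isClosed_nonfix {φ : Flow ℝ M} (hexp : FlowExpansive φ) :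
    IsClosed {x : M | ¬ IsFix φ x} := by
  obtain ⟨δ, hδ, H⟩ := fix_isolated hexp
  rw [← isOpen_compl_iff, Metric.isOpen_iff]
  intro p hp
  have hp' : IsFix φ p := by simpa using hp
  refine ⟨δ, hδ, fun y hy => ?_⟩
  have : y = p := H p y hp' (by rw [dist_comm]; exact (Metric.mem_ball.1 hy).le)
  rw [this]; exact hp

/-- Non-equilibrium points move away from themselves, uniformly, under small nonzero times. -/
lemma flow_displacement [CompactSpace M] {φ : Flow ℝ M} (hexp : FlowExpansive φ) :
    ∃ v₀ : ℝ, 0 < v₀ ∧ ∀ θ : ℝ, 0 < θ → ∃ ε : ℝ, 0 < ε ∧ ∀ (w : M) (v : ℝ), ¬ IsFix φ w →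
      |v| ≤ v₀ → dist (φ v w) w ≤ ε → |v| < θ := by
  have hclosed := isClosed_nonfix hexp
  -- Periods of non-equilibrium points are bounded below.
  have hper : ∃ v₀ : ℝ, 0 < v₀ ∧ ∀ (w : M) (v : ℝ), ¬ IsFix φ w → |v| ≤ v₀ → φ v w = w →
      v = 0 := by
    by_contra hcon
    push Not at hcon
    choose w v hw hv hfix hne using fun n : ℕ => hcon (1 / ((n : ℝ) + 1)) (by positivity)
    obtain ⟨x, hx, g, hg, hlim⟩ := hclosed.isCompact.tendsto_subseq hw
    apply hx
    intro t
    have hmul : ∀ (n : ℕ) (k : ℤ), φ (k * v n) (w n) = w n := by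
      intro n k
      induction k using Int.induction_on with
      | zero => simp
      | succ i ih =>
        have : ((i + 1 : ℤ) : ℝ) * v n = i * v n + v n := by push_cast; ring
        rw [this, φ.map_add, hfix]; simpa using ih
      | pred i ih =>
        have h1 : φ (-v n) (w n) = w n := by
          conv_lhs => rw [← hfix n]
          rw [← φ.map_add]; simp
        have : ((-(i : ℤ) - 1 : ℤ) : ℝ) * v n = ((-(i : ℤ) : ℤ) : ℝ) * v n + (-v n) := by
          push_cast; ring
        rw [this, φ.map_add, h1, ih]
    -- `r n` is the remainder of `t` modulo the period `v n`.
    let r : ℕ → ℝ := fun n => t - (⌊t / v n⌋ : ℤ) * v n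
    have hr : ∀ n, |r n| ≤ 1 / ((n : ℝ) + 1) := by
      intro n
      have h1 : r n = Int.fract (t / v n) * v n := by
        simp only [r, Int.fract]; rw [sub_mul, div_mul_cancel₀ _ (hne n)]
      rw [h1, abs_mul, abs_of_nonneg (Int.fract_nonneg _)]
      calc _ ≤ 1 * |v n| := by gcongr; exact (Int.fract_lt_one _).le
        _ ≤ _ := by rw [one_mul]; exact hv n
    have hφ : ∀ n, φ t (w n) = φ (r n) (w n) := by
      intro n
      have : t = r n + (⌊t / v n⌋ : ℤ) * v n := by simp [r]
      conv_lhs => rw [this, φ.map_add, hmul]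
    have hr0 : Tendsto r atTop (𝓝 0) :=
      squeeze_zero_norm (fun n => by simpa using hr n) tendsto_one_div_add_atTop_nhds_zero_nat
    have hl1 : Tendsto (fun n => φ t (w (g n))) atTop (𝓝 (φ t x)) :=
      ((φ.continuous_toFun t).tendsto x).comp hlim
    have hl2 : Tendsto (fun n => φ t (w (g n))) atTop (𝓝 x) := by
      have h3 : Tendsto (fun n => φ (r (g n)) (w (g n))) atTop (𝓝 (φ 0 x)) := by
        have hcont : Continuous (fun p : ℝ × M => φ p.1 p.2) :=
          φ.continuous continuous_fst continuous_snd
        exact (hcont.tendsto (0, x)).comp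
          ((hr0.comp hg.tendsto_atTop).prodMk_nhds hlim)
      simp only [φ.map_zero_apply] at h3
      exact h3.congr (fun n => (hφ (g n)).symm)
    exact tendsto_nhds_unique hl1 hl2
  obtain ⟨v₀, hv₀, hper⟩ := hper
  refine ⟨v₀, hv₀, fun θ hθ => ?_⟩
  by_contra hcon
  push Not at hcon
  choose w v hw hv hd hθv using fun n : ℕ => hcon (1 / ((n : ℝ) + 1)) (by positivity)
  have hK : IsCompact (Icc (-v₀) v₀ ×ˢ {x : M | ¬ IsFix φ x}) :=
    isCompact_Icc.prod hclosed.isCompact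
  obtain ⟨⟨v', w'⟩, hx, g, hg, hlim⟩ := hK.tendsto_subseq (x := fun n => (v n, w n))
    (fun n => ⟨abs_le.1 (hv n), hw n⟩)
  have hlv : Tendsto (fun n => v (g n)) atTop (𝓝 v') := (continuous_fst.tendsto _).comp hlim
  have hlw : Tendsto (fun n => w (g n)) atTop (𝓝 w') := (continuous_snd.tendsto _).comp hlim
  have hcont : Continuous (fun p : ℝ × M => φ p.1 p.2) :=
    φ.continuous continuous_fst continuous_snd
  have hlφ : Tendsto (fun n => φ (v (g n)) (w (g n))) atTop (𝓝 (φ v' w')) :=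
    (hcont.tendsto (v', w')).comp hlim
  have hdist : Tendsto (fun n => dist (φ (v (g n)) (w (g n))) (w (g n))) atTop
      (𝓝 (dist (φ v' w') w')) := hlφ.dist hlw
  have hz : Tendsto (fun n => dist (φ (v (g n)) (w (g n))) (w (g n))) atTop (𝓝 0) :=
    squeeze_zero (fun _ => dist_nonneg) (fun n => hd (g n))
      (tendsto_one_div_add_atTop_nhds_zero_nat.comp hg.tendsto_atTop)
  have h0 : φ v' w' = w' := dist_eq_zero.1 (tendsto_nhds_unique hdist hz)
  have hv' : v' = 0 := hper w' v' hx.2 (abs_le.2 hx.1) h0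
  have : θ ≤ |v'| := ge_of_tendsto hlv.abs (Eventually.of_forall fun n => hθv (g n))
  rw [hv', abs_zero] at this
  linarith

/-- A finite colouring of a compact space whose colour classes have small diameter. -/
lemma exists_cells (M : Type*) [MetricSpace M] [CompactSpace M] {ε : ℝ} (hε : 0 < ε) :
    ∃ (R : ℕ) (cell : M → Fin R), ∀ x y, cell x = cell y → dist x y ≤ ε := by
  obtain ⟨t, -, hfin, hcov⟩ := finite_cover_balls_of_compact (isCompact_univ (X := M))
    (half_pos hε)
  have : ∀ x : M, ∃ c : t, dist x c < ε / 2 := by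
    intro x
    have := hcov (mem_univ x)
    simp only [mem_iUnion, Metric.mem_ball] at this
    obtain ⟨c, hc, h⟩ := this
    exact ⟨⟨c, hc⟩, h⟩
  choose c hc using this
  have := hfin.fintype
  refine ⟨Fintype.card t, fun x => Fintype.equivFin t (c x), fun x y h => ?_⟩
  have h' : c x = c y := (Fintype.equivFin t).injective h
  have h1 := hc x
  have h2 := hc y
  rw [← h'] at h2
  have := dist_triangle_right x y (c x : M)
  linarith

end Basics

end EFlow

namespace EFlow

/-! ### Expansiveness sampled at integer times -/

section DiscreteExpansive

variable {M : Type*} [MetricSpace M]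

/-- The piecewise affine interpolation of a sequence of reals indexed by the integers. -/
noncomputable def interp (σ : ℤ → ℝ) (t : ℝ) : ℝ :=
  σ ⌊t⌋ + Int.fract t * (σ (⌊t⌋ + 1) - σ ⌊t⌋)

lemma continuous_interp (σ : ℤ → ℝ) : Continuous (interp σ) := by
  have hlf : LocallyFinite (fun i : ℤ => Icc (i : ℝ) (i + 1)) := by
    intro x
    refine ⟨Metric.ball x 1, Metric.ball_mem_nhds x one_pos, ?_⟩
    refine (Set.finite_Icc (⌊x⌋ - 2) (⌊x⌋ + 2)).subset ?_
    rintro i ⟨y, ⟨hy1, hy2⟩, hy3⟩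
    rw [Metric.mem_ball, Real.dist_eq, abs_lt] at hy3
    have h1 := Int.floor_le x
    have h2 := Int.lt_floor_add_one x
    constructor
    · have : ((⌊x⌋ - 2 : ℤ) : ℝ) ≤ i := by push_cast; linarith
      exact_mod_cast this
    · have : (i : ℝ) < ((⌊x⌋ + 2 : ℤ) : ℝ) := by push_cast; linarith
      exact (by exact_mod_cast this : i < ⌊x⌋ + 2).le
  refine hlf.continuous ?_ (fun i => isClosed_Icc) (fun i => ?_)
  · refine Set.eq_univ_of_forall fun x => mem_iUnion.2 ⟨⌊x⌋, Int.floor_le x, ?_⟩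
    exact (Int.lt_floor_add_one x).le
  · have : ContinuousOn (fun t : ℝ => σ i + (t - i) * (σ (i + 1) - σ i)) (Icc (i : ℝ) (i + 1)) := by
      fun_prop
    refine this.congr fun t ht => ?_
    rcases ht.2.lt_or_eq with h | h
    · have hf : ⌊t⌋ = i := Int.floor_eq_iff.2 ⟨ht.1, h⟩
      simp only [interp, Int.fract, hf]
    · have hf : ⌊t⌋ = i + 1 := by
        rw [h]; exact_mod_cast Int.floor_intCast (i + 1)
      simp only [interp, Int.fract, hf]
      rw [h]
      push_cast
      ring

/-- Two orbits that stay close at integer times, up to a reparametrization of near-unit speed,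
coincide up to a small time shift. -/
lemma discrete_expansive [CompactSpace M] {φ : Flow ℝ M} (hexp : FlowExpansive φ) {γ : ℝ}
    (hγ : 0 < γ) :
    ∃ ε₀ η₀ : ℝ, 0 < ε₀ ∧ 0 < η₀ ∧ η₀ ≤ 1 / 2 ∧ ∀ (z z' : M) (σ : ℤ → ℝ), σ 0 = 0 →
      (∀ j, |σ (j + 1) - σ j - 1| ≤ η₀) → (∀ j : ℤ, dist (φ (j : ℝ) z) (φ (σ j) z') ≤ ε₀) →
      ∃ u : ℝ, |u| ≤ γ ∧ z = φ u z' := by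
  obtain ⟨δ, hδ, H⟩ := hexp γ hγ
  obtain ⟨ε, hε, Hu⟩ := flow_unif φ 2 hδ
  refine ⟨ε, min ε (1 / 2), hε, by positivity, min_le_right _ _, fun z z' σ h0 hstep hcl => ?_⟩
  obtain ⟨τ, hτ, h⟩ := H z z' (interp σ) (continuous_interp σ) (by simp [interp, h0]) (fun t => by
    have hr0 := Int.fract_nonneg t
    have hr1 := (Int.fract_lt_one t).le
    have hst := hstep ⌊t⌋
    have hs2 := hst.trans (min_le_right _ _)
    have hs1 := hst.trans (min_le_left _ _)
    rw [abs_le] at hs1 hs2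
    have ht : t = Int.fract t + ⌊t⌋ := (Int.fract_add_floor t).symm
    have e1 : φ t z = φ (Int.fract t) (φ (⌊t⌋ : ℝ) z) := by rw [← φ.map_add, ← ht]
    have e2 : φ (interp σ t) z' =
        φ (Int.fract t * (σ (⌊t⌋ + 1) - σ ⌊t⌋)) (φ (σ ⌊t⌋) z') := by
      rw [← φ.map_add, add_comm]; rfl
    show dist (φ t z) (φ (interp σ t) z') ≤ δ
    rw [e1, e2]
    refine Hu _ _ _ _ ?_ ?_ ?_ (hcl _)
    · rw [abs_le]; constructor <;> linarith
    · rw [abs_le]; constructor <;> nlinarith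
    · have : Int.fract t - Int.fract t * (σ (⌊t⌋ + 1) - σ ⌊t⌋) =
          - (Int.fract t * (σ (⌊t⌋ + 1) - σ ⌊t⌋ - 1)) := by ring
      rw [this, abs_neg, abs_mul, abs_of_nonneg hr0]
      calc _ ≤ 1 * ε := by
            gcongr
            rw [abs_le]; exact hs1
        _ = ε := one_mul _)
  refine ⟨-τ, by simpa using hτ, ?_⟩
  have : z' = φ τ z := h
  rw [this, ← φ.map_add]; simp

lemma abs_le_two_mul_of_steps {σ : ℤ → ℝ} {η₀ : ℝ} (hη : η₀ ≤ 1 / 2) (h0 : σ 0 = 0)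
    (hstep : ∀ j, |σ (j + 1) - σ j - 1| ≤ η₀) (j : ℤ) : |σ j| ≤ 2 * |(j : ℝ)| := by
  have key : ∀ k : ℕ, |σ k| ≤ 2 * k ∧ |σ (-k)| ≤ 2 * k := by
    intro k
    induction k with
    | zero => simp [h0]
    | succ k ih =>
      have h1 := hstep k
      have h2 := hstep (-(k + 1 : ℤ))
      have e : (-(k + 1 : ℤ)) + 1 = -k := by ring
      rw [e] at h2
      rw [abs_le] at h1 h2
      obtain ⟨i1, i2⟩ := ih
      rw [abs_le] at i1 i2
      push_cast
      constructor
      · rw [abs_le]; constructor <;> linarith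
      · rw [abs_le]; constructor <;> linarith
  rcases Int.eq_nat_or_neg j with ⟨k, rfl | rfl⟩
  · simpa using (key k).1
  · simpa using (key k).2

/-- The compactness version of `discrete_expansive`: closeness on a long window suffices to match
the centres up to a small time shift and a small error. -/
lemma window_expansive [CompactSpace M] {φ : Flow ℝ M} (hexp : FlowExpansive φ) {γ : ℝ}
    (hγ : 0 < γ) :
    ∃ ε₀ η₀ : ℝ, 0 < ε₀ ∧ 0 < η₀ ∧ η₀ ≤ 1 / 2 ∧ ∀ ε₂ : ℝ, 0 < ε₂ → ∃ K : ℕ,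
      ∀ (z z' : M) (σ : ℤ → ℝ), σ 0 = 0 → (∀ j, |σ (j + 1) - σ j - 1| ≤ η₀) →
      (∀ j : ℤ, |j| ≤ K → dist (φ (j : ℝ) z) (φ (σ j) z') ≤ ε₀) →
      ∃ u : ℝ, |u| ≤ γ ∧ dist z (φ u z') ≤ ε₂ := by
  obtain ⟨ε₀, η₀, hε₀, hη₀, hη2, H⟩ := discrete_expansive hexp hγ
  refine ⟨ε₀, η₀, hε₀, hη₀, hη2, fun ε₂ hε₂ => ?_⟩
  by_contra hcon
  push Not at hcon
  choose z z' σ h0 hstep hcl hfar using hcon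
  have hcomp : IsCompact ((univ : Set (M × M)) ×ˢ
      (Set.univ.pi fun j : ℤ => Icc (-(2 * |(j : ℝ)|)) (2 * |(j : ℝ)|))) :=
    isCompact_univ.prod (isCompact_univ_pi fun j => isCompact_Icc)
  obtain ⟨⟨⟨a, b⟩, s⟩, -, g, hg, hlim⟩ := hcomp.tendsto_subseq
    (x := fun K => ((z K, z' K), σ K))
    (fun K => ⟨mem_univ _, fun j _ => abs_le.1 (abs_le_two_mul_of_steps hη2 (h0 K) (hstep K) j)⟩)
  have hla : Tendsto (fun K => z (g K)) atTop (𝓝 a) :=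
    ((continuous_fst.comp continuous_fst).tendsto _).comp hlim
  have hlb : Tendsto (fun K => z' (g K)) atTop (𝓝 b) :=
    ((continuous_snd.comp continuous_fst).tendsto _).comp hlim
  have hls : ∀ j, Tendsto (fun K => σ (g K) j) atTop (𝓝 (s j)) := fun j =>
    (((continuous_apply j).comp continuous_snd).tendsto _).comp hlim
  have hcont : Continuous (fun p : ℝ × M => φ p.1 p.2) :=
    φ.continuous continuous_fst continuous_snd
  obtain ⟨u, hu, hzu⟩ := H a b s
    (tendsto_nhds_unique (hls 0) (by simp [h0]))
    (fun j => le_of_tendsto (((hls (j + 1)).sub (hls j)).sub_const 1).abs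
      (Eventually.of_forall fun K => hstep (g K) j))
    (fun j => by
      have l1 : Tendsto (fun K => φ (j : ℝ) (z (g K))) atTop (𝓝 (φ (j : ℝ) a)) :=
        ((φ.continuous_toFun j).tendsto a).comp hla
      have l2 : Tendsto (fun K => φ (σ (g K) j) (z' (g K))) atTop (𝓝 (φ (s j) b)) :=
        (hcont.tendsto (s j, b)).comp ((hls j).prodMk_nhds hlb)
      refine le_of_tendsto (l1.dist l2) ?_
      filter_upwards [hg.tendsto_atTop.eventually_ge_atTop j.natAbs] with K hK
      refine hcl (g K) j ?_
      rw [Int.abs_eq_natAbs]; exact_mod_cast hK)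
  have l3 : Tendsto (fun K => dist (z (g K)) (φ u (z' (g K)))) atTop (𝓝 (dist a (φ u b))) :=
    hla.dist (((φ.continuous_toFun u).tendsto b).comp hlb)
  have : ε₂ ≤ dist a (φ u b) :=
    ge_of_tendsto l3 (Eventually.of_forall fun K => (hfar (g K) u hu).le)
  rw [← hzu, dist_self] at this
  linarith

/-- If `z` follows the reparametrized orbit of `z'` except near a set of bad times, then at good
times it follows `z'` very closely with a time offset `o` that changes very slowly. -/
lemma drift [CompactSpace M] {φ : Flow ℝ M} (hexp : FlowExpansive φ) :
    ∃ ε₀ η₀ : ℝ, 0 < ε₀ ∧ 0 < η₀ ∧ η₀ ≤ 1 / 2 ∧ ∀ θ ε₂ : ℝ, 0 < θ → 0 < ε₂ → ∃ K : ℕ,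
      ∀ (z z' : M) (σ : ℤ → ℝ), ¬ IsFix φ z → (∀ j, |σ (j + 1) - σ j - 1| ≤ η₀) →
      ∃ o : ℤ → ℝ, (∀ j : ℤ, |o j - (σ j - j)| ≤ 1) ∧
        ∀ j : ℤ, (∀ i : ℤ, |i - j| ≤ (K : ℤ) → dist (φ (i : ℝ) z) (φ (σ i) z') ≤ ε₀) →
          dist (φ (j : ℝ) z) (φ (j + o j) z') ≤ ε₂ ∧
          ((∀ i : ℤ, |i - (j + 1)| ≤ (K : ℤ) → dist (φ (i : ℝ) z) (φ (σ i) z') ≤ ε₀) →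
            |o (j + 1) - o j| ≤ θ) := by
  obtain ⟨v₀, hv₀, Hv⟩ := flow_displacement hexp
  obtain ⟨δ₁, hδ₁, Hiso⟩ := fix_isolated hexp
  obtain ⟨ε₀, η₁, hε₀, hη₁, hη₁2, H⟩ := window_expansive hexp (γ := min (v₀ / 4) 1) (by positivity)
  refine ⟨ε₀, min η₁ (v₀ / 4), hε₀, by positivity, (min_le_left _ _).trans hη₁2,
    fun θ ε₂ hθ hε₂ => ?_⟩
  obtain ⟨ε₃, hε₃, Hθ⟩ := Hv θ hθ
  obtain ⟨ε₄, hε₄, Hu⟩ := flow_unif φ 1 (half_pos hε₃)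
  obtain ⟨K, HK⟩ := H (min (min ε₂ δ₁) (min ε₄ (ε₃ / 2))) (by positivity)
  refine ⟨K, fun z z' σ hz hstep => ?_⟩
  have hex : ∀ j : ℤ, ∃ o : ℝ, |o - (σ j - j)| ≤ min (v₀ / 4) 1 ∧
      ((∀ i : ℤ, |i - j| ≤ (K : ℤ) → dist (φ (i : ℝ) z) (φ (σ i) z') ≤ ε₀) →
        dist (φ (j : ℝ) z) (φ (j + o) z') ≤ min (min ε₂ δ₁) (min ε₄ (ε₃ / 2))) := by
    intro j
    by_cases hg : ∀ i : ℤ, |i - j| ≤ (K : ℤ) → dist (φ (i : ℝ) z) (φ (σ i) z') ≤ ε₀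
    · obtain ⟨u, hu, hd⟩ := HK (φ (j : ℝ) z) (φ (σ j) z') (fun i => σ (i + j) - σ j) (by simp)
        (fun i => by
          have := (hstep (i + j)).trans (min_le_left _ _)
          rw [show i + 1 + j = i + j + 1 by ring]
          rwa [sub_sub_sub_cancel_right])
        (fun i hi => by
          rw [← φ.map_add, ← φ.map_add]
          have := hg (i + j) (by simpa using hi)
          push_cast at this
          simpa using this)
      refine ⟨σ j - j + u, by simpa using hu, fun _ => ?_⟩
      rw [← φ.map_add] at hd
      convert hd using 3; ring
    · exact ⟨σ j - j, by simp; positivity, fun h => absurd h hg⟩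
  choose o ho hod using hex
  refine ⟨o, fun j => (ho j).trans (min_le_right _ _), fun j hj => ⟨?_, fun hj1 => ?_⟩⟩
  · exact (hod j hj).trans ((min_le_left _ _).trans (min_le_left _ _))
  · have d0 := hod j hj
    have d1 := hod (j + 1) hj1
    have hw : ¬ IsFix φ (φ ((j + 1 : ℤ) + o j) z') := by
      intro hf
      have hf' : IsFix φ z' := hf.of_map
      have : φ (j : ℝ) z = z' := by
        apply Hiso z' _ hf'
        have := d0.trans ((min_le_left _ _).trans (min_le_right _ _))
        rwa [hf', dist_comm] at this
      rw [← this] at hf'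
      exact hz hf'.of_map
    refine (Hθ _ (o (j + 1) - o j) hw ?_ ?_).le
    · have a1 := (ho j).trans (min_le_left _ _)
      have a2 := (ho (j + 1)).trans (min_le_left _ _)
      have a3 := (hstep j).trans (min_le_right _ _)
      push_cast at a2
      rw [abs_le] at *
      constructor <;> linarith
    · rw [← φ.map_add]
      have e : o (j + 1) - o j + (((j + 1 : ℤ) : ℝ) + o j) = ((j + 1 : ℤ) : ℝ) + o (j + 1) := by
        ring
      rw [e]
      have b1 : dist (φ ((j + 1 : ℤ) : ℝ) z) (φ (((j + 1 : ℤ) : ℝ) + o j) z') ≤ ε₃ / 2 := by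
        have := Hu 1 1 _ _ (by simp) (by simp) (by simpa using hε₄.le)
          (d0.trans ((min_le_right _ _).trans (min_le_left _ _)))
        rw [← φ.map_add, ← φ.map_add] at this
        convert this using 3 <;> push_cast <;> ring
      have b2 := d1.trans ((min_le_right _ _).trans (min_le_right _ _))
      have := dist_triangle_left (φ (((j + 1 : ℤ) : ℝ) + o (j + 1)) z')
        (φ (((j + 1 : ℤ) : ℝ) + o j) z') (φ ((j + 1 : ℤ) : ℝ) z)
      linarith

end DiscreteExpansive

end EFlow

namespace EFlow

/-! ### Counting orbits that follow a given orbit most of the time -/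

section Counting

variable {M : Type*} [MetricSpace M]

/-- The conclusion of `drift` for the constants `ε₀` (closeness) and `η₀` (deviation of the
reparametrization from unit speed). -/
def DriftConst (φ : Flow ℝ M) (ε₀ η₀ : ℝ) : Prop :=
  0 < ε₀ ∧ 0 < η₀ ∧ η₀ ≤ 1 / 2 ∧ ∀ θ ε₂ : ℝ, 0 < θ → 0 < ε₂ → ∃ K : ℕ,
      ∀ (z z' : M) (σ : ℤ → ℝ), ¬ IsFix φ z → (∀ j, |σ (j + 1) - σ j - 1| ≤ η₀) →
      ∃ o : ℤ → ℝ, (∀ j : ℤ, |o j - (σ j - j)| ≤ 1) ∧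
        ∀ j : ℤ, (∀ i : ℤ, |i - j| ≤ (K : ℤ) → dist (φ (i : ℝ) z) (φ (σ i) z') ≤ ε₀) →
          dist (φ (j : ℝ) z) (φ (j + o j) z') ≤ ε₂ ∧
          ((∀ i : ℤ, |i - (j + 1)| ≤ (K : ℤ) → dist (φ (i : ℝ) z) (φ (σ i) z') ≤ ε₀) →
            |o (j + 1) - o j| ≤ θ)

lemma exists_driftConst [CompactSpace M] {φ : Flow ℝ M} (hexp : FlowExpansive φ) :
    ∃ ε₀ η₀ : ℝ, DriftConst φ ε₀ η₀ := drift hexp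

/-- During the times `0, …, n`, the orbit of `z` stays `ε₀`-close to a reparametrization of the
orbit of `z'` with speed within `η₀` of `1`, except at no more than `b` times. -/
def Follows (φ : Flow ℝ M) (ε₀ η₀ : ℝ) (n : ℕ) (b : ℝ) (z z' : M) : Prop :=
  ∃ (σ : ℤ → ℝ) (J : Finset ℤ), σ 0 = 0 ∧ (∀ j, |σ (j + 1) - σ j - 1| ≤ η₀) ∧ (J.card : ℝ) ≤ b ∧
    ∀ j : ℤ, 0 ≤ j → j ≤ n → j ∉ J → dist (φ (j : ℝ) z) (φ (σ j) z') ≤ ε₀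

/-- Partial itineraries which are specified at no more than `b` places. -/
lemma card_option_fun_le (A : Type*) [Fintype A] [DecidableEq A] (N b : ℕ) :
    (Finset.univ.filter fun d : Fin N → Option A =>
      (Finset.univ.filter fun i => (d i).isSome).card ≤ b).card ≤
      2 ^ N * (Fintype.card A + 1) ^ b := by
  -- Weight every specified entry by `x`; the total weight of all partial itineraries is at most
  -- `2 ^ N`, and those considered here have weight at least `x ^ b`.
  set x : ℝ := 1 / (Fintype.card A + 1) with hx
  have hx0 : 0 < x := by positivity
  have hx1 : x ≤ 1 := by
    rw [hx, div_le_one (by positivity)]; linarith [(Nat.cast_nonneg (Fintype.card A) : (0:ℝ) ≤ _)]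
  let wt : Option A → ℝ := fun a => if a.isSome then x else 1
  have hwt : ∀ a, 0 ≤ wt a := fun a => by simp only [wt]; split_ifs <;> linarith
  have hsum : ∑ a, wt a ≤ 2 := by
    rw [Fintype.sum_option]
    simp only [wt, Option.isSome_none, Option.isSome_some, if_true, Finset.sum_const,
      Finset.card_univ, nsmul_eq_mul]
    have : (Fintype.card A : ℝ) * x ≤ 1 := by
      rw [hx, mul_one_div, div_le_one (by positivity)]; linarith
    norm_num
    linarith
  have htot : ∑ d : Fin N → Option A, ∏ i, wt (d i) ≤ 2 ^ N := by
    rw [← Fintype.piFinset_univ, ← Finset.prod_univ_sum]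
    simp only [Finset.prod_const, Finset.card_univ, Fintype.card_fin]
    exact pow_le_pow_left₀ (Finset.sum_nonneg fun a _ => hwt a) hsum N
  set F := Finset.univ.filter fun d : Fin N → Option A =>
      (Finset.univ.filter fun i => (d i).isSome).card ≤ b
  have hlow : ∀ d ∈ F, x ^ b ≤ ∏ i, wt (d i) := by
    intro d hd
    have hd' := (Finset.mem_filter.1 hd).2
    simp only [wt]
    rw [Finset.prod_ite]
    simp only [Finset.prod_const, one_pow, mul_one]
    exact pow_le_pow_of_le_one hx0.le hx1 hd'
  have h1 : (F.card : ℝ) * x ^ b ≤ 2 ^ N := by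
    calc (F.card : ℝ) * x ^ b = ∑ d ∈ F, x ^ b := by rw [Finset.sum_const, nsmul_eq_mul]
      _ ≤ ∑ d ∈ F, ∏ i, wt (d i) := Finset.sum_le_sum hlow
      _ ≤ ∑ d : Fin N → Option A, ∏ i, wt (d i) := Finset.sum_le_sum_of_subset_of_nonneg (Finset.subset_univ _)
          fun d _ _ => Finset.prod_nonneg fun i _ => hwt _
      _ ≤ _ := htot
  have h2 : (F.card : ℝ) ≤ 2 ^ N * (Fintype.card A + 1) ^ b := by
    have : x ^ b * (Fintype.card A + 1 : ℝ) ^ b = 1 := by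
      rw [← mul_pow, hx, one_div, inv_mul_cancel₀ (by positivity), one_pow]
    calc (F.card : ℝ) = (F.card * x ^ b) * (Fintype.card A + 1 : ℝ) ^ b := by
          rw [mul_assoc, this, mul_one]
      _ ≤ _ := by gcongr
  exact_mod_cast h2

lemma half_le_of_steps {σ : ℤ → ℝ} {η₀ : ℝ} (hη : η₀ ≤ 1 / 2) (h0 : σ 0 = 0)
    (hstep : ∀ j, |σ (j + 1) - σ j - 1| ≤ η₀) (j : ℕ) : (j : ℝ) / 2 ≤ σ j := by
  induction j with
  | zero => simp [h0]
  | succ k ih =>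
    have := (abs_le.1 (hstep k)).1
    push_cast
    linarith

lemma steps_sub {σ : ℤ → ℝ} {η₀ : ℝ} (hstep : ∀ j, |σ (j + 1) - σ j - 1| ≤ η₀) (i : ℤ) (k : ℕ) :
    |σ (i + k) - σ i - k| ≤ η₀ * k := by
  induction k with
  | zero => simp
  | succ k ih =>
    have h1 := hstep (i + k)
    push_cast
    rw [← add_assoc]
    rw [abs_le] at *
    constructor <;> linarith

/-- The block structure of a `Follows` relation: time is cut into blocks of length `m`; on all but
few blocks `z` follows `z'` with an almost constant offset. -/
lemma block_data {φ : Flow ℝ M} {ε₀ η₀ θ ε₂ : ℝ} {K m n : ℕ} (hθ : 0 ≤ θ) (hη : η₀ ≤ 1 / 2)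
    (hm : 0 < m) (hK2 : 2 ≤ K)
    {z z' : M} {σ : ℤ → ℝ} {J : Finset ℤ} {o : ℤ → ℝ} (h0 : σ 0 = 0)
    (hstep : ∀ j, |σ (j + 1) - σ j - 1| ≤ η₀)
    (hcl : ∀ j : ℤ, 0 ≤ j → j ≤ n → j ∉ J → dist (φ (j : ℝ) z) (φ (σ j) z') ≤ ε₀)
    (ho : ∀ j : ℤ, |o j - (σ j - j)| ≤ 1)
    (hod : ∀ j : ℤ, (∀ i : ℤ, |i - j| ≤ (K : ℤ) → dist (φ (i : ℝ) z) (φ (σ i) z') ≤ ε₀) →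
          dist (φ (j : ℝ) z) (φ (j + o j) z') ≤ ε₂ ∧
          ((∀ i : ℤ, |i - (j + 1)| ≤ (K : ℤ) → dist (φ (i : ℝ) z) (φ (σ i) z') ≤ ε₀) →
            |o (j + 1) - o j| ≤ θ)) :
    ∃ Bad : Finset ℕ, (Bad.card : ℝ) ≤ (J.card + 2) * (2 * (K + m) + 1) ∧ |o 0| ≤ 1 ∧
      (∀ i : ℕ, |o (i * m + m) - o (i * m)| ≤ m + 2) ∧
      (∀ i ≤ n / m, o (i * m) ≤ 1 + i * (m * θ) + Bad.card * (m + 2)) ∧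
      ∀ i ≤ n / m, i ∉ Bad → ∀ k < m,
        dist (φ ((i * m + k : ℕ) : ℝ) z) (φ ((i * m + k : ℕ) + o (i * m + k : ℕ)) z') ≤ ε₂ ∧
        |o (i * m + k : ℕ) - o (i * m)| ≤ m * θ ∧ 0 ≤ (i * m + k : ℕ) + o (i * m + k : ℕ) := by
  classical
  set Good : ℤ → Prop := fun j =>
    ∀ i : ℤ, |i - j| ≤ (K : ℤ) → dist (φ (i : ℝ) z) (φ (σ i) z') ≤ ε₀ with hGood
  set BG : ℕ → Prop := fun i =>
    (K : ℤ) ≤ i * m ∧ ∀ k : ℕ, k ≤ m → Good (i * m + k) with hBG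
  have hdr : ∀ i, BG i → ∀ k ≤ m, |o (i * m + k : ℤ) - o (i * m)| ≤ k * θ := by
    intro i hi k
    induction k with
    | zero => intro _; simp
    | succ k ih =>
      intro hk
      have a := ih (by omega)
      have g1 := hi.2 k (by omega)
      have g2 := hi.2 (k + 1) hk
      push_cast at g2 ⊢
      rw [← add_assoc] at g2 ⊢
      have c := (hod _ g1).2 g2
      have := abs_sub_le (o (i * m + k + 1 : ℤ)) (o (i * m + k : ℤ)) (o (i * m : ℤ))
      linarith
  have hbl : ∀ i : ℕ, |o (i * m + m) - o (i * m)| ≤ m + 2 := by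
    intro i
    have a1 := ho (i * m + m)
    have a2 := ho (i * m)
    have a3 := steps_sub hstep (i * m) m
    push_cast at a1 a2
    have : η₀ * m ≤ m := by
      have : (0:ℝ) ≤ m := Nat.cast_nonneg m
      nlinarith
    rw [abs_le] at *
    constructor <;> linarith
  have ho0 : |o 0| ≤ 1 := by simpa [h0] using ho 0
  refine ⟨(Finset.range (n / m + 1)).filter fun i => ¬ BG i, ?_, ho0, hbl, ?_, ?_⟩
  · have hsub : ((Finset.range (n / m + 1)).filter fun i => ¬ BG i) ⊆
        (insert 0 (insert (n : ℤ) J)).biUnion fun p =>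
          (Finset.range (n / m + 1)).filter fun i : ℕ => |(i * m : ℤ) - p| ≤ K + m := by
      intro i hi
      rw [Finset.mem_filter] at hi
      obtain ⟨hir, hib⟩ := hi
      have hin : (i * m : ℤ) ≤ n := by
        have : i * m ≤ n := (Nat.mul_le_mul_right m (Nat.lt_succ_iff.1
          (Finset.mem_range.1 hir))).trans (Nat.div_mul_le_self n m)
        exact_mod_cast this
      have hi0 : (0 : ℤ) ≤ i * m := by positivity
      rw [Finset.mem_biUnion]
      simp only [hBG, not_and_or] at hib
      rcases hib with hib | hib
      · refine ⟨0, by simp, Finset.mem_filter.2 ⟨hir, ?_⟩⟩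
        rw [abs_le]; constructor <;> linarith
      · push Not at hib
        obtain ⟨k, hk, hg⟩ := hib
        simp only [hGood] at hg
        push Not at hg
        obtain ⟨p, hp, hpd⟩ := hg
        rw [abs_le] at hp
        have hk' : (k : ℤ) ≤ m := by exact_mod_cast hk
        have hk0 : (0 : ℤ) ≤ k := by positivity
        by_cases c1 : 0 ≤ p
        · by_cases c2 : p ≤ n
          · refine ⟨p, ?_, Finset.mem_filter.2 ⟨hir, ?_⟩⟩
            · by_contra hJ
              have : p ∉ J := fun h => hJ (by simp [h])
              exact absurd (hcl p c1 c2 this) (not_le.2 hpd)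
            · rw [abs_le]; constructor <;> linarith
          · refine ⟨n, by simp, Finset.mem_filter.2 ⟨hir, ?_⟩⟩
            rw [abs_le]; constructor <;> linarith
        · refine ⟨0, by simp, Finset.mem_filter.2 ⟨hir, ?_⟩⟩
          rw [abs_le]; constructor <;> linarith
    have hcard : ∀ p : ℤ, ((Finset.range (n / m + 1)).filter fun i : ℕ =>
        |(i * m : ℤ) - p| ≤ K + m).card ≤ 2 * (K + m) + 1 := by
      intro p
      have : (Finset.Icc (p - (K + m)) (p + (K + m))).card = 2 * (K + m) + 1 := by
        rw [Int.card_Icc]; omega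
      rw [← this]
      refine Finset.card_le_card_of_injOn (fun i : ℕ => (i * m : ℤ)) ?_ ?_
      · intro i hi
        have := (Finset.mem_filter.1 hi).2
        rw [abs_le] at this
        simp only [Finset.coe_Icc, Set.mem_Icc]
        constructor <;> linarith
      · intro i _ i' _ h
        have hm' : (m : ℤ) ≠ 0 := by exact_mod_cast hm.ne'
        exact_mod_cast mul_right_cancel₀ hm' h
    have h1 := (Finset.card_le_card hsub).trans (Finset.card_biUnion_le_card_mul _ _ _
      (fun p _ => hcard p))
    have h2 : (insert 0 (insert (n : ℤ) J)).card ≤ J.card + 2 :=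
      (Finset.card_insert_le _ _).trans (by
        have := Finset.card_insert_le (n : ℤ) J
        omega)
    have h3 := h1.trans (Nat.mul_le_mul_right _ h2)
    exact_mod_cast h3
  · -- The offset grows slowly over good blocks and by a bounded amount over bad ones.
    have key : ∀ i ≤ n / m, o (i * m) ≤ 1 + i * (m * θ) +
        (((Finset.range i).filter fun i => ¬ BG i).card : ℝ) * (m + 2) := by
      intro i
      induction i with
      | zero => intro _; simpa using (abs_le.1 ho0).2
      | succ i ih =>
        intro hi
        have a := ih (by omega)
        have e : ((i + 1 : ℕ) * m : ℤ) = i * m + m := by push_cast; ring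
        rw [e, Finset.range_add_one, Finset.filter_insert]
        by_cases hg : BG i
        · rw [if_neg (not_not.2 hg)]
          have := (abs_le.1 (hdr i hg m le_rfl)).2
          push_cast
          linarith
        · rw [if_pos hg, Finset.card_insert_of_notMem (by simp)]
          have := (abs_le.1 (hbl i)).2
          have t : 0 ≤ m * θ := by positivity
          push_cast
          linarith
    intro i hi
    refine (key i hi).trans ?_
    have : ((Finset.range i).filter fun i => ¬ BG i).card ≤
        ((Finset.range (n / m + 1)).filter fun i => ¬ BG i).card :=
      Finset.card_le_card (Finset.filter_subset_filter _ (Finset.range_subset_range.2 (by omega)))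
    have : (((Finset.range i).filter fun i => ¬ BG i).card : ℝ) ≤
        ((Finset.range (n / m + 1)).filter fun i => ¬ BG i).card := by exact_mod_cast this
    gcongr
  · intro i hi hib k hk
    have hg : BG i := by
      by_contra h
      exact hib (Finset.mem_filter.2 ⟨Finset.mem_range.2 (by omega), h⟩)
    have g1 := hg.2 k hk.le
    have d := (hod _ g1).1
    have h1 := hdr i hg k hk.le
    push_cast at d ⊢
    refine ⟨d, h1.trans ?_, ?_⟩
    · gcongr
    · have a := half_le_of_steps hη h0 hstep (i * m + k)
      have b := (abs_le.1 (ho (i * m + k))).1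
      have c : (2 : ℝ) ≤ i * m := by
        have : (2 : ℤ) ≤ i * m := le_trans (by exact_mod_cast hK2) hg.1
        exact_mod_cast this
      have c' : (0 : ℝ) ≤ k := Nat.cast_nonneg k
      push_cast at a b
      linarith

end Counting

end EFlow

namespace EFlow

section Master

variable {M : Type*} [MetricSpace M]

lemma exists_linear_le_exp {a b κ : ℝ} (hb : 0 ≤ b) (hκ : 0 < κ) :
    ∃ m : ℕ, 0 < m ∧ a * m + b ≤ Real.exp (κ * m) := by
  obtain ⟨m, hm⟩ := exists_nat_ge (2 * (a + b) / κ ^ 2)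
  refine ⟨m + 1, by omega, ?_⟩
  have h1 := Real.quadratic_le_exp_of_nonneg (x := κ * (m + 1 : ℕ)) (by positivity)
  have h2 : 2 * (a + b) ≤ (m + 1) * κ ^ 2 := by
    rw [div_le_iff₀ (by positivity)] at hm
    nlinarith [sq_nonneg κ]
  push_cast at h1 ⊢
  have h3 : (0 : ℝ) ≤ m := Nat.cast_nonneg m
  have h4 : a * (m + 1) + b ≤ (a + b) * (m + 1) := by nlinarith
  have h5 : 2 * (a + b) * (m + 1) ≤ (m + 1) * κ ^ 2 * (m + 1) := by gcongr
  have h6 : 0 ≤ κ * (m + 1) := by positivity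
  nlinarith

/-- Real-time closeness from closeness at integer times. -/
lemma close_real_of_close_nat {φ : Flow ℝ M} {ε ε' : ℝ}
    (Hu : ∀ (a b : ℝ) (x y : M), |a| ≤ 1 → |b| ≤ 1 → |a - b| ≤ ε' → dist x y ≤ ε' →
      dist (φ a x) (φ b y) ≤ ε) (hε' : 0 < ε') {T : ℝ} {x y : M}
    (h : ∀ j : ℕ, (j : ℝ) ≤ T → dist (φ (j : ℝ) x) (φ (j : ℝ) y) ≤ ε') {s : ℝ} (h0 : 0 ≤ s)
    (hs : s ≤ T) : dist (φ s x) (φ s y) ≤ ε := by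
  have hfl := Nat.floor_le h0
  have hfl2 := Nat.lt_floor_add_one s
  have e : s = (s - ⌊s⌋₊) + ⌊s⌋₊ := by ring
  have := Hu (s - ⌊s⌋₊) (s - ⌊s⌋₊) _ _ (by rw [abs_le]; constructor <;> linarith)
    (by rw [abs_le]; constructor <;> linarith) (by simpa using hε'.le) (h ⌊s⌋₊ (hfl.trans hs))
  rwa [← φ.map_add, ← φ.map_add, ← e] at this

lemma floor_eq_abs_sub_lt {a b β : ℝ} (hβ : 0 < β) (h : ⌊a / β⌋ = ⌊b / β⌋) : |a - b| ≤ β := by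
  have := Int.abs_sub_lt_one_of_floor_eq_floor h
  rw [← sub_div, abs_div, abs_of_pos hβ, div_lt_one hβ] at this
  exact this.le

lemma abs_floor_sub_le {a b : ℝ} : |((⌊a⌋ - ⌊b⌋ : ℤ) : ℝ)| ≤ |a - b| + 1 := by
  have h1 := Int.floor_le a
  have h2 := Int.lt_floor_add_one a
  have h3 := Int.floor_le b
  have h4 := Int.lt_floor_add_one b
  push_cast
  have h5 := le_abs_self (a - b)
  have h6 := neg_abs_le (a - b)
  rw [abs_le]
  constructor <;> linarith

/-- **Counting lemma.** Separated points that follow, outside a small density of times,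
reparametrizations of orbits which all stay in one small Bowen ball number at most `C e^{κ n}`:
such a point is determined up to `ε` by the slowly varying time offset, recorded once per block,
and by its itinerary on the few bad blocks. -/
lemma master_count [CompactSpace M] {φ : Flow ℝ M} {ε₀ η₀ : ℝ} (hD : DriftConst φ ε₀ η₀)
    {ε κ : ℝ} (hε : 0 < ε) (hκ : 0 < κ) :
    ∃ ρ ε' : ℝ, 0 < ρ ∧ 0 < ε' ∧ ∀ C₁ : ℝ, 0 ≤ C₁ → ∃ C₂ : ℝ, 0 < C₂ ∧
      ∀ (n : ℕ) (w : M) (E : Finset M), IsDynSep (φ.toFun 1) n ε ↑E →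
      (∀ z ∈ E, ¬ IsFix φ z ∧ ∃ z', Follows φ ε₀ η₀ n (ρ * n + C₁) z z' ∧
        ∀ j : ℕ, (j : ℝ) ≤ (1 + κ) * n + C₂ → dist (φ (j : ℝ) z') (φ (j : ℝ) w) ≤ ε') →
      (E.card : ℝ) ≤ C₂ * Real.exp (κ * n) := by
  classical
  rcases isEmpty_or_nonempty M with hM | hM
  · refine ⟨1, 1, one_pos, one_pos, fun _ _ => ⟨1, one_pos, fun n w => ?_⟩⟩
    exact (hM.false w).elim
  obtain ⟨hε₀, hη₀, hη2, HD⟩ := hD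
  obtain ⟨β₀, hβ₀, Hβ⟩ := flow_small_time φ (show 0 < ε / 8 by positivity)
  obtain ⟨R, cell, hcell⟩ := exists_cells M hε
  obtain ⟨ε', hε', Hu⟩ := flow_unif φ 1 (show 0 < ε / 8 by positivity)
  set β := β₀ / 3 with hβdef
  have hβ : 0 < β := by positivity
  obtain ⟨m, hm, hmexp⟩ := exists_linear_le_exp (a := 4 / β) (b := 4 * (2 / β + 3) + 2)
    (κ := κ / 4) (by positivity) (by positivity)
  have hmR : (1 : ℝ) ≤ m := by exact_mod_cast hm
  set B : ℕ := ⌈(m + 2) / β⌉₊ + 1 with hB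
  have hB1 : ((m : ℝ) + 2) / β + 1 ≤ B := by
    rw [hB]; push_cast; linarith [Nat.le_ceil (((m : ℝ) + 2) / β)]
  have hB2 : (2 * (2 * B + 1) : ℝ) ≤ Real.exp (κ / 4 * m) := by
    refine le_trans ?_ hmexp
    have := (Nat.ceil_lt_add_one (show (0 : ℝ) ≤ ((m : ℝ) + 2) / β by positivity)).le
    rw [hB]; push_cast
    rw [add_div] at this ⊢
    rw [div_mul_eq_mul_div, mul_div_assoc]
    linarith
  set θ := min β (κ / 4) / m with hθdef
  have hθ : 0 < θ := by positivity
  have hmθ : m * θ = min β (κ / 4) := by rw [hθdef]; field_simp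
  obtain ⟨K₀, HK₀⟩ := HD θ (ε / 8) hθ (by positivity)
  set K := K₀ + 2 with hK
  set Cb : ℝ := 2 * (K + m) + 1 with hCb
  set Ac : ℝ := (Fintype.card (Fin m → Fin R) : ℝ) + 1 with hAc
  have hAc1 : 1 ≤ Ac := by rw [hAc]; linarith [(Nat.cast_nonneg (Fintype.card (Fin m → Fin R)) : (0:ℝ) ≤ _)]
  have hLA : 0 ≤ Real.log Ac := Real.log_nonneg hAc1
  have hCb0 : 0 < Cb := by positivity
  set Q := Real.log Ac + m + 3 with hQ
  have hQ0 : 0 < Q := by positivity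
  refine ⟨κ / (4 * Cb * Q), ε', by positivity, hε', fun C₁ hC₁ => ?_⟩
  set Z := (C₁ + 2) * Cb with hZ
  have hZ0 : 0 ≤ Z := by positivity
  set C₂ := Real.exp (κ / 4 * m + Real.log Ac * Z) + (3 + κ / 4 + Z * (m + 2)) with hC₂
  refine ⟨C₂, by positivity, fun n w E hsep hE => ?_⟩
  set N := n / m + 1 with hN
  set bR : ℝ := κ * n / (4 * Q) + Z with hbR
  have hbR0 : 0 ≤ bR := by positivity
  -- The follower data of each point of `E`.
  have hdata : ∀ z ∈ E, ∃ (z' : M) (o : ℤ → ℝ) (Bad : Finset ℕ), (Bad.card : ℝ) ≤ bR ∧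
      |o 0| ≤ 1 ∧ (∀ i : ℕ, |o (i * m + m) - o (i * m)| ≤ m + 2) ∧
      (∀ j : ℕ, (j : ℝ) ≤ (1 + κ) * n + C₂ → dist (φ (j : ℝ) z') (φ (j : ℝ) w) ≤ ε') ∧
      ∀ i ≤ n / m, i ∉ Bad → ∀ k < m, i * m + k ≤ n →
        dist (φ ((i * m + k : ℕ) : ℝ) z) (φ ((i * m + k : ℕ) + o (i * m + k : ℕ)) z') ≤ ε / 8 ∧
        |o (i * m + k : ℕ) - o (i * m)| ≤ β ∧ 0 ≤ (i * m + k : ℕ) + o (i * m + k : ℕ) ∧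
        (i * m + k : ℕ) + o (i * m + k : ℕ) ≤ (1 + κ) * n + C₂ := by
    intro z hz
    obtain ⟨hzf, z', ⟨σ, J, h0, hstep, hJ, hcl⟩, hclose⟩ := hE z hz
    obtain ⟨o, ho, hod⟩ := HK₀ z z' σ hzf hstep
    obtain ⟨Bad, hbad, ho0, hbl, hup, hgood⟩ := block_data (ε₂ := ε / 8) (K := K) (m := m) (n := n)
      hθ.le hη2 hm (by omega) h0 hstep hcl ho (fun j hj => by
        have hw : ∀ j : ℤ, (∀ i : ℤ, |i - j| ≤ (K : ℤ) → dist (φ (i : ℝ) z) (φ (σ i) z') ≤ ε₀) →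
            (∀ i : ℤ, |i - j| ≤ (K₀ : ℤ) → dist (φ (i : ℝ) z) (φ (σ i) z') ≤ ε₀) :=
          fun j h i hi => h i (hi.trans (by rw [hK]; push_cast; linarith))
        exact ⟨(hod j (hw j hj)).1, fun h2 => (hod j (hw j hj)).2 (hw _ h2)⟩)
    have hbad' : (Bad.card : ℝ) ≤ bR := by
      refine hbad.trans ?_
      have : (J.card + 2 : ℝ) * Cb ≤ (κ / (4 * Cb * Q) * n + C₁ + 2) * Cb := by gcongr
      refine this.trans (le_of_eq ?_)
      rw [hbR, hZ]; field_simp; ring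
    refine ⟨z', o, Bad, hbad', ho0, hbl, hclose, fun i hi hib k hk hikn => ?_⟩
    obtain ⟨g1, g2, g3⟩ := hgood i hi hib k hk
    rw [hmθ] at g2
    refine ⟨g1, g2.trans (min_le_left _ _), g3, ?_⟩
    have u1 := hup i hi
    rw [hmθ] at u1
    have u2 := (abs_le.1 g2).2
    have u3 : min β (κ / 4) ≤ κ / 4 := min_le_right _ _
    have u4 : (i : ℝ) ≤ n := by exact_mod_cast hi.trans (Nat.div_le_self n m)
    have u5 : (i : ℝ) * min β (κ / 4) ≤ n * (κ / 4) := by gcongr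
    have u6 : (Bad.card : ℝ) * (m + 2) ≤ bR * (m + 2) := by gcongr
    have u7 : bR * (m + 2) ≤ κ * n / 4 + Z * (m + 2) := by
      rw [hbR, add_mul]
      gcongr
      rw [div_mul_eq_mul_div, div_le_div_iff₀ (by positivity) (by positivity)]
      have : (m : ℝ) + 2 ≤ Q := by rw [hQ]; linarith
      have : κ * n * (m + 2) ≤ κ * n * Q := by gcongr
      linarith
    have u8 : ((i * m + k : ℕ) : ℝ) ≤ n := by exact_mod_cast hikn
    have u9 := Real.exp_pos (κ / 4 * m + Real.log Ac * Z)
    have u10 : 0 ≤ κ * n := by positivity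
    rw [hC₂]
    linarith
  choose! zt o Bad hbad ho0 hbl hclose hgood using hdata
  let q : M → ℕ → ℤ := fun z i => ⌊o z (i * m) / β⌋
  let r : M → Fin N → ℤ := fun z i => if (i : ℕ) = 0 then q z 0 else q z i - q z (i - 1)
  let d : M → Fin N → Option (Fin m → Fin R) := fun z i =>
    if (i : ℕ) ∈ Bad z then some (fun k => cell (φ ((i * m + k : ℕ) : ℝ) z)) else none
  set b := ⌊bR⌋₊ with hb
  set T : Finset ((Fin N → ℤ) × (Fin N → Option (Fin m → Fin R))) :=
    (Fintype.piFinset fun _ : Fin N => Finset.Icc (-(B : ℤ)) B) ×ˢ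
    (Finset.univ.filter fun d : Fin N → Option (Fin m → Fin R) =>
      (Finset.univ.filter fun i => (d i).isSome).card ≤ b) with hT
  have hmaps : ∀ z ∈ E, (r z, d z) ∈ T := by
    intro z hz
    rw [hT, Finset.mem_product]
    constructor
    · rw [Fintype.mem_piFinset]
      intro i
      rw [Finset.mem_Icc, ← abs_le]
      suffices h : |((r z i : ℤ) : ℝ)| ≤ B by exact_mod_cast h
      simp only [r]
      split_ifs with h
      · have h1 := abs_floor_sub_le (a := o z 0 / β) (b := 0)
        simp only [Int.floor_zero, sub_zero, abs_div, abs_of_pos hβ] at h1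
        simp only [q, Nat.cast_zero, zero_mul]
        refine h1.trans (le_trans ?_ hB1)
        gcongr
        exact (ho0 z hz).trans (by linarith)
      · have h1 := abs_floor_sub_le (a := o z (i * m) / β) (b := o z (((i - 1 : ℕ) : ℤ) * m) / β)
        rw [← sub_div, abs_div, abs_of_pos hβ] at h1
        refine h1.trans (le_trans ?_ hB1)
        have h2 := hbl z hz (i - 1)
        have e : (((i : ℕ) - 1 : ℕ) : ℤ) * m + m = (i : ℕ) * m := by
          rw [Nat.cast_sub (by omega)]; push_cast; ring
        rw [e] at h2
        gcongr
    · rw [Finset.mem_filter]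
      refine ⟨Finset.mem_univ _, ?_⟩
      have h1 : (Finset.univ.filter fun i => (d z i).isSome).card ≤ (Bad z).card := by
        refine Finset.card_le_card_of_injOn (fun i : Fin N => (i : ℕ)) ?_ ?_
        · intro i hi
          have := (Finset.mem_filter.1 hi).2
          simp only [d] at this
          by_contra hcon
          rw [if_neg (by simpa using hcon)] at this
          simp at this
        · intro i _ i' _ h
          exact Fin.ext h
      refine h1.trans ?_
      rw [hb]
      exact Nat.le_floor (hbad z hz)
  have hinj : Set.InjOn (fun z => (r z, d z)) (E : Set M) := by
    intro z hz y hy hzy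
    by_contra hne
    obtain ⟨j, hj, hfar⟩ := hsep hz hy hne
    rw [iterate_flow, iterate_flow] at hfar
    have hr : r z = r y := congrArg Prod.fst hzy
    have hd : d z = d y := congrArg Prod.snd hzy
    have hq : ∀ i ≤ n / m, q z i = q y i := by
      intro i
      induction i with
      | zero =>
        intro _
        have := congrFun hr ⟨0, by omega⟩
        simpa [r] using this
      | succ i ih =>
        intro hi
        have h1 := congrFun hr ⟨i + 1, by omega⟩
        have h2 := ih (by omega)
        simp only [r, Nat.add_eq_zero_iff, one_ne_zero, and_false, if_false,
          Nat.add_sub_cancel] at h1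
        omega
    set i := j / m with hi
    set k := j % m with hk
    have hjik : i * m + k = j := Nat.div_add_mod' j m
    have hin : i ≤ n / m := Nat.div_le_div_right hj
    have hkm : k < m := Nat.mod_lt _ hm
    have hdi := congrFun hd ⟨i, by omega⟩
    simp only [d] at hdi
    by_cases c1 : i ∈ Bad z
    · rw [if_pos c1] at hdi
      by_cases c2 : i ∈ Bad y
      · rw [if_pos c2, Option.some.injEq] at hdi
        have := hcell _ _ (congrFun hdi ⟨k, hkm⟩)
        simp only [hjik] at this
        exact absurd this (not_le.2 hfar)
      · rw [if_neg c2] at hdi; simp at hdi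
    · rw [if_neg c1] at hdi
      by_cases c2 : i ∈ Bad y
      · rw [if_pos c2] at hdi; simp at hdi
      · obtain ⟨a1, a2, a3, a4⟩ := hgood z hz i hin c1 k hkm (by omega)
        obtain ⟨b1, b2, b3, b4⟩ := hgood y hy i hin c2 k hkm (by omega)
        rw [hjik] at a1 a2 a3 a4 b1 b2 b3 b4
        have a5 := close_real_of_close_nat Hu hε' (hclose z hz) a3 a4
        have b5 := close_real_of_close_nat Hu hε' (hclose y hy) b3 b4
        have e5 := floor_eq_abs_sub_lt hβ (hq i hin)
        have e6 : dist (φ (j + o z j) w) (φ (j + o y j) w) ≤ ε / 8 := by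
          apply Hβ
          rw [abs_le] at *
          constructor <;> linarith
        have t1 := dist_triangle (φ (j : ℝ) z) (φ (j + o z j) (zt z)) (φ (j : ℝ) y)
        have t2 := dist_triangle (φ (j + o z j) (zt z)) (φ (j + o z j) w) (φ (j : ℝ) y)
        have t3 := dist_triangle (φ (j + o z j) w) (φ (j + o y j) w) (φ (j : ℝ) y)
        have t4 := dist_triangle (φ (j + o y j) w) (φ (j + o y j) (zt y)) (φ (j : ℝ) y)
        rw [dist_comm (φ (j + o y j) w) (φ (j + o y j) (zt y))] at t4
        rw [dist_comm (φ (j : ℝ) y)] at b1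
        linarith
  have hcard : E.card ≤ (2 * B + 1) ^ N * (2 ^ N * (Fintype.card (Fin m → Fin R) + 1) ^ b) := by
    refine (Finset.card_le_card_of_injOn _ (fun z hz => hmaps z hz) hinj).trans ?_
    rw [hT, Finset.card_product]
    refine Nat.mul_le_mul ?_ (card_option_fun_le _ N b)
    rw [Fintype.card_piFinset]
    simp only [Int.card_Icc, Finset.prod_const, Finset.card_univ, Fintype.card_fin]
    gcongr
    omega
  have hcardR : (E.card : ℝ) ≤ (2 * (2 * B + 1)) ^ N * Ac ^ b := by
    have : (E.card : ℝ) ≤ ((2 * B + 1) ^ N * (2 ^ N * (Fintype.card (Fin m → Fin R) + 1) ^ b) : ℕ) := by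
      exact_mod_cast hcard
    refine this.trans (le_of_eq ?_)
    push_cast
    rw [mul_pow]
    simp only [hAc, Fintype.card_pi, Fintype.card_fin, Finset.prod_const, Finset.card_univ]
    push_cast
    ring
  have p1 : (2 * (2 * B + 1) : ℝ) ^ N ≤ Real.exp (κ / 4 * n + κ / 4 * m) := by
    calc (2 * (2 * B + 1) : ℝ) ^ N ≤ Real.exp (κ / 4 * m) ^ N := by gcongr
      _ = Real.exp (N * (κ / 4 * m)) := by rw [← Real.exp_nat_mul]
      _ ≤ _ := by
        apply Real.exp_le_exp.2
        have : (N : ℝ) * m ≤ n + m := by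
          have h : N * m ≤ n + m := by
            rw [hN, add_mul, one_mul]; gcongr; exact Nat.div_mul_le_self n m
          exact_mod_cast h
        have h2 : κ / 4 * (N * m) ≤ κ / 4 * (n + m) := by gcongr
        linarith
  have p2 : Ac ^ b ≤ Real.exp (κ / 4 * n + Real.log Ac * Z) := by
    rw [← Real.exp_log (pow_pos (by linarith : (0:ℝ) < Ac) b), Real.log_pow]
    apply Real.exp_le_exp.2
    have h1 : (b : ℝ) ≤ bR := Nat.floor_le hbR0
    have h2 : (b : ℝ) * Real.log Ac ≤ bR * Real.log Ac := by gcongr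
    refine h2.trans ?_
    rw [hbR, add_mul, mul_comm Z]
    refine add_le_add ?_ le_rfl
    rw [div_mul_eq_mul_div, div_le_iff₀ (by positivity)]
    have h3 : Real.log Ac ≤ Q := by rw [hQ]; linarith
    have h4 : κ * n * Real.log Ac ≤ κ * n * Q := by gcongr
    linarith
  calc (E.card : ℝ) ≤ Real.exp (κ / 4 * n + κ / 4 * m) * Real.exp (κ / 4 * n + Real.log Ac * Z) :=
        hcardR.trans (by gcongr)
    _ = Real.exp (κ / 4 * m + Real.log Ac * Z) * Real.exp (κ / 2 * n) := by
        rw [← Real.exp_add, ← Real.exp_add]; ring_nf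
    _ ≤ C₂ * Real.exp (κ * n) := by
        gcongr
        · rw [hC₂]
          have : 0 ≤ 3 + κ / 4 + Z * (m + 2) := by positivity
          linarith
        · linarith

end Master

end EFlow

namespace EFlow

/-! ### Separated sets and topological entropy -/

section SepCount

variable {M : Type*} [MetricSpace M]

lemma isDynSep_card_le {f : M → M} {n : ℕ} {ε : ℝ} {R : ℕ} {cell : M → Fin R}
    (hcell : ∀ x y, cell x = cell y → dist x y ≤ ε) {Q : Finset M} (hQ : IsDynSep f n ε ↑Q) :
    Q.card ≤ R ^ (n + 1) := by
  have : Q.card ≤ (Finset.univ : Finset (Fin (n + 1) → Fin R)).card := by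
    refine Finset.card_le_card_of_injOn (fun x (j : Fin (n + 1)) => cell (f^[j] x))
      (fun _ _ => Finset.mem_coe.2 (Finset.mem_univ _)) ?_
    intro x hx y hy hxy
    by_contra hne
    obtain ⟨j, hj, hd⟩ := hQ hx hy hne
    exact absurd (hcell _ _ (congrFun hxy ⟨j, by omega⟩)) (not_le.2 hd)
  simpa using this

lemma isDynSep_mono {f : M → M} {n n' : ℕ} {ε ε' : ℝ} {Q : Set M} (h : IsDynSep f n ε Q)
    (hn : n ≤ n') (hε : ε' ≤ ε) : IsDynSep f n' ε' Q := by
  intro x hx y hy hne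
  obtain ⟨j, hj, hd⟩ := h hx hy hne
  exact ⟨j, hj.trans hn, hε.trans_lt hd⟩

lemma isDynSep_subset {f : M → M} {n : ℕ} {ε : ℝ} {Q Q' : Set M} (h : IsDynSep f n ε Q)
    (hs : Q' ⊆ Q) : IsDynSep f n ε Q' := Set.Pairwise.mono hs h

/-- Replacing the points of a separated set by points with nearby orbits keeps it separated. -/
lemma isDynSep_image {f : M → M} {n : ℕ} {ε δ : ℝ} {Q : Set M} (h : IsDynSep f n ε Q)
    {g : M → M} (hδ : 2 * δ < ε)
    (hg : ∀ x ∈ Q, ∀ j ≤ n, dist (f^[j] x) (f^[j] (g x)) ≤ δ) :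
    Set.InjOn g Q ∧ IsDynSep f n (ε - 2 * δ) (g '' Q) := by
  have key : ∀ x ∈ Q, ∀ y ∈ Q, x ≠ y →
      ∃ j, j ≤ n ∧ ε - 2 * δ < dist (f^[j] (g x)) (f^[j] (g y)) := by
    intro x hx y hy hne
    obtain ⟨j, hj, hd⟩ := h hx hy hne
    refine ⟨j, hj, ?_⟩
    have h1 := hg x hx j hj
    have h2 := hg y hy j hj
    have t1 := dist_triangle (f^[j] x) (f^[j] (g x)) (f^[j] y)
    have t2 := dist_triangle (f^[j] (g x)) (f^[j] (g y)) (f^[j] y)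
    rw [dist_comm (f^[j] (g y)) (f^[j] y)] at t2
    linarith
  constructor
  · intro x hx y hy hxy
    by_contra hne
    obtain ⟨j, hj, hd⟩ := key x hx y hy hne
    rw [hxy, dist_self] at hd
    linarith
  · rintro _ ⟨x, hx, rfl⟩ _ ⟨y, hy, rfl⟩ hne
    exact key x hx y hy (fun h => hne (by rw [h]))

/-- Topological entropy at most `a` means exponential growth rate at most `a` at every scale. -/
lemma topEntropyOn_le_iff {f : M → M} {K : Set M} {a : ℝ} (ha : 0 ≤ a) :
    topEntropyOn f K ≤ (a : EReal) ↔ ∀ κ : ℝ, 0 < κ → ∀ ε : ℝ, 0 < ε → ∃ C : ℝ, 0 < C ∧ ∀ n : ℕ,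
      (sepCount f K n ε : ℝ) ≤ C * Real.exp ((a + κ) * n) := by
  constructor
  · intro h κ hκ ε hε
    have h1 : Filter.atTop.limsup (fun n : ℕ => ((Real.log (sepCount f K n ε) / n : ℝ) : EReal)) ≤
        (a : EReal) := le_trans (le_iSup₂ (f := fun (ε : ℝ) (_ : 0 < ε) => Filter.atTop.limsup
          fun n : ℕ => ((Real.log (sepCount f K n ε) / n : ℝ) : EReal)) ε hε) h
    have h2 : ∀ᶠ n : ℕ in atTop, ((Real.log (sepCount f K n ε) / n : ℝ) : EReal) <
        ((a + κ : ℝ) : EReal) :=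
      eventually_lt_of_limsup_lt (h1.trans_lt (by exact_mod_cast (by linarith : a < a + κ)))
    obtain ⟨N, hN⟩ := eventually_atTop.1 h2
    refine ⟨1 + ∑ n ∈ Finset.range (N + 1), (sepCount f K n ε : ℝ), by positivity, fun n => ?_⟩
    have hexp : 1 ≤ Real.exp ((a + κ) * n) := Real.one_le_exp (by positivity)
    have hs0 : 0 ≤ ∑ n ∈ Finset.range (N + 1), (sepCount f K n ε : ℝ) := by positivity
    by_cases hn : n ≤ N
    · have : (sepCount f K n ε : ℝ) ≤ ∑ n ∈ Finset.range (N + 1), (sepCount f K n ε : ℝ) :=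
        Finset.single_le_sum (f := fun n => (sepCount f K n ε : ℝ)) (fun _ _ => by positivity)
          (Finset.mem_range.2 (by omega))
      nlinarith
    · have h3 := hN n (by omega)
      have hn0 : (0 : ℝ) < n := by exact_mod_cast (by omega : 0 < n)
      rw [EReal.coe_lt_coe_iff, div_lt_iff₀ hn0] at h3
      have h4 : (sepCount f K n ε : ℝ) ≤ Real.exp ((a + κ) * n) := by
        rcases Nat.eq_zero_or_pos (sepCount f K n ε) with h0 | h0
        · rw [h0]; push_cast; positivity
        · rw [← Real.exp_log (show (0 : ℝ) < sepCount f K n ε by exact_mod_cast h0)]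
          exact Real.exp_le_exp.2 h3.le
      nlinarith
  · intro h
    refine iSup₂_le fun ε hε => ?_
    refine (limsup_le_iff (by isBoundedDefault) (by isBoundedDefault)).2 fun y hy => ?_
    obtain ⟨b, hab, hby⟩ := EReal.lt_iff_exists_real_btwn.1 hy
    have hab' : a < b := by exact_mod_cast hab
    obtain ⟨C, hC, hCn⟩ := h ((b - a) / 2) (by linarith) ε hε
    obtain ⟨N, hN⟩ := exists_nat_gt (2 * |Real.log C| / (b - a))
    filter_upwards [eventually_gt_atTop N] with n hn
    refine lt_of_le_of_lt ?_ hby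
    rw [EReal.coe_le_coe_iff]
    have hn0 : (0 : ℝ) < n := by exact_mod_cast (by omega : 0 < n)
    rw [div_le_iff₀ hn0]
    rcases Nat.eq_zero_or_pos (sepCount f K n ε) with h0 | h0
    · rw [h0]; simp only [Nat.cast_zero, Real.log_zero]; nlinarith
    · have h1 := Real.log_le_log (by exact_mod_cast h0) (hCn n)
      rw [Real.log_mul hC.ne' (Real.exp_pos _).ne', Real.log_exp] at h1
      have h2 : 2 * |Real.log C| ≤ (b - a) * n := by
        rw [div_lt_iff₀ (by linarith)] at hN
        have : (N : ℝ) ≤ n := by exact_mod_cast hn.le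
        nlinarith
      have := le_abs_self (Real.log C)
      nlinarith

/-- A fibrewise bound on separated sets. -/
lemma card_le_of_fibers {E Q : Finset M} {B : ℝ} (P : M → M → Prop)
    (h : ∀ z ∈ E, ∃ w ∈ Q, P z w)
    (hfib : ∀ w ∈ Q, ∀ E' : Finset M, E' ⊆ E → (∀ z ∈ E', P z w) → (E'.card : ℝ) ≤ B) :
    (E.card : ℝ) ≤ Q.card * B := by
  classical
  choose! g hg hP using h
  have h1 : E.card = ∑ w ∈ Q, (E.filter fun z => g z = w).card :=
    Finset.card_eq_sum_card_fiberwise hg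
  rw [h1]
  push_cast
  calc ∑ w ∈ Q, ((E.filter fun z => g z = w).card : ℝ) ≤ ∑ w ∈ Q, B := by
        refine Finset.sum_le_sum fun w hw => hfib w hw _ (Finset.filter_subset _ _) fun z hz => ?_
        have := Finset.mem_filter.1 hz
        rw [← this.2]
        exact hP z this.1
    _ = _ := by simp

variable [CompactSpace M]

lemma bddAbove_sep (f : M → M) (K : Set M) (n : ℕ) {ε : ℝ} (hε : 0 < ε) :
    BddAbove {k : ℕ | ∃ Q : Finset M, ↑Q ⊆ K ∧ IsDynSep f n ε ↑Q ∧ Q.card = k} := by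
  obtain ⟨R, cell, hcell⟩ := exists_cells M hε
  refine ⟨R ^ (n + 1), ?_⟩
  rintro k ⟨Q, -, hQ, rfl⟩
  exact isDynSep_card_le hcell hQ

lemma card_le_sepCount {f : M → M} {K : Set M} {n : ℕ} {ε : ℝ} (hε : 0 < ε) {Q : Finset M}
    (hQK : ↑Q ⊆ K) (hQ : IsDynSep f n ε ↑Q) : Q.card ≤ sepCount f K n ε :=
  le_csSup (bddAbove_sep f K n hε) ⟨Q, hQK, hQ, rfl⟩

/-- Existence of separated sets of maximal cardinality; these are spanning. -/
lemma exists_max_sep (f : M → M) (K : Set M) (n : ℕ) {ε : ℝ} (hε : 0 < ε) :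
    ∃ Q : Finset M, ↑Q ⊆ K ∧ IsDynSep f n ε ↑Q ∧ Q.card = sepCount f K n ε ∧
      ∀ x ∈ K, ∃ y ∈ Q, ∀ j ≤ n, dist (f^[j] x) (f^[j] y) ≤ ε := by
  classical
  have hne : {k : ℕ | ∃ Q : Finset M, ↑Q ⊆ K ∧ IsDynSep f n ε ↑Q ∧ Q.card = k}.Nonempty :=
    ⟨0, ∅, by simp, by simp [IsDynSep], rfl⟩
  obtain ⟨Q, h1, h2, h3⟩ := Nat.sSup_mem hne (bddAbove_sep f K n hε)
  refine ⟨Q, h1, h2, h3, fun x hx => ?_⟩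
  by_contra hcon
  push Not at hcon
  have hxQ : x ∉ Q := fun h => by
    obtain ⟨j, _, hj⟩ := hcon x h
    rw [dist_self] at hj; linarith
  have hsep : IsDynSep f n ε ↑(insert x Q) := by
    rw [Finset.coe_insert]
    refine h2.insert fun y hy _ => ⟨?_, ?_⟩
    · exact hcon y hy
    · obtain ⟨j, hj, hd⟩ := hcon y hy
      exact ⟨j, hj, by rwa [dist_comm]⟩
  have := card_le_sepCount hε (K := K)
    (by rw [Finset.coe_insert]; exact Set.insert_subset hx h1) hsep
  rw [Finset.card_insert_of_notMem hxQ, h3] at this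
  exact absurd this (by simp [sepCount])

lemma sepCount_mono {f : M → M} {K K' : Set M} {n n' : ℕ} {ε ε' : ℝ} (hK : K ⊆ K') (hn : n ≤ n')
    (hε : 0 < ε') (hεε : ε' ≤ ε) : sepCount f K n ε ≤ sepCount f K' n' ε' := by
  obtain ⟨Q, h1, h2, h3, -⟩ := exists_max_sep f K n (hε.trans_le hεε)
  rw [← h3]
  exact card_le_sepCount hε (h1.trans hK) (isDynSep_mono h2 hn hεε)

/-- Passing to the closure does not increase the entropy. -/
lemma sepCount_closure_le {f : M → M} (hf : Continuous f) (A : Set M) (n : ℕ) {ε : ℝ}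
    (hε : 0 < ε) : sepCount f (closure A) n ε ≤ sepCount f A n (ε / 2) := by
  classical
  obtain ⟨Q, h1, h2, h3, -⟩ := exists_max_sep f (closure A) n hε
  have : ∀ x : M, ∃ y, x ∈ closure A → y ∈ A ∧ ∀ j ≤ n, dist (f^[j] x) (f^[j] y) ≤ ε / 4 := by
    intro x
    by_cases hx : x ∈ closure A
    · have hn : ∀ᶠ y in 𝓝 x, ∀ j ∈ Finset.range (n + 1), dist (f^[j] x) (f^[j] y) < ε / 4 := by
        rw [Finset.eventually_all]
        intro j _
        have := (hf.iterate j).tendsto x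
        have := Metric.tendsto_nhds.1 this (ε / 4) (by positivity)
        filter_upwards [this] with y hy
        rwa [dist_comm]
      obtain ⟨y, hy, hyA⟩ := mem_closure_iff_nhds.1 hx _ hn
      exact ⟨y, fun _ => ⟨hyA, fun j hj => (hy j (Finset.mem_range.2 (by omega))).le⟩⟩
    · exact ⟨x, fun h => absurd h hx⟩
  choose g hg using this
  obtain ⟨i1, i2⟩ := isDynSep_image h2 (g := g) (δ := ε / 4) (by linarith)
    (fun x hx j hj => (hg x (h1 hx)).2 j hj)
  rw [← h3, ← Finset.card_image_of_injOn i1]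
  refine card_le_sepCount (by positivity) ?_ ?_
  · rw [Finset.coe_image]
    rintro _ ⟨x, hx, rfl⟩
    exact (hg x (h1 hx)).1
  · rw [Finset.coe_image]
    exact isDynSep_mono i2 le_rfl (by linarith)

lemma exists_fix_card_bound {φ : Flow ℝ M} (hexp : FlowExpansive φ) :
    ∃ F : ℕ, ∀ E : Finset M, (∀ z ∈ E, IsFix φ z) → E.card ≤ F := by
  obtain ⟨δ, hδ, H⟩ := fix_isolated hexp
  refine ⟨sepCount id univ 0 δ, fun E hE => card_le_sepCount hδ (subset_univ _) ?_⟩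
  intro x hx y hy hne
  refine ⟨0, le_rfl, ?_⟩
  by_contra hcon
  exact hne (H x y (hE x hx) (by simpa using hcon)).symm

/-- Bowen balls of radius `ε₀` carry no entropy. -/
lemma bowen_ball_count {φ : Flow ℝ M} (hexp : FlowExpansive φ) {ε₀ η₀ : ℝ}
    (hD : DriftConst φ ε₀ η₀) {ε κ : ℝ} (hε : 0 < ε) (hκ : 0 < κ) :
    ∃ C : ℝ, 0 < C ∧ ∀ (n : ℕ) (w : M) (E : Finset M), IsDynSep (φ.toFun 1) n ε ↑E →
      (∀ z ∈ E, ∀ j ≤ n, dist ((φ.toFun 1)^[j] z) ((φ.toFun 1)^[j] w) ≤ ε₀) →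
      (E.card : ℝ) ≤ C * Real.exp (κ * n) := by
  classical
  obtain ⟨F, hF⟩ := exists_fix_card_bound hexp
  obtain ⟨ρ, ε', hρ, hε', H⟩ := master_count hD hε hκ
  obtain ⟨C, hC, HC⟩ := H 0 le_rfl
  refine ⟨C + F, by positivity, fun n w E hsep hE => ?_⟩
  have h1 := hF (E.filter fun z => IsFix φ z) (fun z hz => (Finset.mem_filter.1 hz).2)
  have h2 := HC n w (E.filter fun z => ¬ IsFix φ z)
    (isDynSep_subset hsep (by exact_mod_cast Finset.filter_subset _ _)) (fun z hz => by
      obtain ⟨hz1, hz2⟩ := Finset.mem_filter.1 hz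
      refine ⟨hz2, w, ⟨fun j => j, ∅, by simp, fun j => ?_, by simp; positivity,
        fun j h0 hj _ => ?_⟩, fun j _ => by rw [dist_self]; exact hε'.le⟩
      · push_cast; simp [hD.2.1.le]
      · obtain ⟨k, rfl⟩ := Int.eq_ofNat_of_zero_le h0
        have := hE z hz1 k (by exact_mod_cast hj)
        rw [iterate_flow, iterate_flow] at this
        exact_mod_cast this)
  have h3 : E.card = (E.filter fun z => IsFix φ z).card + (E.filter fun z => ¬ IsFix φ z).card :=
    (Finset.card_filter_add_card_filter_not _).symm
  have h4 : 1 ≤ Real.exp (κ * n) := Real.one_le_exp (by positivity)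
  have h5 : ((E.filter fun z => IsFix φ z).card : ℝ) ≤ F := by exact_mod_cast h1
  rw [h3]
  push_cast
  have h6 : (0 : ℝ) ≤ F := Nat.cast_nonneg F
  nlinarith

/-- For an expansive flow the entropy is detected at the single scale `ε₀`. -/
lemma topEntropyOn_le_of_scale {φ : Flow ℝ M} (hexp : FlowExpansive φ) {ε₀ η₀ : ℝ}
    (hD : DriftConst φ ε₀ η₀) {K : Set M} {a : ℝ} (ha : 0 ≤ a)
    (h : ∀ κ : ℝ, 0 < κ → ∃ C : ℝ, 0 < C ∧ ∀ n : ℕ,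
      (sepCount (φ.toFun 1) K n ε₀ : ℝ) ≤ C * Real.exp ((a + κ) * n)) :
    topEntropyOn (φ.toFun 1) K ≤ (a : EReal) := by
  rw [topEntropyOn_le_iff ha]
  intro κ hκ ε hε
  obtain ⟨C, hC, HC⟩ := h (κ / 2) (by positivity)
  obtain ⟨C', hC', HC'⟩ := bowen_ball_count hexp hD hε (half_pos hκ)
  refine ⟨C * C', by positivity, fun n => ?_⟩
  obtain ⟨E, hEK, hEs, hEc, -⟩ := exists_max_sep (φ.toFun 1) K n hε
  obtain ⟨Q, -, -, hQc, hQ⟩ := exists_max_sep (φ.toFun 1) K n hD.1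
  rw [← hEc]
  have := card_le_of_fibers (E := E) (Q := Q) (B := C' * Real.exp (κ / 2 * n))
    (fun z w => ∀ j ≤ n, dist ((φ.toFun 1)^[j] z) ((φ.toFun 1)^[j] w) ≤ ε₀)
    (fun z hz => hQ z (hEK hz))
    (fun w _ E' hE' hz => HC' n w E' (isDynSep_subset hEs (by exact_mod_cast hE')) hz)
  rw [hQc] at this
  refine this.trans ?_
  calc (sepCount (φ.toFun 1) K n ε₀ : ℝ) * (C' * Real.exp (κ / 2 * n))
      ≤ (C * Real.exp ((a + κ / 2) * n)) * (C' * Real.exp (κ / 2 * n)) := by gcongr; exact HC n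
    _ = C * C' * (Real.exp ((a + κ / 2) * n) * Real.exp (κ / 2 * n)) := by ring
    _ = _ := by rw [← Real.exp_add]; ring_nf

/-- **Comparison lemma.** If every orbit of `A'` follows an orbit of `A` outside a set of times of
density `ρ`, then the entropy of `A'` is hardly larger than that of `A`. -/
lemma entropy_compare {φ : Flow ℝ M} (hexp : FlowExpansive φ) {ε₀ η₀ : ℝ}
    (hD : DriftConst φ ε₀ η₀) {κ : ℝ} (hκ : 0 < κ) :
    ∃ ρ : ℝ, 0 < ρ ∧ ∀ (A A' : Set M) (C₁ : ℝ), 0 ≤ C₁ → (∀ z ∈ A', ¬ IsFix φ z) →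
      (∀ z ∈ A', ∀ n : ℕ, ∃ z' ∈ A, Follows φ ε₀ η₀ n (ρ * n + C₁) z z') →
      ∀ a : ℝ, 0 ≤ a → topEntropyOn (φ.toFun 1) A ≤ (a : EReal) →
        topEntropyOn (φ.toFun 1) A' ≤ (((1 + κ) * a + κ : ℝ) : EReal) := by
  obtain ⟨ρ, ε', hρ, hε', H⟩ := master_count hD hD.1 hκ
  refine ⟨ρ, hρ, fun A A' C₁ hC₁ hnf hfol a ha hA => ?_⟩
  obtain ⟨C₂, hC₂, HC⟩ := H C₁ hC₁
  refine topEntropyOn_le_of_scale hexp hD (by positivity) fun κ' hκ' => ?_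
  rw [topEntropyOn_le_iff ha] at hA
  set κ₁ := κ' / (1 + κ) with hκ₁
  have hκ₁0 : 0 < κ₁ := by positivity
  obtain ⟨C₃, hC₃, HC₃⟩ := hA κ₁ hκ₁0 ε' hε'
  refine ⟨C₃ * Real.exp ((a + κ₁) * C₂) * C₂, by positivity, fun n => ?_⟩
  set n' := ⌊(1 + κ) * n + C₂⌋₊ with hn'
  have hn'le : (n' : ℝ) ≤ (1 + κ) * n + C₂ := Nat.floor_le (by positivity)
  obtain ⟨E, hEK, hEs, hEc, -⟩ := exists_max_sep (φ.toFun 1) A' n hD.1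
  obtain ⟨Q, -, -, hQc, hQ⟩ := exists_max_sep (φ.toFun 1) A n' hε'
  rw [← hEc]
  have := card_le_of_fibers (E := E) (Q := Q) (B := C₂ * Real.exp (κ * n))
    (fun z w => ∃ z', Follows φ ε₀ η₀ n (ρ * n + C₁) z z' ∧
        ∀ j : ℕ, (j : ℝ) ≤ (1 + κ) * n + C₂ → dist (φ (j : ℝ) z') (φ (j : ℝ) w) ≤ ε')
    (fun z hz => by
      obtain ⟨z', hz', hf⟩ := hfol z (hEK hz) n
      obtain ⟨w, hw, hc⟩ := hQ z' hz'
      refine ⟨w, hw, z', hf, fun j hj => ?_⟩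
      have := hc j (Nat.le_floor hj)
      rwa [iterate_flow, iterate_flow] at this)
    (fun w _ E' hE' hz => HC n w E' (isDynSep_subset hEs (by exact_mod_cast hE'))
      fun z hzE => ⟨hnf z (hEK (hE' hzE)), hz z hzE⟩)
  rw [hQc] at this
  refine this.trans ?_
  have e1 : (sepCount (φ.toFun 1) A n' ε' : ℝ) ≤
      C₃ * Real.exp ((a + κ₁) * ((1 + κ) * n + C₂)) :=
    (HC₃ n').trans (by gcongr)
  calc (sepCount (φ.toFun 1) A n' ε' : ℝ) * (C₂ * Real.exp (κ * n))
      ≤ (C₃ * Real.exp ((a + κ₁) * ((1 + κ) * n + C₂))) * (C₂ * Real.exp (κ * n)) := by gcongr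
    _ = C₃ * C₂ * Real.exp ((a + κ₁) * ((1 + κ) * n + C₂) + κ * n) := by
        rw [Real.exp_add]; ring
    _ = C₃ * C₂ * Real.exp ((a + κ₁) * C₂ + ((1 + κ) * a + κ + κ') * n) := by
        congr 2
        rw [hκ₁]; field_simp; ring
    _ = _ := by rw [Real.exp_add]; ring

end SepCount

end EFlow

namespace EFlow

/-! ### Many loops -/

section Loops

variable {M : Type*} [MetricSpace M]

/-- If, for every colour `v`, the points of colour `v` returning to `v` at time `b` are
`ε / 2`-spanned by at most `D * exp (a * b)` points, then an `(n, ε)`-separated set whose itineraries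
only use the colours in `V` has at most `(R * D * (n + 1)) ^ #V * exp (a * n)` points. The
itineraries are cut at the last visit to the initial colour. -/
lemma card_le_of_loop_bound {f : M → M} {ε a D : ℝ} (ha : 0 ≤ a) (hD : 1 ≤ D) {R : ℕ}
    {cell : M → Fin R} {Q : Fin R → ℕ → Finset M}
    (hspan : ∀ v b x, cell x = v → cell (f^[b] x) = v →
      ∃ y ∈ Q v b, ∀ j ≤ b, dist (f^[j] x) (f^[j] y) ≤ ε / 2)
    (hcard : ∀ v b, ((Q v b).card : ℝ) ≤ D * Real.exp (a * b)) :
    ∀ (k : ℕ) (V : Finset (Fin R)), V.card = k → ∀ (n : ℕ) (E : Finset M),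
      IsDynSep f n ε ↑E → (∀ x ∈ E, ∀ j ≤ n, cell (f^[j] x) ∈ V) →
      (E.card : ℝ) ≤ (R * D * (n + 1)) ^ k * Real.exp (a * n) := by
  classical
  intro k
  induction k with
  | zero =>
    intro V hV n E _ hE
    have : E = ∅ := by
      rw [Finset.eq_empty_iff_forall_notMem]
      intro x hx
      have := hE x hx 0 (Nat.zero_le _)
      rw [Finset.card_eq_zero.1 hV] at this
      simp at this
    rw [this]; simp; positivity
  | succ k ih =>
    intro V hV n E hsep hE
    have hR : 1 ≤ (R : ℝ) := by
      have h1 : 0 < V.card := by omega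
      obtain ⟨v, _⟩ := Finset.card_pos.1 h1
      exact_mod_cast Fin.pos v
    have hP : 1 ≤ R * D * ((n : ℝ) + 1) := by
      have : (1 : ℝ) ≤ n + 1 := by have := Nat.cast_nonneg (α := ℝ) n; linarith
      nlinarith [mul_le_mul hR hD zero_le_one (by linarith)]
    -- `last x` is the time of the last visit to the initial colour
    have hlast : ∀ x : M, ∃ b, b ≤ n ∧ cell (f^[b] x) = cell x ∧
        ∀ j, b < j → j ≤ n → cell (f^[j] x) ≠ cell x := by
      intro x
      refine ⟨Nat.findGreatest (fun b => cell (f^[b] x) = cell x) n, Nat.findGreatest_le n, ?_, ?_⟩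
      · exact Nat.findGreatest_spec (P := fun b => cell (f^[b] x) = cell x) (Nat.zero_le n) rfl
      · intro j hj hjn
        exact Nat.findGreatest_is_greatest hj hjn
    choose last hl1 hl2 hl3 using hlast
    choose q hq1 hq2 using fun x => hspan (cell x) (last x) x rfl (hl2 x)
    set F : Fin R → ℕ → M → Finset M := fun v b y =>
      E.filter fun x => cell x = v ∧ last x = b ∧ q x = y with hF
    have hfib : ∀ v b y, b ≤ n → v ∈ V →
        ((F v b y).card : ℝ) ≤ (R * D * (n + 1)) ^ k * Real.exp (a * (n - b : ℝ)) := by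
      intro v b y hbn hv
      have hmem : ∀ x ∈ F v b y, x ∈ E ∧ cell x = v ∧ last x = b ∧ q x = y := fun x hx =>
        Finset.mem_filter.1 hx
      have hclose : ∀ x ∈ F v b y, ∀ x' ∈ F v b y, ∀ j ≤ b, dist (f^[j] x) (f^[j] x') ≤ ε := by
        intro x hx x' hx' j hj
        obtain ⟨_, _, h3, h4⟩ := hmem x hx
        obtain ⟨_, _, h3', h4'⟩ := hmem x' hx'
        have e1 := hq2 x j (by omega)
        have e2 := hq2 x' j (by omega)
        rw [h4] at e1
        rw [h4', dist_comm] at e2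
        linarith [dist_triangle (f^[j] x) (f^[j] y) (f^[j] x')]
      have hfar : ∀ x ∈ F v b y, ∀ x' ∈ F v b y, x ≠ x' →
          ∃ j, j + b + 1 ≤ n ∧ ε < dist (f^[j] (f^[b + 1] x)) (f^[j] (f^[b + 1] x')) := by
        intro x hx x' hx' hne
        obtain ⟨j, hj, hd⟩ := hsep (hmem x hx).1 (hmem x' hx').1 hne
        have hjb : b < j := by
          by_contra hcon
          exact absurd (hclose x hx x' hx' j (by omega)) (not_le.2 hd)
        refine ⟨j - (b + 1), by omega, ?_⟩
        rw [← Function.iterate_add_apply, ← Function.iterate_add_apply,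
          Nat.sub_add_cancel (by omega)]
        exact hd
      have hexp1 : 1 ≤ Real.exp (a * (n - b : ℝ)) := by
        apply Real.one_le_exp
        have : (b : ℝ) ≤ n := by exact_mod_cast hbn
        exact mul_nonneg ha (by linarith)
      have hPk : 1 ≤ (R * D * ((n : ℝ) + 1)) ^ k := one_le_pow₀ hP
      rcases Nat.lt_or_ge b n with hb | hb
      · have hinj : Set.InjOn f^[b + 1] ↑(F v b y) := by
          intro x hx x' hx' hxx
          by_contra hne
          obtain ⟨j, _, hd⟩ := hfar x hx x' hx' hne
          obtain ⟨j', _, hd'⟩ := hfar x hx x' hx' hne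
          obtain ⟨j0, hj0, hd0⟩ := hsep (hmem x hx).1 (hmem x' hx').1 hne
          have h0 := hclose x hx x' hx' 0 (Nat.zero_le _)
          rw [hxx, dist_self] at hd
          linarith [dist_nonneg (x := f^[0] x) (y := f^[0] x')]
        have h1 := ih (V.erase v) (by rw [Finset.card_erase_of_mem hv]; omega) (n - (b + 1))
          ((F v b y).image f^[b + 1]) (by
            rw [Finset.coe_image]
            rintro _ ⟨x, hx, rfl⟩ _ ⟨x', hx', rfl⟩ hne
            obtain ⟨j, hj, hd⟩ := hfar x hx x' hx' (fun h => hne (by rw [h]))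
            exact ⟨j, by omega, hd⟩) (by
            intro z hz j hj
            obtain ⟨x, hx, rfl⟩ := Finset.mem_image.1 hz
            obtain ⟨h1, h2, h3, h4⟩ := hmem x hx
            rw [← Function.iterate_add_apply]
            refine Finset.mem_erase.2 ⟨?_, hE x h1 _ (by omega)⟩
            rw [← h2]
            exact hl3 x _ (by omega) (by omega))
        rw [Finset.card_image_of_injOn hinj] at h1
        refine h1.trans ?_
        have e1 : ((n - (b + 1) : ℕ) : ℝ) ≤ n := by exact_mod_cast Nat.sub_le _ _
        have e2 : ((n - (b + 1) : ℕ) : ℝ) ≤ n - b := by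
          rw [Nat.cast_sub (by omega)]; push_cast; linarith
        have hD0 : 0 ≤ D := by linarith
        gcongr
      · have hle : (F v b y).card ≤ 1 := by
          rw [Finset.card_le_one]
          intro x hx x' hx'
          by_contra hne
          obtain ⟨j, hj, _⟩ := hfar x hx x' hx' hne
          omega
        have : ((F v b y).card : ℝ) ≤ 1 := by exact_mod_cast hle
        nlinarith
    have hsub : E ⊆ V.biUnion fun v => (Finset.range (n + 1)).biUnion fun b =>
        (Q v b).biUnion fun y => F v b y := by
      intro x hx
      simp only [Finset.mem_biUnion, Finset.mem_range]
      exact ⟨cell x, hE x hx 0 (Nat.zero_le _), last x, Nat.lt_succ_of_le (hl1 x), q x, hq1 x,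
        Finset.mem_filter.2 ⟨hx, rfl, rfl, rfl⟩⟩
    have hc1 : (E.card : ℝ) ≤ ∑ v ∈ V, ∑ b ∈ Finset.range (n + 1), ∑ y ∈ Q v b,
        ((F v b y).card : ℝ) := by
      have := (Finset.card_le_card hsub).trans Finset.card_biUnion_le
      refine (Nat.cast_le.2 this).trans ?_
      push_cast
      refine Finset.sum_le_sum fun v _ => ?_
      refine (Nat.cast_le.2 Finset.card_biUnion_le).trans ?_
      push_cast
      refine Finset.sum_le_sum fun b _ => ?_
      refine (Nat.cast_le.2 Finset.card_biUnion_le).trans ?_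
      push_cast
      exact le_rfl
    refine hc1.trans ?_
    calc ∑ v ∈ V, ∑ b ∈ Finset.range (n + 1), ∑ y ∈ Q v b, ((F v b y).card : ℝ)
        ≤ ∑ v ∈ V, ∑ b ∈ Finset.range (n + 1),
            D * ((R * D * (n + 1)) ^ k * Real.exp (a * n)) := by
          refine Finset.sum_le_sum fun v hv => Finset.sum_le_sum fun b hb => ?_
          have hb' : b ≤ n := Nat.lt_succ_iff.1 (Finset.mem_range.1 hb)
          calc ∑ y ∈ Q v b, ((F v b y).card : ℝ)
              ≤ ∑ y ∈ Q v b, (R * D * (n + 1)) ^ k * Real.exp (a * (n - b : ℝ)) :=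
                Finset.sum_le_sum fun y _ => hfib v b y hb' hv
            _ = (Q v b).card * ((R * D * (n + 1)) ^ k * Real.exp (a * (n - b : ℝ))) := by simp
            _ ≤ (D * Real.exp (a * b)) * ((R * D * (n + 1)) ^ k * Real.exp (a * (n - b : ℝ))) := by
                gcongr; exact hcard v b
            _ = D * ((R * D * (n + 1)) ^ k * (Real.exp (a * b) * Real.exp (a * (n - b : ℝ)))) := by
                ring
            _ = _ := by rw [← Real.exp_add]; ring_nf
      _ = V.card * ((n + 1) * (D * ((R * D * (n + 1)) ^ k * Real.exp (a * n)))) := by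
          simp
      _ ≤ R * ((n + 1) * (D * ((R * D * (n + 1)) ^ k * Real.exp (a * n)))) := by
          have hVR : (V.card : ℝ) ≤ R := by
            exact_mod_cast (Finset.card_le_univ V).trans_eq (Fintype.card_fin R)
          gcongr
      _ = _ := by ring

/-- Positive entropy produces arbitrarily long pseudo-loops in exponential number: at a scale `ε`
independent of the jump size `δ`. -/
lemma exists_loops [CompactSpace M] {f : M → M} {a : ℝ} (ha : 0 ≤ a)
    (htop : (a : EReal) < topEntropyOn f univ) :
    ∃ ε : ℝ, 0 < ε ∧ ∀ δ : ℝ, 0 < δ → ∀ L : ℕ, ∃ ℓ : ℕ, L ≤ ℓ ∧ ∃ Q : Finset M,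
      IsDynSep f ℓ ε ↑Q ∧ Real.exp (a * ℓ) ≤ Q.card ∧
      (∀ x ∈ Q, ∀ y ∈ Q, dist x y ≤ δ) ∧ ∀ x ∈ Q, ∀ y ∈ Q, dist (f^[ℓ] x) y ≤ δ := by
  classical
  have h0 := mt (topEntropyOn_le_iff (f := f) (K := univ) ha).2 (not_le.2 htop)
  push Not at h0
  obtain ⟨κ, hκ, ε, hε, hbig⟩ := h0
  refine ⟨ε / 2, by positivity, fun δ hδ L => ?_⟩
  obtain ⟨R, cell, hcell⟩ := exists_cells M hδ
  choose Q hQ1 hQ2 hQ3 hQ4 using fun (v : Fin R) (b : ℕ) =>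
    exists_max_sep f {x | cell x = v ∧ cell (f^[b] x) = v} b (half_pos hε)
  by_contra hcon
  push Not at hcon
  have hsmall : ∀ v b, L ≤ b → ((Q v b).card : ℝ) ≤ Real.exp (a * b) := by
    intro v b hb
    by_contra hlt
    obtain ⟨x, hx, y, hy, hxy⟩ := hcon b hb (Q v b) (hQ2 v b) (not_le.1 hlt).le
      (fun x hx y hy => hcell _ _ ((hQ1 v b hx).1.trans (hQ1 v b hy).1.symm))
    exact absurd (hcell _ _ ((hQ1 v b hx).2.trans (hQ1 v b hy).1.symm)) (not_le.2 hxy)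
  set D : ℝ := 1 + ∑ b ∈ Finset.range L, (sepCount f univ b (ε / 2) : ℝ) with hDdef
  have hsum0 : 0 ≤ ∑ b ∈ Finset.range L, (sepCount f univ b (ε / 2) : ℝ) := by positivity
  have hD1 : 1 ≤ D := by linarith
  have hcard : ∀ v b, ((Q v b).card : ℝ) ≤ D * Real.exp (a * b) := by
    intro v b
    have he : 1 ≤ Real.exp (a * b) := Real.one_le_exp (by positivity)
    rcases Nat.lt_or_ge b L with hb | hb
    · have h1 : ((Q v b).card : ℝ) ≤ sepCount f univ b (ε / 2) := by
        rw [hQ3]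
        exact_mod_cast sepCount_mono (subset_univ _) le_rfl (half_pos hε) le_rfl
      have h2 : (sepCount f univ b (ε / 2) : ℝ) ≤
          ∑ b ∈ Finset.range L, (sepCount f univ b (ε / 2) : ℝ) :=
        Finset.single_le_sum (f := fun b => (sepCount f univ b (ε / 2) : ℝ))
          (fun _ _ => by positivity) (Finset.mem_range.2 hb)
      nlinarith
    · have := hsmall v b hb
      nlinarith
  have hmain := card_le_of_loop_bound (f := f) (ε := ε) (a := a) (D := D) ha hD1 (cell := cell)
    (Q := Q) (fun v b x h1 h2 => hQ4 v b x ⟨h1, h2⟩) hcard R Finset.univ (by simp)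
  -- the polynomial factor is absorbed into the exponential
  obtain ⟨C, hC, hCn⟩ : ∃ C : ℝ, 0 < C ∧ ∀ n : ℕ,
      ((R : ℝ) * D * (n + 1)) ^ R ≤ C * Real.exp (κ * n) := by
    set κ' := κ / (R + 1) with hκ'
    have hκ'0 : 0 < κ' := by positivity
    refine ⟨(R * D * (1 + 1 / κ')) ^ R + 1, by positivity, fun n => ?_⟩
    have h1 : (n : ℝ) + 1 ≤ (1 + 1 / κ') * Real.exp (κ' * n) := by
      have e1 : κ' * n + 1 ≤ Real.exp (κ' * n) := Real.add_one_le_exp _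
      have e2 : 1 ≤ Real.exp (κ' * n) := Real.one_le_exp (by positivity)
      have e3 : (n : ℝ) ≤ 1 / κ' * Real.exp (κ' * n) := by
        rw [div_mul_eq_mul_div, le_div_iff₀ hκ'0]; nlinarith
      linarith
    have h2 : ((R : ℝ) * D * (n + 1)) ^ R ≤ (R * D * ((1 + 1 / κ') * Real.exp (κ' * n))) ^ R := by
      gcongr
    have h3 : Real.exp (κ' * n) ^ R ≤ Real.exp (κ * n) := by
      rw [← Real.exp_nat_mul]
      apply Real.exp_le_exp.2
      have : (R : ℝ) * κ' ≤ κ := by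
        rw [hκ', mul_div_assoc', div_le_iff₀ (by positivity)]
        nlinarith
      have hn : (0 : ℝ) ≤ n := Nat.cast_nonneg n
      nlinarith
    have h4 : (0 : ℝ) < Real.exp (κ * n) := Real.exp_pos _
    calc ((R : ℝ) * D * (n + 1)) ^ R ≤ _ := h2
      _ = (R * D * (1 + 1 / κ')) ^ R * Real.exp (κ' * n) ^ R := by rw [← mul_pow]; ring
      _ ≤ (R * D * (1 + 1 / κ')) ^ R * Real.exp (κ * n) := by gcongr
      _ ≤ _ := by nlinarith
  obtain ⟨n, hn⟩ := hbig C hC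
  obtain ⟨E, -, hE2, hE3, -⟩ := exists_max_sep f univ n hε
  have h5 := hmain n E hE2 (fun _ _ _ _ => Finset.mem_univ _)
  rw [hE3] at h5
  have h6 : ((R : ℝ) * D * (n + 1)) ^ R * Real.exp (a * n) ≤ C * Real.exp ((a + κ) * n) := by
    calc _ ≤ (C * Real.exp (κ * n)) * Real.exp (a * n) := by gcongr; exact hCn n
      _ = C * (Real.exp (κ * n) * Real.exp (a * n)) := by ring
      _ = _ := by rw [← Real.exp_add]; ring_nf
  linarith

end Loops

end EFlow

namespace EFlow

/-! ### Tracing chains of loops -/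

section Trace

variable {M : Type*} [MetricSpace M]

/-- The pseudo-orbit running through orbit segments of length `ℓ` starting at the points `s i`. -/
noncomputable def chain (φ : Flow ℝ M) (ℓ : ℝ) (s : ℤ → M) (t : ℝ) : M :=
  φ (t - ℓ * ⌊t / ℓ⌋) (s ⌊t / ℓ⌋)

/-- The orbit of `z` traces the pseudo-orbit `chain φ ℓ s` within `ε`, after the
reparametrization `h`. -/
def Traces (φ : Flow ℝ M) (ℓ : ℝ) (s : ℤ → M) (ε : ℝ) (z : M) (h : ℝ → ℝ) : Prop :=
  StrictMono h ∧ Continuous h ∧ Function.Surjective h ∧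
    ∀ t, dist (φ (h t) z) (chain φ ℓ s t) ≤ ε

lemma exists_traces {φ : Flow ℝ M} (hsh : FlowShadowing φ) {ε : ℝ} (hε : 0 < ε) :
    ∃ δ : ℝ, 0 < δ ∧ ∀ (ℓ : ℝ) (s : ℤ → M), 1 ≤ ℓ → (∀ i, dist (φ ℓ (s i)) (s (i + 1)) ≤ δ) →
      ∃ z h, Traces φ ℓ s ε z h := by
  obtain ⟨δ, hδ, H⟩ := hsh ε hε
  refine ⟨δ, hδ, fun ℓ s hℓ hs => ?_⟩
  have hℓ0 : 0 < ℓ := by linarith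
  obtain ⟨z, h, h1, h2, h3, h4⟩ := H s (fun _ => ℓ) (fun i => ℓ * i) (fun _ => hℓ) hs (by simp)
    (fun i => by push_cast; ring)
  refine ⟨z, h, h1, h2, h3, fun t => ?_⟩
  refine h4 ⌊t / ℓ⌋ t ?_ ?_
  · have := Int.floor_le (t / ℓ)
    rwa [le_div_iff₀ hℓ0, mul_comm] at this
  · have := Int.lt_floor_add_one (t / ℓ)
    rw [div_lt_iff₀ hℓ0, mul_comm] at this
    push_cast
    exact this

lemma not_isFix_chain {φ : Flow ℝ M} {ℓ : ℝ} {s : ℤ → M} (hs : ∀ i, ¬ IsFix φ (s i)) (t : ℝ) :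
    ¬ IsFix φ (chain φ ℓ s t) := fun h => hs _ (IsFix.of_map h)

lemma chain_step [CompactSpace M] (φ : Flow ℝ M) {ε : ℝ} (hε : 0 < ε) :
    ∃ δ : ℝ, 0 < δ ∧ ∀ (ℓ : ℝ) (s : ℤ → M), 1 ≤ ℓ → (∀ i, dist (φ ℓ (s i)) (s (i + 1)) ≤ δ) →
      ∀ t t' : ℝ, t ≤ t' → t' ≤ t + 1 →
        dist (chain φ ℓ s t') (φ (t' - t) (chain φ ℓ s t)) ≤ ε := by
  obtain ⟨δ, hδ, H⟩ := flow_unif φ 1 hε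
  refine ⟨δ, hδ, fun ℓ s hℓ hs t t' htt' ht' => ?_⟩
  have hℓ0 : 0 < ℓ := by linarith
  set k := ⌊t / ℓ⌋ with hk
  have hk1 : ℓ * k ≤ t := by
    have := Int.floor_le (t / ℓ)
    rwa [le_div_iff₀ hℓ0, mul_comm] at this
  have hk2 : t < ℓ * k + ℓ := by
    have := Int.lt_floor_add_one (t / ℓ)
    rw [div_lt_iff₀ hℓ0] at this
    rw [hk]; linarith
  have e1 : φ (t' - t) (chain φ ℓ s t) = φ (t' - ℓ * k) (s k) := by
    unfold chain
    rw [← φ.map_add]; congr 1; ring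
  rw [e1]
  by_cases hc : t' < ℓ * k + ℓ
  · have : ⌊t' / ℓ⌋ = k := by
      rw [Int.floor_eq_iff, le_div_iff₀ hℓ0, div_lt_iff₀ hℓ0]
      constructor <;> linarith
    unfold chain
    rw [this, dist_self]
    exact hε.le
  · have : ⌊t' / ℓ⌋ = k + 1 := by
      rw [Int.floor_eq_iff, le_div_iff₀ hℓ0, div_lt_iff₀ hℓ0]
      push_cast
      constructor <;> nlinarith
    unfold chain
    rw [this]
    have e2 : φ (t' - ℓ * k) (s k) = φ (t' - ℓ * ((k + 1 : ℤ) : ℝ)) (φ ℓ (s k)) := by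
      rw [← φ.map_add]; congr 1; push_cast; ring
    rw [e2, dist_comm]
    have e3 : |t' - ℓ * ((k + 1 : ℤ) : ℝ)| ≤ 1 := by
      push_cast
      rw [abs_le]; constructor <;> nlinarith
    exact H _ _ _ _ e3 e3 (by simpa using hδ.le) (hs k)

/-- Fixed points of an expansive flow are isolated, so none of them traces a chain of non-fixed
points. -/
lemma not_isFix_of_traces {φ : Flow ℝ M} (hexp : FlowExpansive φ) :
    ∃ ε : ℝ, 0 < ε ∧ ∀ (ℓ : ℝ) (s : ℤ → M) (z : M) (h : ℝ → ℝ) (ε' : ℝ), ε' ≤ ε →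
      (∀ i, ¬ IsFix φ (s i)) → Traces φ ℓ s ε' z h → ¬ IsFix φ z := by
  obtain ⟨δ, hδ, H⟩ := fix_isolated hexp
  refine ⟨δ, hδ, fun ℓ s z h ε' hε' hs htr hz => ?_⟩
  have h1 := htr.2.2.2 0
  rw [hz] at h1
  have h2 := H z _ hz (h1.trans hε')
  exact not_isFix_chain hs 0 (by rw [h2]; exact hz)

/-- A tracing orbit has almost unit speed along the traced chain. -/
lemma traces_speed [CompactSpace M] {φ : Flow ℝ M} (hexp : FlowExpansive φ) {η : ℝ} (hη : 0 < η) :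
    ∃ ε δ : ℝ, 0 < ε ∧ 0 < δ ∧ ∀ (ℓ : ℝ) (s : ℤ → M) (z : M) (h : ℝ → ℝ) (ε' : ℝ), ε' ≤ ε →
      1 ≤ ℓ → (∀ i, ¬ IsFix φ (s i)) → (∀ i, dist (φ ℓ (s i)) (s (i + 1)) ≤ δ) →
      Traces φ ℓ s ε' z h → ∀ t t' : ℝ, t ≤ t' → t' ≤ t + 1 → |h t' - h t - (t' - t)| ≤ η := by
  obtain ⟨εf, hεf, Hf⟩ := not_isFix_of_traces hexp
  obtain ⟨v₀, hv₀, Hd⟩ := flow_displacement hexp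
  obtain ⟨ε₁, hε₁, He⟩ := Hd (min η v₀) (by positivity)
  obtain ⟨δ, hδ, Hc⟩ := chain_step φ (show 0 < ε₁ / 3 by positivity)
  obtain ⟨ε₂, hε₂, Hu⟩ := flow_unif φ 1 (show 0 < ε₁ / 3 by positivity)
  refine ⟨min εf (min ε₂ (ε₁ / 3)), δ, by positivity, hδ, ?_⟩
  intro ℓ s z h ε' hε' hℓ hs hjump htr t t' htt' ht'
  have hz : ¬ IsFix φ z := Hf ℓ s z h ε' (hε'.trans (min_le_left _ _)) hs htr
  have hε'2 : ε' ≤ ε₂ := hε'.trans ((min_le_right _ _).trans (min_le_left _ _))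
  have hε'3 : ε' ≤ ε₁ / 3 := hε'.trans ((min_le_right _ _).trans (min_le_right _ _))
  obtain ⟨-, hcont, -, hclose⟩ := htr
  have key : ∀ r, t ≤ r → r ≤ t + 1 → |h r - h t - (r - t)| ≤ v₀ →
      |h r - h t - (r - t)| < min η v₀ := by
    intro r hr1 hr2 hv
    refine He (φ (h t + (r - t)) z) _ (fun hf => hz (IsFix.of_map hf)) hv ?_
    rw [← φ.map_add, show h r - h t - (r - t) + (h t + (r - t)) = h r by ring]
    have d1 := hclose r
    have d2 := Hc ℓ s hℓ hjump t r hr1 hr2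
    have hr : |r - t| ≤ 1 := by rw [abs_le]; constructor <;> linarith
    have d3 := Hu (r - t) (r - t) _ _ hr hr (by simpa using hε₂.le)
      ((dist_comm _ _).trans_le ((hclose t).trans hε'2))
    rw [← φ.map_add, add_comm (r - t) (h t)] at d3
    linarith [dist_triangle4 (φ (h r) z) (chain φ ℓ s r) (φ (r - t) (chain φ ℓ s t))
      (φ (h t + (r - t)) z)]
  by_contra hcon
  have hcon' : min η v₀ ≤ |h t' - h t - (t' - t)| := (min_le_left _ _).trans (not_le.1 hcon).le
  -- the drift would pass through the forbidden value `min η v₀`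
  have hiv := intermediate_value_Icc htt' (f := fun r => |h r - h t - (r - t)|)
    (by fun_prop)
  have hmem : min η v₀ ∈ Icc |h t - h t - (t - t)| |h t' - h t - (t' - t)| :=
    ⟨by simp; constructor <;> positivity, hcon'⟩
  obtain ⟨r, ⟨hr1, hr2⟩, hr⟩ := hiv hmem
  simp only at hr
  have := key r hr1 (by linarith) (hr.trans_le (min_le_right _ _))
  linarith

end Trace

end EFlow

namespace EFlow

/-! ### The thinned families -/

section Thinning

/-- The `i`-th term of the Kronecker sequence of `√2`. -/
noncomputable def kro (i : ℤ) : ℝ := Int.fract (i * √2)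

/-- `√2` is badly approximable, because `2 * k ^ 2 - m ^ 2` is a nonzero integer for `k ≠ 0`. -/
lemma kro_sep {i j : ℤ} (hij : i ≠ j) : 1 ≤ 4 * |(i - j : ℝ)| * |kro i - kro j| := by
  set k : ℤ := i - j with hk
  set m : ℤ := ⌊(i : ℝ) * √2⌋ - ⌊(j : ℝ) * √2⌋ with hm
  have hk0 : k ≠ 0 := sub_ne_zero.2 hij
  have h1 : kro i - kro j = k * √2 - m := by
    unfold kro
    rw [Int.fract, Int.fract, hk, hm]; push_cast; ring
  have h2 : |kro i - kro j| ≤ 1 := by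
    have a1 := Int.fract_nonneg ((i : ℝ) * √2)
    have a2 := Int.fract_lt_one ((i : ℝ) * √2)
    have a3 := Int.fract_nonneg ((j : ℝ) * √2)
    have a4 := Int.fract_lt_one ((j : ℝ) * √2)
    unfold kro
    rw [abs_le]; constructor <;> linarith
  have hsq : √2 * √2 = 2 := Real.mul_self_sqrt (by norm_num)
  have hs0 : 0 ≤ √2 := Real.sqrt_nonneg 2
  have hs : √2 ≤ 3 / 2 := by nlinarith
  -- the norm of `k √2 - m` is a nonzero integer
  have h3 : (2 * k ^ 2 - m ^ 2 : ℤ) ≠ 0 := by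
    intro h
    have e1 : ((k : ℝ) * √2) ^ 2 = (m : ℝ) ^ 2 := by
      have : ((2 * k ^ 2 - m ^ 2 : ℤ) : ℝ) = 0 := by rw [h]; simp
      push_cast at this
      nlinarith
    have hirr : Irrational ((k : ℝ) * √2) := irrational_sqrt_two.intCast_mul hk0
    rcases sq_eq_sq_iff_eq_or_eq_neg.1 e1 with e | e
    · exact hirr ⟨m, by rw [e]; simp⟩
    · exact hirr ⟨-m, by rw [e]; simp⟩
  have h4 : (1 : ℝ) ≤ |(k * √2 - m) * (k * √2 + m)| := by
    have e1 : ((k : ℝ) * √2 - m) * (k * √2 + m) = ((2 * k ^ 2 - m ^ 2 : ℤ) : ℝ) := by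
      push_cast; nlinarith
    rw [e1]
    exact_mod_cast Int.one_le_abs h3
  rw [abs_mul, ← h1] at h4
  have hkabs : (1 : ℝ) ≤ |(k : ℝ)| := by exact_mod_cast Int.one_le_abs hk0
  have h5 : |(k : ℝ) * √2 + m| ≤ 4 * |(k : ℝ)| := by
    have e2 : (k : ℝ) * √2 + m = 2 * (k * √2) - (kro i - kro j) := by rw [h1]; ring
    rw [e2]
    have e3 : |2 * ((k : ℝ) * √2)| ≤ 3 * |(k : ℝ)| := by
      rw [abs_mul, abs_mul, abs_of_nonneg hs0]
      norm_num
      nlinarith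
    linarith [abs_sub (2 * ((k : ℝ) * √2)) (kro i - kro j)]
  have hcast : (i - j : ℝ) = k := by rw [hk]; push_cast; ring
  rw [hcast]
  nlinarith [abs_nonneg (kro i - kro j)]

/-- A window of `N + 1` consecutive places contains few terms of the Kronecker sequence in a short
interval: any two of these terms are at distance at least `1 / (4 * N)` by `kro_sep`. -/
lemma kro_count (i₀ : ℤ) (N : ℕ) (hN : 1 ≤ N) {t t' : ℝ} (htt' : t ≤ t') (I : Finset ℤ)
    (hI : ∀ i ∈ I, i₀ ≤ i ∧ i ≤ i₀ + N ∧ t < kro i ∧ kro i ≤ t') :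
    (I.card : ℝ) ≤ 4 * N * (t' - t) + 1 := by
  have hN0 : (0 : ℝ) < N := by exact_mod_cast hN
  have h1 : I.card ≤ (Finset.Icc (0 : ℤ) ⌊4 * N * (t' - t)⌋).card := by
    refine Finset.card_le_card_of_injOn (fun i => ⌊4 * N * (kro i - t)⌋) ?_ ?_
    · intro i hi
      obtain ⟨_, _, h3, h4⟩ := hI i hi
      refine Finset.mem_coe.2 (Finset.mem_Icc.2 ⟨Int.floor_nonneg.2 ?_, Int.floor_le_floor ?_⟩)
      · have : 0 ≤ kro i - t := by linarith
        positivity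
      · gcongr
    · intro i hi j hj hij
      by_contra hne
      have h2 := kro_sep hne
      obtain ⟨a1, a2, -, -⟩ := hI i hi
      obtain ⟨b1, b2, -, -⟩ := hI j hj
      have h3 : |(i - j : ℝ)| ≤ N := by
        have : |i - j| ≤ (N : ℤ) := by rw [abs_le]; constructor <;> omega
        exact_mod_cast this
      have h4 := Int.abs_sub_lt_one_of_floor_eq_floor hij
      have h5 : 4 * N * (kro i - t) - 4 * N * (kro j - t) = 4 * N * (kro i - kro j) := by ring
      rw [h5, abs_mul, abs_of_pos (by positivity : (0 : ℝ) < 4 * N)] at h4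
      nlinarith [abs_nonneg (kro i - kro j)]
  have h2 : (0 : ℝ) ≤ 4 * N * (t' - t) := by
    have : 0 ≤ t' - t := by linarith
    positivity
  rw [Int.card_Icc] at h1
  have h3 : ((⌊4 * N * (t' - t)⌋ + 1 - 0).toNat : ℝ) ≤ 4 * N * (t' - t) + 1 := by
    have h0 : 0 ≤ ⌊4 * N * (t' - t)⌋ := Int.floor_nonneg.2 h2
    have : (((⌊4 * N * (t' - t)⌋ + 1 - 0).toNat : ℤ) : ℝ) = ⌊4 * N * (t' - t)⌋ + 1 := by
      rw [Int.toNat_of_nonneg (by omega)]; push_cast; ring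
    have h4 : ((⌊4 * N * (t' - t)⌋ + 1 - 0).toNat : ℝ) = ⌊4 * N * (t' - t)⌋ + 1 := by
      exact_mod_cast this
    rw [h4]
    linarith [Int.floor_le (4 * N * (t' - t))]
  exact (Nat.cast_le.2 h1).trans h3

/-- `h` has speed within `η` of `1` on intervals of length at most one. -/
def Speed (η : ℝ) (h : ℝ → ℝ) : Prop :=
  ∀ t t' : ℝ, t ≤ t' → t' ≤ t + 1 → |h t' - h t - (t' - t)| ≤ η

lemma Speed.two {η : ℝ} {h : ℝ → ℝ} (hs : Speed η h) {t t' : ℝ} (h1 : t ≤ t') (h2 : t' ≤ t + 2) :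
    |h t' - h t - (t' - t)| ≤ 2 * η := by
  have a1 := hs t ((t + t') / 2) (by linarith) (by linarith)
  have a2 := hs ((t + t') / 2) t' (by linarith) (by linarith)
  rw [abs_le] at *
  constructor <;> linarith [a1.1, a1.2, a2.1, a2.2]

lemma Speed.step {η : ℝ} {h : ℝ → ℝ} (hs : Speed η h) (hη : η ≤ 1 / 8) (hm : StrictMono h)
    {t t' : ℝ} (htt' : h t' = h t + 1) : t ≤ t' ∧ t' ≤ t + 2 ∧ |t' - t - 1| ≤ 2 * η := by
  have h1 : t ≤ t' := hm.le_iff_le.1 (by linarith)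
  have h2 : t' ≤ t + 2 := by
    apply hm.le_iff_le.1
    have := (abs_le.1 (hs.two (t := t) (t' := t + 2) (by linarith) le_rfl)).1
    linarith
  refine ⟨h1, h2, ?_⟩
  have := hs.two h1 h2
  rw [abs_le] at *
  constructor <;> linarith [this.1, this.2]

variable {M : Type*} [MetricSpace M]

/-- Two tracing orbits follow each other while the traced chains agree. -/
lemma follows_of_traces {φ : Flow ℝ M} {ε η ε₀ η₀ ℓ : ℝ} (hη : 4 * η ≤ η₀) (hη₀ : η₀ ≤ 1 / 2)
    (hε : 2 * ε ≤ ε₀) {s s' : ℤ → M} {z z' : M} {h h' : ℝ → ℝ}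
    (htr : Traces φ ℓ s ε z h) (hsp : Speed η h) (htr' : Traces φ ℓ s' ε z' h')
    (hsp' : Speed η h') (u : ℝ) :
    ∃ a : ℤ → ℝ, (∀ j : ℤ, h (a j) = u + j) ∧ (∀ j, |a (j + 1) - a j - 1| ≤ η₀) ∧
      ∀ (n : ℕ) (b : ℝ) (J : Finset ℤ), (J.card : ℝ) ≤ b →
        (∀ j : ℤ, 0 ≤ j → j ≤ n → j ∉ J → s ⌊a j / ℓ⌋ = s' ⌊a j / ℓ⌋) →
        Follows φ ε₀ η₀ n b (φ u z) (φ (h' (a 0)) z') := by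
  have hη8 : η ≤ 1 / 8 := by linarith
  have hη0 : 0 ≤ η := (abs_nonneg _).trans (hsp 0 0 le_rfl (by norm_num))
  choose a ha using fun j : ℤ => htr.2.2.1 (u + j)
  have hst : ∀ j, a j ≤ a (j + 1) ∧ a (j + 1) ≤ a j + 2 ∧ |a (j + 1) - a j - 1| ≤ 2 * η :=
    fun j => hsp.step hη8 htr.1 (by rw [ha, ha]; push_cast; ring)
  refine ⟨a, ha, fun j => (hst j).2.2.trans (by linarith), fun n b J hJ hag => ?_⟩
  refine ⟨fun j => h' (a j) - h' (a 0), J, by simp, fun j => ?_, hJ, fun j h0 hn hj => ?_⟩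
  · obtain ⟨h1, h2, h3⟩ := hst j
    have h4 := hsp'.two h1 h2
    rw [abs_le] at *
    constructor <;> linarith [h3.1, h3.2, h4.1, h4.2]
  · have e1 : φ (j : ℝ) (φ u z) = φ (h (a j)) z := by rw [ha, ← φ.map_add, add_comm]
    have e2 : φ (h' (a j) - h' (a 0)) (φ (h' (a 0)) z') = φ (h' (a j)) z' := by
      rw [← φ.map_add]; simp
    have e3 : chain φ ℓ s (a j) = chain φ ℓ s' (a j) := by
      unfold chain; rw [hag j h0 hn hj]
    rw [e1, e2]
    have d1 := htr.2.2.2 (a j)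
    have d2 := htr'.2.2.2 (a j)
    rw [e3] at d1
    linarith [dist_triangle_right (φ (h (a j)) z) (φ (h' (a j)) z') (chain φ ℓ s' (a j))]

/-- A finite set `Q` of starting points of pseudo-loops of length `ℓ`, all whose concatenations are
traced, with error `ε`, by orbits of almost unit speed. -/
structure LoopSystem (φ : Flow ℝ M) (ε₀ η₀ : ℝ) where
  /-- the length of the loops -/
  ℓ : ℕ
  /-- the starting points of the loops -/
  Q : Finset M
  /-- a distinguished loop -/
  x₀ : M
  /-- the tracing error -/
  ε : ℝ
  /-- the bound for the deviation from unit speed -/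
  η : ℝ
  one_le : 1 ≤ ℓ
  mem : x₀ ∈ Q
  two_ε : 2 * ε ≤ ε₀
  four_η : 4 * η ≤ η₀
  exists_tr : ∀ s : ℤ → M, (∀ i, s i ∈ Q) → ∃ z h, Traces φ ℓ s ε z h
  speed : ∀ (s : ℤ → M) z h, (∀ i, s i ∈ Q) → Traces φ ℓ s ε z h → Speed η h
  not_fix : ∀ (s : ℤ → M) z h, (∀ i, s i ∈ Q) → Traces φ ℓ s ε z h → ¬ IsFix φ z

/-- The orbits tracing concatenations of loops in which loops other than the distinguished one
are used only at places `i` with `kro i ≤ t`. -/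
def LoopSystem.orb {φ : Flow ℝ M} {ε₀ η₀ : ℝ} (S : LoopSystem φ ε₀ η₀) (t : ℝ) : Set M :=
  {y | ∃ (s : ℤ → M) (z : M) (h : ℝ → ℝ) (u : ℝ), (∀ i, s i ∈ S.Q) ∧
    (∀ i, s i ≠ S.x₀ → kro i ≤ t) ∧ Traces φ S.ℓ s S.ε z h ∧ y = φ u z}

variable {φ : Flow ℝ M} {ε₀ η₀ : ℝ} (S : LoopSystem φ ε₀ η₀)

lemma LoopSystem.not_fix_orb {t : ℝ} {y : M} (hy : y ∈ S.orb t) : ¬ IsFix φ y := by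
  obtain ⟨s, z, h, u, hs, -, htr, rfl⟩ := hy
  exact fun hf => S.not_fix s z h hs htr (IsFix.of_map hf)

lemma LoopSystem.orb_invariant {t : ℝ} {y : M} (hy : y ∈ S.orb t) (v : ℝ) : φ v y ∈ S.orb t := by
  obtain ⟨s, z, h, u, hs, hs', htr, rfl⟩ := hy
  exact ⟨s, z, h, v + u, hs, hs', htr, (φ.map_add _ _ _).symm⟩

lemma LoopSystem.orb_nonempty (t : ℝ) : (S.orb t).Nonempty := by
  obtain ⟨z, h, htr⟩ := S.exists_tr (fun _ => S.x₀) (fun _ => S.mem)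
  exact ⟨φ 0 z, _, z, h, 0, fun _ => S.mem, fun i hi => absurd rfl hi, htr, rfl⟩

/-- A sequence with steps in `[1/2, 3/2]` spends, in blocks whose index lies in `(t, t']` for
`kro`, no more than the expected number of times. -/
lemma card_visits_le {a : ℤ → ℝ} (ha : ∀ j, |a (j + 1) - a j - 1| ≤ 1 / 2) {ℓ : ℕ} (hℓ : 1 ≤ ℓ)
    {t t' : ℝ} (htt' : t ≤ t') (n : ℕ) :
    (((Finset.Icc (0 : ℤ) n).filter fun j => t < kro ⌊a j / ℓ⌋ ∧ kro ⌊a j / ℓ⌋ ≤ t').card : ℝ) ≤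
      2 * ℓ * (4 * (2 * n + 2) * (t' - t) + 1) := by
  classical
  set J := (Finset.Icc (0 : ℤ) n).filter fun j => t < kro ⌊a j / ℓ⌋ ∧ kro ⌊a j / ℓ⌋ ≤ t' with hJ
  have hℓ0 : (0 : ℝ) < ℓ := by exact_mod_cast hℓ
  have hℓ1 : (1 : ℝ) ≤ ℓ := by exact_mod_cast hℓ
  have hstep : ∀ (i : ℤ) (k : ℕ), |a (i + k) - a i - k| ≤ 1 / 2 * k := steps_sub ha
  have hlow : ∀ i j : ℤ, i ≤ j → ((j - i : ℤ) : ℝ) / 2 ≤ a j - a i ∧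
      a j - a i ≤ 3 / 2 * ((j - i : ℤ) : ℝ) := by
    intro i j hij
    obtain ⟨k, hk⟩ := Int.eq_ofNat_of_zero_le (sub_nonneg.2 hij)
    have := hstep i k
    rw [show i + (k : ℤ) = j by omega] at this
    rw [hk]
    push_cast
    rw [abs_le] at this
    constructor <;> linarith [this.1, this.2]
  have himg : ((J.image fun j => ⌊a j / ℓ⌋).card : ℝ) ≤ 4 * (2 * n + 2) * (t' - t) + 1 := by
    have := kro_count ⌊a 0 / ℓ⌋ (2 * n + 2) (by omega) htt' (J.image fun j => ⌊a j / ℓ⌋) (by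
      intro i hi
      obtain ⟨j, hj, rfl⟩ := Finset.mem_image.1 hi
      obtain ⟨hj1, hj2⟩ := Finset.mem_filter.1 hj
      obtain ⟨hj3, hj4⟩ := Finset.mem_Icc.1 hj1
      obtain ⟨b1, b2⟩ := hlow 0 j hj3
      have hjn : ((j - 0 : ℤ) : ℝ) ≤ n := by simpa using (by exact_mod_cast hj4 : (j : ℝ) ≤ n)
      have hj0 : (0 : ℝ) ≤ ((j - 0 : ℤ) : ℝ) := by simpa using (by exact_mod_cast hj3 : (0 : ℝ) ≤ j)
      refine ⟨Int.floor_le_floor (by gcongr; linarith), ?_, hj2⟩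
      have c1 : a j / ℓ ≤ a 0 / ℓ + (2 * n + 1 : ℕ) := by
        have hn0 : (0 : ℝ) ≤ n := Nat.cast_nonneg n
        rw [div_add' _ _ _ hℓ0.ne']
        gcongr
        push_cast
        nlinarith
      have c2 := Int.floor_le_floor c1
      rw [Int.floor_add_natCast] at c2
      push_cast at c2 ⊢
      linarith)
    push_cast at this
    exact this
  have hfib : J.card ≤ 2 * ℓ * (J.image fun j => ⌊a j / ℓ⌋).card := by
    refine Finset.card_le_mul_card_image J (2 * ℓ) ?_
    intro i _
    have : (J.filter fun j => ⌊a j / ℓ⌋ = i).card ≤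
        (Finset.Ico (2 * ℓ * i : ℤ) (2 * ℓ * i + 2 * ℓ)).card := by
      refine Finset.card_le_card_of_injOn (fun j => ⌊2 * a j⌋) ?_ ?_
      · intro j hj
        have hj' := (Finset.mem_filter.1 hj).2
        rw [Int.floor_eq_iff, le_div_iff₀ hℓ0, div_lt_iff₀ hℓ0] at hj'
        refine Finset.mem_coe.2 (Finset.mem_Ico.2 ⟨Int.le_floor.2 ?_, Int.floor_lt.2 ?_⟩)
        · push_cast; nlinarith [hj'.1]
        · push_cast; nlinarith [hj'.2]
      · have key : ∀ j j' : ℤ, j < j' → ⌊2 * a j⌋ ≠ ⌊2 * a j'⌋ := by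
          intro j j' hlt he
          have h1 := (hlow j j' hlt.le).1
          have h2 : (1 : ℝ) ≤ ((j' - j : ℤ) : ℝ) := by exact_mod_cast (by omega : (1 : ℤ) ≤ j' - j)
          have h3 := Int.abs_sub_lt_one_of_floor_eq_floor he
          rw [abs_lt] at h3
          linarith [h3.1]
        intro j _ j' _ he
        by_contra hne
        rcases lt_or_gt_of_ne hne with hlt | hlt
        · exact key _ _ hlt he
        · exact key _ _ hlt he.symm
    rw [Int.card_Ico] at this
    refine this.trans_eq ?_
    rw [show (2 * ℓ * i + 2 * ℓ - 2 * ℓ * i : ℤ) = ((2 * ℓ : ℕ) : ℤ) by push_cast; ring]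
    exact Int.toNat_natCast _
  calc (J.card : ℝ) ≤ ((2 * ℓ * (J.image fun j => ⌊a j / ℓ⌋).card : ℕ) : ℝ) := by
        exact_mod_cast hfib
    _ = 2 * ℓ * ((J.image fun j => ⌊a j / ℓ⌋).card : ℝ) := by push_cast; ring
    _ ≤ _ := by gcongr

/-- Enlarging `t` by at most `τ` raises the entropy of the thinned family only slightly: replacing
the newly freed loops by the distinguished one changes an orbit only a small part of the time. -/
lemma LoopSystem.entropy_step [CompactSpace M] (hexp : FlowExpansive φ) (hD : DriftConst φ ε₀ η₀)
    {κ : ℝ} (hκ : 0 < κ) : ∃ τ : ℝ, 0 < τ ∧ ∀ t t' : ℝ, t ≤ t' → t' ≤ t + τ → ∀ a : ℝ, 0 ≤ a →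
      topEntropyOn (φ.toFun 1) (S.orb t) ≤ (a : EReal) →
      topEntropyOn (φ.toFun 1) (S.orb t') ≤ (((1 + κ) * a + κ : ℝ) : EReal) := by
  classical
  obtain ⟨ρ, hρ, H⟩ := entropy_compare hexp hD hκ
  have hℓ0 : (0 : ℝ) < S.ℓ := by exact_mod_cast S.one_le
  refine ⟨min 1 (ρ / (16 * S.ℓ)), by positivity, fun t t' htt' ht' a ha hle => ?_⟩
  have hτ1 : t' - t ≤ 1 := by linarith [min_le_left 1 (ρ / (16 * S.ℓ))]
  have hτ2 : 16 * S.ℓ * (t' - t) ≤ ρ := by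
    have : t' - t ≤ ρ / (16 * S.ℓ) := by linarith [min_le_right 1 (ρ / (16 * S.ℓ))]
    rw [le_div_iff₀ (by positivity)] at this
    linarith
  refine H (S.orb t) (S.orb t') (18 * S.ℓ) (by positivity) (fun z hz => S.not_fix_orb hz) ?_ a ha hle
  rintro _ ⟨s, z, h, u, hs, hst, htr, rfl⟩ n
  set s' : ℤ → M := fun i => if kro i ≤ t then s i else S.x₀ with hs'
  have hs'Q : ∀ i, s' i ∈ S.Q := by
    intro i
    by_cases hi : kro i ≤ t
    · simp only [hs', hi, if_true]; exact hs i
    · simp only [hs', hi, if_false]; exact S.mem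
  obtain ⟨z', h', htr'⟩ := S.exists_tr s' hs'Q
  obtain ⟨b, hb1, hb2, hb3⟩ := follows_of_traces S.four_η hD.2.2.1 S.two_ε htr
    (S.speed s z h hs htr) htr' (S.speed s' z' h' hs'Q htr') u
  refine ⟨φ (h' (b 0)) z', ⟨s', z', h', _, hs'Q, fun i hi => ?_, htr', rfl⟩, ?_⟩
  · by_contra hcon
    exact hi (by simp only [hs', hcon, if_false])
  · refine hb3 n _ ((Finset.Icc (0 : ℤ) n).filter
      fun j => t < kro ⌊b j / S.ℓ⌋ ∧ kro ⌊b j / S.ℓ⌋ ≤ t') ?_ ?_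
    · refine (card_visits_le (fun j => (hb2 j).trans hD.2.2.1) S.one_le htt' n).trans ?_
      have hn0 : (0 : ℝ) ≤ n := Nat.cast_nonneg n
      nlinarith [mul_nonneg hℓ0.le hn0, mul_le_mul_of_nonneg_left hτ1 hℓ0.le]
    · intro j h0 hn hj
      by_cases hi : kro ⌊b j / S.ℓ⌋ ≤ t
      · simp only [hs', hi, if_true]
      · simp only [hs', hi, if_false]
        by_contra hne
        exact hj (Finset.mem_filter.2 ⟨Finset.mem_Icc.2 ⟨h0, hn⟩, not_le.1 hi, hst _ hne⟩)

end Thinning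

end EFlow

namespace EFlow

section Bottom

variable {M : Type*} [MetricSpace M]

lemma topEntropyOn_nonneg (f : M → M) (K : Set M) : 0 ≤ topEntropyOn f K := by
  refine le_trans ?_ (le_iSup₂ (f := fun (ε : ℝ) (_ : 0 < ε) => Filter.atTop.limsup
    fun n : ℕ => ((Real.log (sepCount f K n ε) / n : ℝ) : EReal)) 1 one_pos)
  refine le_limsup_of_frequently_le (Frequently.of_forall fun n => ?_) (by isBoundedDefault)
  rw [← EReal.coe_zero, EReal.coe_le_coe_iff]
  exact div_nonneg (Real.log_natCast_nonneg _) (Nat.cast_nonneg _)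

lemma le_of_forall_pos_le_coe {x : EReal} {c : ℝ}
    (h : ∀ κ : ℝ, 0 < κ → x ≤ ((c + κ : ℝ) : EReal)) : x ≤ (c : EReal) := by
  by_contra hcon
  obtain ⟨b, hb1, hb2⟩ := EReal.lt_iff_exists_real_btwn.1 (not_le.1 hcon)
  have hb1' : c < b := by exact_mod_cast hb1
  have := h (b - c) (by linarith)
  rw [add_sub_cancel] at this
  exact absurd this (not_le.2 hb2)

variable [CompactSpace M] {φ : Flow ℝ M} {ε₀ η₀ : ℝ} (S : LoopSystem φ ε₀ η₀)

lemma topEntropyOn_mono {f : M → M} {K K' : Set M} (h : K ⊆ K') :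
    topEntropyOn f K ≤ topEntropyOn f K' := by
  refine iSup₂_mono fun ε hε => limsup_le_limsup (Eventually.of_forall fun n => ?_)
    (by isBoundedDefault) (by isBoundedDefault)
  rw [EReal.coe_le_coe_iff]
  refine div_le_div_of_nonneg_right ?_ (Nat.cast_nonneg _)
  rcases Nat.eq_zero_or_pos (sepCount f K n ε) with h0 | h0
  · rw [h0, Nat.cast_zero, Real.log_zero]; exact Real.log_natCast_nonneg _
  · exact Real.log_le_log (by exact_mod_cast h0)
      (by exact_mod_cast sepCount_mono h le_rfl hε le_rfl)

lemma topEntropyOn_closure_le {f : M → M} (hf : Continuous f) {A : Set M} {a : ℝ} (ha : 0 ≤ a)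
    (h : topEntropyOn f A ≤ (a : EReal)) : topEntropyOn f (closure A) ≤ (a : EReal) := by
  rw [topEntropyOn_le_iff ha] at h ⊢
  intro κ hκ ε hε
  obtain ⟨C, hC, H⟩ := h κ hκ (ε / 2) (half_pos hε)
  exact ⟨C, hC, fun n => (Nat.cast_le.2 (sepCount_closure_le hf A n hε)).trans (H n)⟩

lemma topEntropyOn_arc (φ : Flow ℝ M) (w : M) (p q : ℝ) :
    topEntropyOn (φ.toFun 1) {y | ∃ v ∈ Icc p q, y = φ v w} ≤ ((0 : ℝ) : EReal) := by
  rw [topEntropyOn_le_iff le_rfl]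
  intro κ hκ ε hε
  obtain ⟨β, hβ, Hβ⟩ := flow_small_time φ hε
  refine ⟨(Finset.Icc ⌊p / β⌋ ⌊q / β⌋).card + 1, by positivity, fun n => ?_⟩
  obtain ⟨E, hE1, hE2, hE3, -⟩ :=
    exists_max_sep (φ.toFun 1) {y | ∃ v ∈ Icc p q, y = φ v w} n hε
  have h1 : ∀ y ∈ E, ∃ v ∈ Icc p q, y = φ v w := fun y hy => hE1 hy
  choose! v hv hy using h1
  have h2 : E.card ≤ (Finset.Icc ⌊p / β⌋ ⌊q / β⌋).card := by
    refine Finset.card_le_card_of_injOn (fun y => ⌊v y / β⌋) ?_ ?_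
    · intro y hyE
      refine Finset.mem_coe.2 (Finset.mem_Icc.2 ⟨Int.floor_le_floor ?_, Int.floor_le_floor ?_⟩)
      · exact div_le_div_of_nonneg_right (hv y hyE).1 hβ.le
      · exact div_le_div_of_nonneg_right (hv y hyE).2 hβ.le
    · intro y hyE y' hyE' hfl
      by_contra hne
      obtain ⟨j, -, hd⟩ := hE2 hyE hyE' hne
      rw [iterate_flow, iterate_flow, hy y hyE, hy y' hyE', ← φ.map_add, ← φ.map_add] at hd
      have h3 := floor_eq_abs_sub_lt hβ hfl
      have := Hβ w (j + v y) (j + v y') (by rwa [add_sub_add_left_eq_sub])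
      linarith
  rw [← hE3]
  have h3 : (1 : ℝ) ≤ Real.exp ((0 + κ) * n) := Real.one_le_exp (by positivity)
  have h4 : (E.card : ℝ) ≤ (Finset.Icc ⌊p / β⌋ ⌊q / β⌋).card := by exact_mod_cast h2
  have h5 : (0 : ℝ) ≤ (Finset.Icc ⌊p / β⌋ ⌊q / β⌋).card := Nat.cast_nonneg _
  nlinarith

/-- When only the distinguished loop is used, the entropy is zero. -/
lemma LoopSystem.entropy_bot (hexp : FlowExpansive φ) (hD : DriftConst φ ε₀ η₀) :
    topEntropyOn (φ.toFun 1) (S.orb (-1)) ≤ ((0 : ℝ) : EReal) := by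
  refine le_of_forall_pos_le_coe fun κ hκ => ?_
  obtain ⟨ρ, hρ, H⟩ := entropy_compare hexp hD hκ
  have hℓ0 : (0 : ℝ) < S.ℓ := by exact_mod_cast S.one_le
  obtain ⟨z₀, h₀, htr₀⟩ := S.exists_tr (fun _ => S.x₀) (fun _ => S.mem)
  have := H {y | ∃ v ∈ Icc (h₀ 0) (h₀ S.ℓ), y = φ v z₀} (S.orb (-1)) 0 le_rfl
    (fun z hz => S.not_fix_orb hz) ?_ 0 le_rfl (topEntropyOn_arc φ z₀ _ _)
  · rwa [mul_zero] at this
  rintro _ ⟨s, z, h, u, hs, hst, htr, rfl⟩ n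
  have hs0 : s = fun _ => S.x₀ := by
    funext i
    by_contra hne
    have h1 := hst i hne
    have h2 : 0 ≤ kro i := Int.fract_nonneg _
    linarith
  subst hs0
  obtain ⟨r, hr⟩ := htr.2.2.1 u
  -- the constant chain is periodic, so the tracing time may be moved into `[0, ℓ)`
  have htr' : Traces φ S.ℓ (fun _ => S.x₀) S.ε z (fun t => h (t + S.ℓ * ⌊r / S.ℓ⌋)) := by
    refine ⟨fun x y hxy => htr.1 (by linarith), htr.2.1.comp (by fun_prop), fun y => ?_, fun t => ?_⟩
    · obtain ⟨x, hx⟩ := htr.2.2.1 y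
      exact ⟨x - S.ℓ * ⌊r / S.ℓ⌋, by simpa using hx⟩
    · have h1 := htr.2.2.2 (t + S.ℓ * ⌊r / S.ℓ⌋)
      have h2 : chain φ S.ℓ (fun _ => S.x₀) (t + S.ℓ * ⌊r / S.ℓ⌋) =
          chain φ S.ℓ (fun _ => S.x₀) t := by
        unfold chain
        rw [add_div, mul_div_cancel_left₀ _ hℓ0.ne', Int.floor_add_intCast]
        congr 1; push_cast; ring
      rwa [h2] at h1
  obtain ⟨b, hb1, hb2, hb3⟩ := follows_of_traces S.four_η hD.2.2.1 S.two_ε htr'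
    (S.speed _ z _ hs htr') htr₀ (S.speed _ z₀ h₀ (fun _ => S.mem) htr₀) u
  refine ⟨φ (h₀ (b 0)) z₀, ⟨h₀ (b 0), ?_, rfl⟩, hb3 n _ ∅ (by simp; positivity) (fun _ _ _ _ => rfl)⟩
  have hb0 : b 0 + S.ℓ * ⌊r / S.ℓ⌋ = r := by
    apply htr.1.injective
    have := hb1 0
    simp only [Int.cast_zero, add_zero] at this
    rw [this, hr]
  have e1 := Int.floor_le (r / S.ℓ)
  have e2 := Int.lt_floor_add_one (r / S.ℓ)
  rw [le_div_iff₀ hℓ0] at e1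
  rw [div_lt_iff₀ hℓ0] at e2
  exact ⟨htr₀.1.monotone (by linarith), htr₀.1.monotone (by linarith)⟩

/-- Intermediate values: every value between the extreme entropies is the entropy of one of the
thinned families. -/
lemma LoopSystem.exists_entropy_eq (hexp : FlowExpansive φ) (hD : DriftConst φ ε₀ η₀) {c : ℝ}
    (hc : 0 ≤ c) (htop : ¬ topEntropyOn (φ.toFun 1) (S.orb 1) ≤ (c : EReal)) :
    ∃ t, topEntropyOn (φ.toFun 1) (S.orb t) = (c : EReal) := by
  set B : Set ℝ := {t | t ≤ 1 ∧ topEntropyOn (φ.toFun 1) (S.orb t) ≤ (c : EReal)} with hB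
  have hbot : (-1 : ℝ) ∈ B := ⟨by norm_num, (S.entropy_bot hexp hD).trans (by exact_mod_cast hc)⟩
  have hbdd : BddAbove B := ⟨1, fun t ht => ht.1⟩
  set T := sSup B with hT
  have hT1 : T ≤ 1 := csSup_le ⟨_, hbot⟩ fun t ht => ht.1
  have hmono : ∀ {t t' : ℝ}, t ≤ t' → S.orb t ⊆ S.orb t' := by
    rintro t t' htt' _ ⟨s, z, h, u, hs, hst, htr, rfl⟩
    exact ⟨s, z, h, u, hs, fun i hi => (hst i hi).trans htt', htr, rfl⟩
  have hle : topEntropyOn (φ.toFun 1) (S.orb T) ≤ (c : EReal) := by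
    refine le_of_forall_pos_le_coe fun κ hκ => ?_
    obtain ⟨τ, hτ, Hτ⟩ := S.entropy_step hexp hD (show 0 < κ / (c + 1) by positivity)
    obtain ⟨t, htB, ht⟩ := exists_lt_of_lt_csSup ⟨_, hbot⟩ (show T - τ < sSup B by linarith)
    refine (Hτ t T (le_csSup hbdd htB) (by linarith) c hc htB.2).trans ?_
    rw [EReal.coe_le_coe_iff]
    apply le_of_eq
    field_simp
    ring
  refine ⟨T, le_antisymm hle ?_⟩
  by_contra hcon
  obtain ⟨a, ha1, ha2⟩ := EReal.lt_iff_exists_real_btwn.1 (not_le.1 hcon)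
  have ha0 : 0 ≤ a := by
    have := (topEntropyOn_nonneg (φ.toFun 1) (S.orb T)).trans ha1.le
    exact_mod_cast this
  have hac : a < c := by exact_mod_cast ha2
  obtain ⟨τ, hτ, Hτ⟩ := S.entropy_step hexp hD (show 0 < (c - a) / (a + 1) by
    have : 0 < c - a := by linarith
    positivity)
  have hT1' : T < 1 := by
    refine lt_of_le_of_ne hT1 fun h => htop ?_
    rw [show S.orb 1 = S.orb T by rw [h]]; exact hle
  have h1 := Hτ T (min 1 (T + τ)) (le_min hT1 (by linarith)) (min_le_right _ _) a ha0 ha1.le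
  have h2 : min 1 (T + τ) ∈ B := by
    refine ⟨min_le_left _ _, h1.trans ?_⟩
    rw [EReal.coe_le_coe_iff]
    apply le_of_eq
    field_simp
    ring
  have h3 := le_csSup hbdd h2
  have h4 : T < min 1 (T + τ) := lt_min hT1' (by linarith)
  linarith

end Bottom

end EFlow

namespace EFlow

section Top

lemma Speed.mul {η : ℝ} {h : ℝ → ℝ} (hs : Speed η h) (n : ℕ) : ∀ {t t' : ℝ}, t ≤ t' →
    t' ≤ t + n → |h t' - h t - (t' - t)| ≤ n * η := by
  induction n with
  | zero =>
    intro t t' h1 h2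
    have : t' = t := le_antisymm (by simpa using h2) h1
    rw [this]; simp
  | succ n ih =>
    intro t t' h1 h2
    push_cast at h2 ⊢
    have a1 := ih (t := t) (t' := max t (t' - 1)) (le_max_left _ _)
      (max_le (by simp) (by linarith))
    have a2 := hs (max t (t' - 1)) t' (max_le h1 (by linarith))
      (by linarith [le_max_right t (t' - 1)])
    rw [abs_le] at *
    constructor <;> linarith [a1.1, a1.2, a2.1, a2.2]

lemma abs_floor_sub_floor_le_one {x y : ℝ} (h : |x - y| ≤ 1) : ⌊x⌋ - ⌊y⌋ ∈ Finset.Icc (-1 : ℤ) 1 := by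
  rw [abs_le] at h
  have h1 : ⌊x⌋ ≤ ⌊y + 1⌋ := Int.floor_le_floor (by linarith [h.2])
  have h2 : ⌊y⌋ ≤ ⌊x + 1⌋ := Int.floor_le_floor (by linarith [h.1])
  rw [Int.floor_add_one] at h1 h2
  rw [Finset.mem_Icc]
  constructor <;> linarith

variable {M : Type*} [MetricSpace M] [CompactSpace M] {φ : Flow ℝ M} {ε₀ η₀ : ℝ}
  (S : LoopSystem φ ε₀ η₀)

/-- The bi-infinite sequence which reads the word `w` from place `0` on and is constant
elsewhere. -/
def LoopSystem.ext {m : ℕ} (w : Fin m → M) (i : ℤ) : M :=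
  if h : 0 ≤ i ∧ i.toNat < m then w ⟨i.toNat, h.2⟩ else S.x₀

/-- The number of words of length `m` is bounded by the number of separated orbits times the number
of coarse time profiles of the tracing orbits. -/
lemma LoopSystem.card_words_le {ε₁ εs β : ℝ} {m₀ : ℕ} (hm₀ : 1 ≤ m₀)
    (hsep : ∀ x ∈ S.Q, ∀ y ∈ S.Q, x ≠ y → ∃ j : ℕ, j < S.ℓ ∧ εs < dist (φ (j : ℝ) x) (φ (j : ℝ) y))
    (hβ : 0 < β) (Hβ : ∀ (x : M) (a b : ℝ), |a - b| ≤ 3 * β → dist (φ a x) (φ b x) ≤ εs / 8)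
    (hη : m₀ * S.η ≤ β) (hη0 : 0 ≤ S.η) (hε : 4 * S.ε ≤ εs) (hε₁ : 0 < ε₁) (hεs : 0 < εs)
    (Hε₁ : ∀ (v : ℝ) (x y : M), |v| ≤ 1 → dist x y ≤ ε₁ → dist (φ v x) (φ v y) ≤ εs / 8) (m : ℕ) :
    S.Q.card ^ m ≤ sepCount (φ.toFun 1) (S.orb 1) ⌊(1 + S.η) * (m * S.ℓ : ℕ)⌋₊ ε₁ *
      3 ^ (m * S.ℓ / m₀ + 1) := by
  classical
  have hℓ0 : (0 : ℝ) < S.ℓ := by exact_mod_cast S.one_le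
  set W := Fintype.piFinset (fun _ : Fin m => S.Q) with hW
  have hWc : W.card = S.Q.card ^ m := by rw [hW, Fintype.card_piFinset]; simp
  have hext : ∀ w ∈ W, ∀ i, S.ext w i ∈ S.Q := by
    intro w hw i
    unfold LoopSystem.ext
    split_ifs with h
    · exact Fintype.mem_piFinset.1 hw _
    · exact S.mem
  have htr : ∀ w ∈ W, ∃ z h, Traces φ S.ℓ (S.ext w) S.ε z h := fun w hw =>
    S.exists_tr _ (hext w hw)
  haveI : Nonempty M := ⟨S.x₀⟩
  choose! z h htr using htr
  have hsp : ∀ w ∈ W, Speed S.η (h w) := fun w hw => S.speed _ _ _ (hext w hw) (htr w hw)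
  set d : (Fin m → M) → ℕ → ℝ := fun w k => h w (k * m₀ : ℕ) - h w 0 - (k * m₀ : ℕ) with hd
  set K := m * S.ℓ / m₀ + 1 with hK
  set prof : (Fin m → M) → Fin K → ℤ := fun w k => ⌊d w (k + 1) / β⌋ - ⌊d w k / β⌋ with hprof
  have hprofmem : ∀ w ∈ W, prof w ∈ Fintype.piFinset (fun _ : Fin K => Finset.Icc (-1 : ℤ) 1) := by
    intro w hw
    rw [Fintype.mem_piFinset]
    intro k
    apply abs_floor_sub_floor_le_one
    rw [← sub_div, abs_div, abs_of_pos hβ, div_le_one hβ]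
    refine le_trans ?_ hη
    have := (hsp w hw).mul m₀ (t := ((k * m₀ : ℕ) : ℝ)) (t' := (((k + 1) * m₀ : ℕ) : ℝ))
      (by exact_mod_cast Nat.mul_le_mul_right _ (by omega)) (by push_cast; linarith)
    refine le_trans (le_of_eq ?_) this
    rw [hd]; congr 1; push_cast; ring
  have hprofeq : ∀ w w', prof w = prof w' → ∀ k ≤ K, ⌊d w k / β⌋ = ⌊d w' k / β⌋ := by
    intro w w' hww k
    induction k with
    | zero => intro _; simp [hd]
    | succ k ih =>
      intro hk
      have h1 := congrFun hww ⟨k, by omega⟩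
      simp only [hprof] at h1
      have h2 := ih (by omega)
      omega
  have himg : (W.image prof).card ≤ 3 ^ K := by
    refine (Finset.card_le_card (Finset.image_subset_iff.2 hprofmem)).trans_eq ?_
    rw [Fintype.card_piFinset]; simp
  rw [← hWc]
  refine (Finset.card_le_mul_card_image W (f := prof) _ ?_).trans (Nat.mul_le_mul_left _ himg)
  intro p _
  set F := W.filter fun w => prof w = p with hF
  set y : (Fin m → M) → M := fun w => φ (h w 0) (z w) with hy
  have hF1 : ∀ w ∈ F, w ∈ W := fun w hw => (Finset.mem_filter.1 hw).1
  have key : ∀ w ∈ F, ∀ w' ∈ F, w ≠ w' → ∃ q : ℕ, q ≤ ⌊(1 + S.η) * (m * S.ℓ : ℕ)⌋₊ ∧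
      ε₁ < dist ((φ.toFun 1)^[q] (y w)) ((φ.toFun 1)^[q] (y w')) := by
    intro w hw w' hw' hne
    obtain ⟨i, hi⟩ := Function.ne_iff.1 hne
    obtain ⟨j, hjℓ, hj⟩ := hsep _ (Fintype.mem_piFinset.1 (hF1 w hw) i) _
      (Fintype.mem_piFinset.1 (hF1 w' hw') i) hi
    set N : ℕ := i * S.ℓ + j with hN
    have hNm : N ≤ m * S.ℓ := by
      have : (i + 1 : ℕ) * S.ℓ ≤ m * S.ℓ := Nat.mul_le_mul_right _ i.2
      rw [add_mul] at this; omega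
    have hfl : ⌊(N : ℝ) / S.ℓ⌋ = ((i : ℕ) : ℤ) := by
      rw [Int.floor_eq_iff, le_div_iff₀ hℓ0, div_lt_iff₀ hℓ0, hN]
      have : (j : ℝ) < S.ℓ := by exact_mod_cast hjℓ
      push_cast
      constructor
      · have := Nat.cast_nonneg (α := ℝ) j; linarith
      · linarith
    have hchain : ∀ v : Fin m → M, chain φ S.ℓ (S.ext v) N = φ (j : ℝ) (v i) := by
      intro v
      unfold chain
      rw [hfl]
      have e1 : S.ext v ((i : ℕ) : ℤ) = v i := by
        unfold LoopSystem.ext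
        rw [dif_pos ⟨by positivity, by simp⟩]
        congr 1
      rw [e1]; congr 1; rw [hN]; push_cast; ring
    have c1 := (htr w (hF1 w hw)).2.2.2 N
    have c2 := (htr w' (hF1 w' hw')).2.2.2 N
    rw [hchain] at c1 c2
    have hs1 := hsp w (hF1 w hw)
    have hs2 := hsp w' (hF1 w' hw')
    set τ := h w N - h w 0 with hτ
    set τ' := h w' N - h w' 0 with hτ'
    have e1 : φ τ (y w) = φ (h w N) (z w) := by rw [hy, ← φ.map_add, hτ]; simp
    have e2 : φ τ' (y w') = φ (h w' N) (z w') := by rw [hy, ← φ.map_add, hτ']; simp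
    -- equal profiles force the two tracing times to agree up to `3 β`
    have hττ : |τ - τ'| ≤ 3 * β := by
      set k := N / m₀ with hk
      have hkK : k ≤ K := (Nat.div_le_div_right hNm).trans (Nat.le_succ _)
      have f1 := floor_eq_abs_sub_lt hβ (hprofeq w w' (((Finset.mem_filter.1 hw).2).trans
        ((Finset.mem_filter.1 hw').2).symm) k hkK)
      have g1 : k * m₀ ≤ N := Nat.div_mul_le_self _ _
      have g2 : N ≤ k * m₀ + m₀ := (Nat.lt_div_mul_add (a := N) (show 0 < m₀ by omega)).le
      have f2 := hs1.mul m₀ (t := ((k * m₀ : ℕ) : ℝ)) (t' := N) (by exact_mod_cast g1)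
        (by exact_mod_cast g2)
      have f3 := hs2.mul m₀ (t := ((k * m₀ : ℕ) : ℝ)) (t' := N) (by exact_mod_cast g1)
        (by exact_mod_cast g2)
      simp only [hd] at f1
      rw [abs_le] at *
      constructor <;> linarith [f1.1, f1.2, f2.1, f2.2, f3.1, f3.2]
    have hτ0 : 0 ≤ τ := sub_nonneg.2 ((htr w (hF1 w hw)).1.monotone (Nat.cast_nonneg N))
    have hτN : τ ≤ (1 + S.η) * (m * S.ℓ : ℕ) := by
      have f := hs1.mul N (t := 0) (t' := N) (Nat.cast_nonneg _) (by simp)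
      have f' := (abs_le.1 f).2
      have : (N : ℝ) ≤ (m * S.ℓ : ℕ) := by exact_mod_cast hNm
      nlinarith
    refine ⟨⌊τ⌋₊, Nat.floor_le_floor hτN, ?_⟩
    by_contra hcon
    rw [not_lt, iterate_flow, iterate_flow] at hcon
    have hfrac : |τ - ⌊τ⌋₊| ≤ 1 := by
      rw [abs_le]
      constructor <;> linarith [Nat.floor_le hτ0, Nat.lt_floor_add_one τ]
    have g3 := Hε₁ (τ - ⌊τ⌋₊) _ _ hfrac hcon
    rw [← φ.map_add _ _ (y w), ← φ.map_add _ _ (y w'), sub_add_cancel, e1] at g3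
    have g4 := Hβ (y w') τ τ' hττ
    rw [e2] at g4
    have t1 := dist_triangle4 (φ (j : ℝ) (w i)) (φ (h w N) (z w)) (φ τ (y w')) (φ (h w' N) (z w'))
    have t2 := dist_triangle (φ (j : ℝ) (w i)) (φ (h w' N) (z w')) (φ (j : ℝ) (w' i))
    rw [dist_comm (φ (j : ℝ) (w i)) (φ (h w N) (z w))] at t1
    linarith
  have hinj : Set.InjOn y ↑F := by
    intro w hw w' hw' hww
    by_contra hne
    obtain ⟨q, -, hq⟩ := key w hw w' hw' hne
    rw [hww, dist_self] at hq
    linarith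
  rw [← Finset.card_image_of_injOn hinj]
  refine card_le_sepCount hε₁ ?_ ?_
  · rw [Finset.coe_image]
    rintro _ ⟨w, hw, rfl⟩
    exact ⟨S.ext w, z w, h w, h w 0, hext w (hF1 w hw), fun i _ => (Int.fract_lt_one _).le,
      htr w (hF1 w hw), rfl⟩
  · rw [Finset.coe_image]
    rintro _ ⟨w, hw, rfl⟩ _ ⟨w', hw', rfl⟩ hne
    exact key w hw w' hw' (fun e => hne (by rw [e]))

/-- The full family has entropy above `c`: distinct words of loops are traced by separated orbits,
up to the `3 ^ (m * ℓ / m₀ + 1)` possible roundings of the time changes. -/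
lemma LoopSystem.entropy_top {a c κ εs β : ℝ} {m₀ : ℕ} (hm₀ : 1 ≤ m₀) (hc : 0 ≤ c) (hκ : 0 < κ)
    (hsep : ∀ x ∈ S.Q, ∀ y ∈ S.Q, x ≠ y → ∃ j : ℕ, j < S.ℓ ∧ εs < dist (φ (j : ℝ) x) (φ (j : ℝ) y))
    (hβ : 0 < β) (Hβ : ∀ (x : M) (a b : ℝ), |a - b| ≤ 3 * β → dist (φ a x) (φ b x) ≤ εs / 8)
    (hη : m₀ * S.η ≤ β) (hη0 : 0 ≤ S.η) (hε : 4 * S.ε ≤ εs) (hεs : 0 < εs)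
    (hcard : Real.exp (a * S.ℓ) ≤ S.Q.card)
    (hlt : Real.log 3 / m₀ + (c + κ) * (1 + S.η) < a) :
    ¬ topEntropyOn (φ.toFun 1) (S.orb 1) ≤ (c : EReal) := by
  intro hle
  rw [topEntropyOn_le_iff hc] at hle
  obtain ⟨ε₁, hε₁, Hε₁⟩ := flow_unif φ 1 (show 0 < εs / 8 by positivity)
  obtain ⟨C, hC, HC⟩ := hle κ hκ ε₁ hε₁
  set θ := Real.log 3 / m₀ + (c + κ) * (1 + S.η) with hθ
  have hm₀' : (0 : ℝ) < m₀ := by exact_mod_cast hm₀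
  have hℓ1 : (1 : ℝ) ≤ S.ℓ := by exact_mod_cast S.one_le
  obtain ⟨m, hm⟩ := exists_nat_gt (3 * C / (a - θ))
  rw [div_lt_iff₀ (by linarith)] at hm
  have h1 := S.card_words_le hm₀ hsep hβ Hβ hη hη0 hε hε₁ hεs
    (fun v x y hv hxy => Hε₁ v v x y hv hv (by simpa using hε₁.le) hxy) m
  have h2 : ((S.Q.card : ℝ)) ^ m ≤ (sepCount (φ.toFun 1) (S.orb 1)
      ⌊(1 + S.η) * (m * S.ℓ : ℕ)⌋₊ ε₁ : ℝ) * 3 ^ (m * S.ℓ / m₀ + 1) := by exact_mod_cast h1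
  set N : ℝ := ((m * S.ℓ : ℕ) : ℝ) with hN
  have hN0 : 0 ≤ N := Nat.cast_nonneg _
  have h3 : Real.exp (a * N) ≤ (S.Q.card : ℝ) ^ m := by
    calc Real.exp (a * N) = Real.exp (a * S.ℓ) ^ m := by
          rw [← Real.exp_nat_mul, hN]; push_cast; ring_nf
      _ ≤ _ := by gcongr
  have h4 : (sepCount (φ.toFun 1) (S.orb 1) ⌊(1 + S.η) * N⌋₊ ε₁ : ℝ) ≤
      C * Real.exp ((c + κ) * ((1 + S.η) * N)) := by
    refine (HC _).trans ?_
    gcongr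
    exact Nat.floor_le (by positivity)
  have h5 : (3 : ℝ) ^ (m * S.ℓ / m₀ + 1) ≤ 3 * Real.exp (Real.log 3 / m₀ * N) := by
    have e1 : ((m * S.ℓ / m₀ : ℕ) : ℝ) ≤ N / m₀ := Nat.cast_div_le
    have e2 : (3 : ℝ) ^ (m * S.ℓ / m₀) = Real.exp (Real.log 3 * (m * S.ℓ / m₀ : ℕ)) := by
      rw [mul_comm (Real.log 3), Real.exp_nat_mul, Real.exp_log (by norm_num)]
    have e3 : 0 ≤ Real.log 3 := Real.log_nonneg (by norm_num)
    rw [pow_succ, e2, mul_comm]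
    have e4 : Real.log 3 * ((m * S.ℓ / m₀ : ℕ) : ℝ) ≤ Real.log 3 / m₀ * N := by
      calc _ ≤ Real.log 3 * (N / m₀) := by gcongr
        _ = _ := by ring
    have := Real.exp_le_exp.2 e4
    linarith
  have h6 : Real.exp (a * N) ≤ 3 * C * Real.exp (θ * N) := by
    calc Real.exp (a * N) ≤ _ := h3.trans h2
      _ ≤ (C * Real.exp ((c + κ) * ((1 + S.η) * N))) * (3 * Real.exp (Real.log 3 / m₀ * N)) := by
          gcongr
      _ = 3 * C * (Real.exp ((c + κ) * ((1 + S.η) * N)) * Real.exp (Real.log 3 / m₀ * N)) := by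
          ring
      _ = _ := by rw [← Real.exp_add, hθ]; ring_nf
  have h7 : Real.exp ((a - θ) * N) ≤ 3 * C := by
    rw [sub_mul, Real.exp_sub, div_le_iff₀ (Real.exp_pos _)]
    exact h6
  have h8 := Real.add_one_le_exp ((a - θ) * N)
  have h9 : (m : ℝ) ≤ N := by
    rw [hN]; push_cast
    have := Nat.cast_nonneg (α := ℝ) m
    nlinarith
  nlinarith

end Top

end EFlow

namespace EFlow

section Subsystem

variable {M : Type*} [MetricSpace M] [CompactSpace M] {φ : Flow ℝ M}

/-- Every entropy value `c < h_top` is the topological entropy of a compact invariant set. -/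
lemma exists_subsystem (hexp : FlowExpansive φ) (hsh : FlowShadowing φ) {c : ℝ} (hc : 0 ≤ c)
    (htop : (c : EReal) < topEntropyOn (φ.toFun 1) univ) :
    ∃ Λ : Set M, IsCompact Λ ∧ Λ.Nonempty ∧ (∀ t : ℝ, φ.toFun t '' Λ = Λ) ∧
      topEntropyOn (φ.toFun 1) Λ = (c : EReal) := by
  obtain ⟨a, hca, hatop⟩ := EReal.exists_between_coe_real htop
  have hca : c < a := by exact_mod_cast hca
  have ha : 0 < a := by linarith
  obtain ⟨εs, hεs, Hloop⟩ := exists_loops ha.le hatop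
  obtain ⟨ε₀, η₀, hD⟩ := exists_driftConst hexp
  have hε₀ := hD.1
  have hη₀ := hD.2.1
  set κ := (a - c) / 4 with hκdef
  have hκ : 0 < κ := by rw [hκdef]; linarith
  have hl3 : 0 < Real.log 3 := Real.log_pos (by norm_num)
  obtain ⟨m₀, hm₀⟩ := exists_nat_gt (Real.log 3 / κ)
  have hm₀pos : (0 : ℝ) < m₀ := lt_trans (by positivity) hm₀
  have hm₀1 : 1 ≤ m₀ := by exact_mod_cast hm₀pos
  obtain ⟨β, hβ, Hβ⟩ := flow_small_time φ (show 0 < εs / 8 by positivity)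
  have hcκ : 0 < c + κ := by linarith
  set η := min (min (β / 3 / m₀) (η₀ / 4)) (κ / (c + κ)) with hηdef
  have hη : 0 < η := by positivity
  have hη1 : m₀ * η ≤ β / 3 := by
    have : η ≤ β / 3 / m₀ := (min_le_left _ _).trans (min_le_left _ _)
    rw [le_div_iff₀ hm₀pos] at this
    linarith
  have hη2 : 4 * η ≤ η₀ := by
    have : η ≤ η₀ / 4 := (min_le_left _ _).trans (min_le_right _ _)
    linarith
  have hη3 : (c + κ) * η ≤ κ := by
    have : η ≤ κ / (c + κ) := min_le_right _ _
    rw [le_div_iff₀ hcκ] at this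
    linarith
  obtain ⟨εv, δv, hεv, hδv, Hv⟩ := traces_speed hexp hη
  obtain ⟨εf, hεf, Hf⟩ := not_isFix_of_traces hexp
  set ε := min (min (ε₀ / 2) (εs / 4)) (min εv εf) with hεdef
  have hε : 0 < ε := by positivity
  have hε1 : ε ≤ ε₀ / 2 := (min_le_left _ _).trans (min_le_left _ _)
  have hε2 : ε ≤ εs / 4 := (min_le_left _ _).trans (min_le_right _ _)
  have hε3 : ε ≤ εv := (min_le_right _ _).trans (min_le_left _ _)
  have hε4 : ε ≤ εf := (min_le_right _ _).trans (min_le_right _ _)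
  obtain ⟨δt, hδt, Ht⟩ := exists_traces hsh hε
  obtain ⟨δi, hδi, Hi⟩ := fix_isolated hexp
  set δ := min (min δt δv) (min δi (εs / 2)) with hδdef
  have hδ : 0 < δ := by positivity
  have hδ1 : δ ≤ δt := (min_le_left _ _).trans (min_le_left _ _)
  have hδ2 : δ ≤ δv := (min_le_left _ _).trans (min_le_right _ _)
  have hδ3 : δ ≤ δi := (min_le_right _ _).trans (min_le_left _ _)
  have hδ4 : δ ≤ εs / 2 := (min_le_right _ _).trans (min_le_right _ _)
  obtain ⟨L, hL⟩ := exists_nat_gt (1 / a)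
  obtain ⟨ℓ, hLℓ, Q, hQsep, hQcard, hQd, hQr⟩ := Hloop δ hδ (max L 1)
  have hℓ1 : 1 ≤ ℓ := (le_max_right _ _).trans hLℓ
  have hℓ1' : (1 : ℝ) ≤ ℓ := by exact_mod_cast hℓ1
  have hℓL : 1 < a * ℓ := by
    have : (L : ℝ) ≤ ℓ := by exact_mod_cast (le_max_left _ _).trans hLℓ
    have h1 : 1 / a < ℓ := hL.trans_le this
    rw [div_lt_iff₀ ha] at h1
    linarith
  have hQ2 : 1 < Q.card := by
    have h1 := Real.add_one_le_exp (a * ℓ)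
    have : (1 : ℝ) < Q.card := by linarith
    exact_mod_cast this
  have hQnf : ∀ x ∈ Q, ¬ IsFix φ x := by
    intro x hx hfx
    obtain ⟨y, hy, hne⟩ := Finset.exists_mem_ne hQ2 x
    exact hne (Hi x y hfx ((hQd x hx y hy).trans hδ3))
  have hQr' : ∀ x ∈ Q, ∀ y ∈ Q, dist (φ (ℓ : ℝ) x) y ≤ δ := by
    intro x hx y hy
    rw [← iterate_flow]
    exact hQr x hx y hy
  obtain ⟨x₀, hx₀⟩ : Q.Nonempty := Finset.card_pos.1 (by omega)
  set S : LoopSystem φ ε₀ η₀ :=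
    { ℓ := ℓ, Q := Q, x₀ := x₀, ε := ε, η := η
      one_le := hℓ1
      mem := hx₀
      two_ε := by linarith
      four_η := hη2
      exists_tr := fun s hs => Ht ℓ s hℓ1' fun i => (hQr' _ (hs i) _ (hs _)).trans hδ1
      speed := fun s z h hs htr => Hv ℓ s z h ε hε3 hℓ1' (fun i => hQnf _ (hs i))
        (fun i => (hQr' _ (hs i) _ (hs _)).trans hδ2) htr
      not_fix := fun s z h hs htr => Hf ℓ s z h ε hε4 (fun i => hQnf _ (hs i)) htr } with hS
  have hsep : ∀ x ∈ Q, ∀ y ∈ Q, x ≠ y →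
      ∃ j : ℕ, j < ℓ ∧ εs < dist (φ (j : ℝ) x) (φ (j : ℝ) y) := by
    intro x hx y hy hne
    obtain ⟨j, hj, hd⟩ := hQsep hx hy hne
    rw [iterate_flow, iterate_flow] at hd
    refine ⟨j, lt_of_le_of_ne hj ?_, hd⟩
    rintro rfl
    have h1 := dist_triangle_right (φ (j : ℝ) x) (φ (j : ℝ) y) x
    linarith [hQr' x hx x hx, hQr' y hy x hx]
  have htop1 := S.entropy_top (a := a) (c := c) (κ := κ) (εs := εs) (β := β / 3) hm₀1 hc hκ hsep
    (by positivity) (fun x a b h => Hβ x a b (by linarith)) hη1 hη.le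
    (by change 4 * ε ≤ εs; linarith) hεs hQcard (by
      change Real.log 3 / m₀ + (c + κ) * (1 + η) < a
      have : Real.log 3 / m₀ < κ := by
        rw [div_lt_iff₀ hm₀pos]
        rw [div_lt_iff₀ hκ] at hm₀
        linarith
      linarith)
  obtain ⟨t, ht⟩ := S.exists_entropy_eq hexp hD hc htop1
  have hcont : ∀ t : ℝ, Continuous (φ.toFun t) := fun t => φ.continuous continuous_const continuous_id
  have hsub : ∀ u : ℝ, φ.toFun u '' closure (S.orb t) ⊆ closure (S.orb t) := by
    intro u
    refine (image_closure_subset_closure_image (hcont u)).trans (closure_mono ?_)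
    rintro _ ⟨y, hy, rfl⟩
    exact S.orb_invariant hy u
  refine ⟨closure (S.orb t), isClosed_closure.isCompact, (S.orb_nonempty t).closure, fun u => ?_, ?_⟩
  · refine (hsub u).antisymm fun y hy => ?_
    refine ⟨φ (-u) y, hsub (-u) ⟨y, hy, rfl⟩, ?_⟩
    change φ u (φ (-u) y) = y
    rw [← φ.map_add]; simp
  · exact le_antisymm (topEntropyOn_closure_le (hcont 1) hc ht.le)
      (ht.ge.trans (topEntropyOn_mono subset_closure))

end Subsystem

end EFlow

namespace EFlow

/-! ### Entropy of finite-valued maps -/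

section FiniteEntropy

/-- The entropy of a finite vector. -/
noncomputable def vecH {ι : Type*} [Fintype ι] (p : ι → ℝ) : ℝ := ∑ i, Real.negMulLog (p i)

lemma gibbs {p q : ℝ} (hp : 0 ≤ p) (hq : 0 ≤ q) (hpq : p ≠ 0 → q ≠ 0) :
    Real.negMulLog p ≤ -(p * Real.log q) + (q - p) := by
  rcases hp.eq_or_lt with rfl | hp
  · simpa using hq
  have hq' : 0 < q := lt_of_le_of_ne hq (hpq hp.ne').symm
  have h := Real.log_le_sub_one_of_pos (div_pos hq' hp)
  rw [Real.log_div hq'.ne' hp.ne'] at h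
  have h2 := mul_le_mul_of_nonneg_left h hp.le
  have h3 : p * (q / p - 1) = q - p := by field_simp
  rw [h3] at h2
  unfold Real.negMulLog
  linarith

lemma negMulLog_sum_le {ι : Type*} (s : Finset ι) (p : ι → ℝ) (hp : ∀ i, 0 ≤ p i) :
    Real.negMulLog (∑ i ∈ s, p i) ≤ ∑ i ∈ s, Real.negMulLog (p i) := by
  unfold Real.negMulLog
  rw [← Finset.sum_neg_distrib, Finset.sum_mul]
  refine Finset.sum_le_sum fun i hi => ?_
  rcases (hp i).eq_or_lt with h | h
  · simp [← h]
  have h1 : p i ≤ ∑ i ∈ s, p i := Finset.single_le_sum (fun j _ => hp j) hi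
  have h2 := Real.log_le_log h h1
  nlinarith

variable {ι κ : Type*} [Fintype ι] [Fintype κ]

lemma vecH_le_cond {p : ι × κ → ℝ} (hp : ∀ x, 0 ≤ p x) (m : κ → ℝ)
    (hm : ∀ j, ∑ i, p (i, j) = m j) (B : κ → ℝ) (hB : ∀ j, 0 < B j)
    (hcard : ∀ j, ((Finset.univ.filter fun i => p (i, j) ≠ 0).card : ℝ) ≤ B j) :
    vecH p ≤ vecH m + ∑ j, m j * Real.log (B j) := by
  classical
  unfold vecH
  rw [← Finset.sum_add_distrib, Fintype.sum_prod_type_right]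
  refine Finset.sum_le_sum fun j _ => ?_
  have hm0 : 0 ≤ m j := by rw [← hm]; exact Finset.sum_nonneg fun i _ => hp _
  set s := Finset.univ.filter fun i => p (i, j) ≠ 0 with hs
  have h1 : ∑ i, Real.negMulLog (p (i, j)) = ∑ i ∈ s, Real.negMulLog (p (i, j)) := by
    rw [hs, Finset.sum_filter]
    refine Finset.sum_congr rfl fun i _ => ?_
    split_ifs with h
    · rfl
    · rw [not_not.1 h]; simp
  have h2 : ∑ i ∈ s, p (i, j) = m j := by
    rw [← hm, hs, Finset.sum_filter]
    refine Finset.sum_congr rfl fun i _ => ?_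
    split_ifs with h
    · rfl
    · rw [not_not.1 h]
  rw [h1]
  rcases hm0.eq_or_lt with h0 | h0
  · have : ∀ i ∈ s, p (i, j) = 0 := by
      rw [← Finset.sum_eq_zero_iff_of_nonneg fun i _ => hp _, h2, ← h0]
    rw [Finset.sum_congr rfl fun i hi => by rw [this i hi, Real.negMulLog_zero], ← h0]
    simp
  have hq : 0 < m j / B j := div_pos h0 (hB j)
  calc ∑ i ∈ s, Real.negMulLog (p (i, j))
      ≤ ∑ i ∈ s, (-(p (i, j) * Real.log (m j / B j)) + (m j / B j - p (i, j))) :=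
        Finset.sum_le_sum fun i _ => gibbs (hp _) hq.le fun _ => hq.ne'
    _ = -(m j * Real.log (m j / B j)) + (s.card * (m j / B j) - m j) := by
        rw [Finset.sum_add_distrib, Finset.sum_neg_distrib, ← Finset.sum_mul, h2,
          Finset.sum_sub_distrib, h2]
        simp
    _ ≤ -(m j * Real.log (m j / B j)) + 0 := by
        gcongr
        have : (s.card : ℝ) * (m j / B j) ≤ B j * (m j / B j) := by gcongr; exact hcard j
        rw [mul_div_cancel₀ _ (hB j).ne'] at this
        linarith
    _ = _ := by
        rw [Real.log_div h0.ne' (hB j).ne']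
        unfold Real.negMulLog
        ring

lemma vecH_le_add {p : ι × κ → ℝ} (hp : ∀ x, 0 ≤ p x) (m₁ : ι → ℝ) (m₂ : κ → ℝ)
    (h₁ : ∀ i, ∑ j, p (i, j) = m₁ i) (h₂ : ∀ j, ∑ i, p (i, j) = m₂ j) (hs : ∑ i, m₁ i = 1) :
    vecH p ≤ vecH m₁ + vecH m₂ := by
  have hs2 : ∑ j, m₂ j = 1 := by
    rw [← hs, Finset.sum_congr rfl fun j _ => (h₂ j).symm,
      Finset.sum_congr rfl fun j _ => (h₁ j).symm, Finset.sum_comm]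
  have hm1 : ∀ i j, p (i, j) ≤ m₁ i := fun i j => by
    rw [← h₁]; exact Finset.single_le_sum (f := fun j => p (i, j)) (fun _ _ => hp _) (Finset.mem_univ j)
  have hm2 : ∀ i j, p (i, j) ≤ m₂ j := fun i j => by
    rw [← h₂]; exact Finset.single_le_sum (f := fun i => p (i, j)) (fun _ _ => hp _) (Finset.mem_univ i)
  have n1 : ∀ i, 0 ≤ m₁ i := fun i => by rw [← h₁]; exact Finset.sum_nonneg fun _ _ => hp _
  have n2 : ∀ i, 0 ≤ m₂ i := fun i => by rw [← h₂]; exact Finset.sum_nonneg fun _ _ => hp _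
  have key : ∀ i j, Real.negMulLog (p (i, j)) ≤
      -(p (i, j) * Real.log (m₁ i)) + -(p (i, j) * Real.log (m₂ j)) + (m₁ i * m₂ j - p (i, j)) := by
    intro i j
    rcases (hp (i, j)).eq_or_lt with h | h
    · rw [← h]; simp; exact mul_nonneg (n1 i) (n2 j)
    have a1 : 0 < m₁ i := h.trans_le (hm1 i j)
    have a2 : 0 < m₂ j := h.trans_le (hm2 i j)
    have := gibbs h.le (mul_pos a1 a2).le fun _ => (mul_pos a1 a2).ne'
    rw [Real.log_mul a1.ne' a2.ne'] at this
    linarith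
  have e1 : ∑ i, ∑ j, -(p (i, j) * Real.log (m₁ i)) = vecH m₁ := by
    unfold vecH Real.negMulLog
    refine Finset.sum_congr rfl fun i _ => ?_
    rw [Finset.sum_neg_distrib, ← Finset.sum_mul, h₁]; ring
  have e2 : ∑ i, ∑ j, -(p (i, j) * Real.log (m₂ j)) = vecH m₂ := by
    unfold vecH Real.negMulLog
    rw [Finset.sum_comm]
    refine Finset.sum_congr rfl fun j _ => ?_
    rw [Finset.sum_neg_distrib, ← Finset.sum_mul, h₂]; ring
  have e3 : ∑ i, ∑ j, (m₁ i * m₂ j - p (i, j)) = 0 := by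
    simp_rw [Finset.sum_sub_distrib, h₁, ← Finset.mul_sum, hs2, mul_one, sub_self]
  calc vecH p = ∑ i, ∑ j, Real.negMulLog (p (i, j)) := by unfold vecH; rw [Fintype.sum_prod_type]
    _ ≤ ∑ i, ∑ j, (-(p (i, j) * Real.log (m₁ i)) + -(p (i, j) * Real.log (m₂ j)) +
        (m₁ i * m₂ j - p (i, j))) := Finset.sum_le_sum fun i _ => Finset.sum_le_sum fun j _ => key i j
    _ = _ := by simp_rw [Finset.sum_add_distrib, e1, e2, e3, add_zero]

end FiniteEntropy

section MapEntropy

variable {α β : Type*} [MeasurableSpace α] {ι κ : Type*} [Fintype ι] [Fintype κ]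

/-- The map `X` into a finite type has measurable fibres. -/
def FibMeas (X : α → ι) : Prop := ∀ i, MeasurableSet (X ⁻¹' {i})

/-- The entropy of the finite-valued map `X` with respect to `μ`. -/
noncomputable def mapH (μ : Measure α) (X : α → ι) : ℝ := vecH fun i => μ.real (X ⁻¹' {i})

variable {μ : Measure α} {X : α → ι} {Y : α → κ}

lemma FibMeas.set (hX : FibMeas X) (s : Set ι) : MeasurableSet (X ⁻¹' s) := by
  rw [← biUnion_preimage_singleton]
  exact s.toFinite.measurableSet_biUnion fun i _ => hX i

lemma FibMeas.prodMk (hX : FibMeas X) (hY : FibMeas Y) : FibMeas fun x => (X x, Y x) := by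
  rintro ⟨i, j⟩
  have : (fun x => (X x, Y x)) ⁻¹' {(i, j)} = X ⁻¹' {i} ∩ Y ⁻¹' {j} := by ext; simp
  rw [this]
  exact (hX i).inter (hY j)

lemma FibMeas.comp_left (hX : FibMeas X) (g : ι → κ) : FibMeas fun x => g (X x) :=
  fun k => hX.set (g ⁻¹' {k})

lemma FibMeas.comp_right [MeasurableSpace β] (hX : FibMeas X) {f : β → α} (hf : Measurable f) :
    FibMeas fun x => X (f x) := fun i => hf (hX i)

lemma sum_real [IsFiniteMeasure μ] (hX : FibMeas X) (s : Finset ι) :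
    ∑ i ∈ s, μ.real (X ⁻¹' {i}) = μ.real (X ⁻¹' ↑s) :=
  sum_measureReal_preimage_singleton s fun i _ => hX i

lemma mapH_comp_le [IsFiniteMeasure μ] (hX : FibMeas X) (g : ι → κ) :
    mapH μ (fun x => g (X x)) ≤ mapH μ X := by
  classical
  unfold mapH vecH
  rw [← Finset.sum_fiberwise Finset.univ g]
  refine Finset.sum_le_sum fun k _ => ?_
  refine le_trans (le_of_eq ?_) (negMulLog_sum_le _ _ fun i => measureReal_nonneg)
  rw [sum_real hX]
  beta_reduce
  rw [show (fun x => g (X x)) ⁻¹' {k} = X ⁻¹' ↑(Finset.univ.filter fun i => g i = k) by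
    ext x; simp]

lemma mapH_mono [IsFiniteMeasure μ] (hX : FibMeas X) {g : ι → κ} (h : ∀ x, Y x = g (X x)) :
    mapH μ Y ≤ mapH μ X := by
  rw [show Y = fun x => g (X x) from funext h]
  exact mapH_comp_le hX g

lemma mapH_nonneg [IsProbabilityMeasure μ] : 0 ≤ mapH μ X :=
  Finset.sum_nonneg fun _ _ => Real.negMulLog_nonneg measureReal_nonneg measureReal_le_one

lemma marginal [IsFiniteMeasure μ] (hX : FibMeas X) (hY : FibMeas Y) (j : κ) :
    ∑ i, μ.real ((fun x => (X x, Y x)) ⁻¹' {(i, j)}) = μ.real (Y ⁻¹' {j}) := by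
  classical
  have h := sum_real (μ := μ) (hX.prodMk hY) (Finset.univ.image fun i => (i, j))
  rw [Finset.sum_image (by intro a _ b _ h; exact (Prod.mk.inj h).1)] at h
  rw [h]
  congr 1
  ext x; simp [eq_comm]

lemma marginal' [IsFiniteMeasure μ] (hX : FibMeas X) (hY : FibMeas Y) (i : ι) :
    ∑ j, μ.real ((fun x => (X x, Y x)) ⁻¹' {(i, j)}) = μ.real (X ⁻¹' {i}) := by
  classical
  have h := sum_real (μ := μ) (hX.prodMk hY) (Finset.univ.image fun j => (i, j))
  rw [Finset.sum_image (by intro a _ b _ h; exact (Prod.mk.inj h).2)] at h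
  rw [h]
  congr 1
  ext x; simp [eq_comm]

lemma mapH_prod_le [IsProbabilityMeasure μ] (hX : FibMeas X) (hY : FibMeas Y) :
    mapH μ (fun x => (X x, Y x)) ≤ mapH μ X + mapH μ Y := by
  refine vecH_le_add (fun _ => measureReal_nonneg) _ _ (marginal' hX hY) (marginal hX hY) ?_
  rw [sum_real hX]; simp

/-- The conditional entropy of `X` given `Y` is bounded by the mean of the logarithm of the number
of values of `X` on the fibres of `Y`. -/
lemma mapH_le_cond [IsProbabilityMeasure μ] (hX : FibMeas X) (hY : FibMeas Y) (B : κ → ℝ)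
    (hB : ∀ j, 0 < B j)
    (hcard : ∀ j, ((Finset.univ.filter fun i => μ.real (X ⁻¹' {i} ∩ Y ⁻¹' {j}) ≠ 0).card : ℝ)
      ≤ B j) :
    mapH μ X ≤ mapH μ Y + ∑ j, μ.real (Y ⁻¹' {j}) * Real.log (B j) := by
  refine (mapH_mono (hX.prodMk hY) (g := Prod.fst) fun _ => rfl).trans ?_
  refine vecH_le_cond (fun _ => measureReal_nonneg) _ (marginal hX hY) B hB fun j => ?_
  convert hcard j using 7 with i
  ext x; simp

lemma mapH_le_log_card [IsProbabilityMeasure μ] [Nonempty ι] (hX : FibMeas X) :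
    mapH μ X ≤ Real.log (Fintype.card ι) := by
  have h := mapH_le_cond (μ := μ) hX (Y := fun _ => ()) (fun _ => by simp)
    (fun _ => (Fintype.card ι : ℝ)) (fun _ => by exact_mod_cast Fintype.card_pos) (fun _ => by
      exact_mod_cast Finset.card_le_univ _)
  refine h.trans (le_of_eq ?_)
  simp [mapH, vecH]

lemma mapH_map [MeasurableSpace β] {ν : Measure β} {f : β → α} (hf : Measurable f)
    (hX : FibMeas X) : mapH (ν.map f) X = mapH ν (fun x => X (f x)) := by
  unfold mapH
  congr 1
  funext i
  rw [map_measureReal_apply hf (hX i)]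
  rfl

/-- A mixture of two measures has an entropy exceeding the mixture of the entropies by no more than
the entropy of the weights. -/
lemma mapH_mix {a b : ℝ} (ha : 0 ≤ a) (hb : 0 ≤ b) {μ₁ μ₂ : Measure α} [IsProbabilityMeasure μ₁]
    [IsProbabilityMeasure μ₂] (hX : FibMeas X)
    (h : ∀ i, μ.real (X ⁻¹' {i}) = a * μ₁.real (X ⁻¹' {i}) + b * μ₂.real (X ⁻¹' {i})) :
    mapH μ X ≤ a * mapH μ₁ X + b * mapH μ₂ X + (Real.negMulLog a + Real.negMulLog b) := by
  have hs : ∀ ν : Measure α, IsProbabilityMeasure ν → ∑ i, ν.real (X ⁻¹' {i}) = 1 := by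
    intro ν _; rw [sum_real hX]; simp
  have key : ∀ i, Real.negMulLog (μ.real (X ⁻¹' {i})) ≤
      (a * Real.negMulLog (μ₁.real (X ⁻¹' {i})) + μ₁.real (X ⁻¹' {i}) * Real.negMulLog a) +
      (b * Real.negMulLog (μ₂.real (X ⁻¹' {i})) + μ₂.real (X ⁻¹' {i}) * Real.negMulLog b) := by
    intro i
    have := negMulLog_sum_le Finset.univ
      (fun j : Bool => cond j (a * μ₁.real (X ⁻¹' {i})) (b * μ₂.real (X ⁻¹' {i})))
      (by rintro (_ | _) <;> simp <;> positivity)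
    simp only [Fintype.sum_bool, cond_true, cond_false] at this
    rw [h]
    refine this.trans (le_of_eq ?_)
    rw [Real.negMulLog_mul, Real.negMulLog_mul]
    ring
  unfold mapH vecH
  refine (Finset.sum_le_sum fun i _ => key i).trans (le_of_eq ?_)
  simp_rw [Finset.sum_add_distrib, ← Finset.mul_sum, ← Finset.sum_mul, hs μ₁ inferInstance,
    hs μ₂ inferInstance]
  ring

end MapEntropy

end EFlow

namespace EFlow

section Rate

variable {α : Type*} [MeasurableSpace α] {ι κ : Type*} [Fintype ι] [Fintype κ]

/-- The name of length `n` of a point with respect to `X`. -/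
def itin (f : α → α) (X : α → ι) (n : ℕ) (x : α) : Fin n → ι := fun i => X (f^[i] x)

/-- The entropy rate of `X` with respect to `f` and `μ`. -/
noncomputable def rate (f : α → α) (μ : Measure α) (X : α → ι) : ℝ :=
  sInf ((fun n : ℕ => mapH μ (itin f X n) / n) '' Set.Ici 1)

variable {μ : Measure α} {f : α → α} {X : α → ι}

lemma itin_preimage (f : α → α) (X : α → ι) (n : ℕ) (w : Fin n → ι) :
    itin f X n ⁻¹' {w} = ⋂ i : Fin n, f^[(i : ℕ)] ⁻¹' (X ⁻¹' {w i}) := by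
  ext x; simp [itin, funext_iff]

lemma FibMeas.itin (hX : FibMeas X) (hf : Measurable f) (n : ℕ) : FibMeas (itin f X n) := by
  intro w
  rw [itin_preimage]
  exact MeasurableSet.iInter fun i => (hf.iterate i) (hX _)

lemma mapH_itin_add [IsProbabilityMeasure μ] (hX : FibMeas X) (hf : Measurable f) (m n : ℕ) :
    mapH μ (itin f X (m + n)) ≤ mapH μ (itin f X m) + mapH (μ.map f^[m]) (itin f X n) := by
  rw [mapH_map (hf.iterate m) (hX.itin hf n)]
  refine (mapH_mono ((hX.itin hf m).prodMk ((hX.itin hf n).comp_right (hf.iterate m)))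
    (g := fun p => Fin.append p.1 p.2) fun x => ?_).trans
    (mapH_prod_le (hX.itin hf m) ((hX.itin hf n).comp_right (hf.iterate m)))
  funext i
  refine Fin.addCases (fun i => ?_) (fun i => ?_) i
  · simp [itin]
  · simp [itin, add_comm m, Function.iterate_add_apply]

lemma mapH_itin_mono [IsProbabilityMeasure μ] (hX : FibMeas X) (hf : Measurable f) {m n : ℕ}
    (hmn : m ≤ n) : mapH μ (itin f X m) ≤ mapH μ (itin f X n) :=
  mapH_mono (hX.itin hf n) (g := fun w i => w (Fin.castLE hmn i)) fun _ => rfl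

lemma mapH_itin_le [IsProbabilityMeasure μ] [Nonempty ι] (hX : FibMeas X) (hf : Measurable f)
    (n : ℕ) : mapH μ (itin f X n) ≤ n * Real.log (Fintype.card ι) := by
  refine (mapH_le_log_card (hX.itin hf n)).trans (le_of_eq ?_)
  rw [Fintype.card_fun]; simp

lemma subadditive_itin [IsProbabilityMeasure μ] (hX : FibMeas X) (hf : MeasurePreserving f μ μ) :
    Subadditive fun n => mapH μ (itin f X n) := by
  intro m n
  have h := mapH_itin_add (μ := μ) hX hf.measurable m n
  rwa [(hf.iterate m).map_eq] at h

lemma bddBelow_itin [IsProbabilityMeasure μ] :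
    BddBelow (Set.range fun n : ℕ => mapH μ (itin f X n) / n) :=
  ⟨0, by rintro _ ⟨n, rfl⟩; exact div_nonneg mapH_nonneg n.cast_nonneg⟩

lemma tendsto_rate [IsProbabilityMeasure μ] (hX : FibMeas X) (hf : MeasurePreserving f μ μ) :
    Tendsto (fun n : ℕ => mapH μ (itin f X n) / n) atTop (𝓝 (rate f μ X)) := by
  have h := (subadditive_itin hX hf).tendsto_lim bddBelow_itin
  rwa [Subadditive.lim] at h

lemma rate_mul_le [IsProbabilityMeasure μ] (n : ℕ) :
    rate f μ X * n ≤ mapH μ (itin f X n) := by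
  rcases Nat.eq_zero_or_pos n with rfl | hn
  · simpa using mapH_nonneg
  · have hn' : (0 : ℝ) < n := by exact_mod_cast hn
    rw [← le_div_iff₀ hn']
    exact csInf_le (bddBelow_itin.mono (image_subset_range _ _)) ⟨n, hn, rfl⟩

lemma le_rate {a : ℝ} (h : ∀ n : ℕ, 1 ≤ n → a * n ≤ mapH μ (itin f X n)) : a ≤ rate f μ X := by
  refine le_csInf ⟨_, 1, by simp, rfl⟩ ?_
  rintro _ ⟨n, hn, rfl⟩
  have hn' : (0 : ℝ) < n := by exact_mod_cast Nat.lt_of_lt_of_le one_pos (mem_Ici.1 hn)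
  exact (le_div_iff₀ hn').2 (h n hn)

lemma rate_le_of [IsProbabilityMeasure μ] (hX : FibMeas X) (hf : MeasurePreserving f μ μ)
    {u : ℕ → ℝ} {a C : ℝ} (hu : Tendsto (fun n : ℕ => u n / n) atTop (𝓝 a))
    (h : ∀ n : ℕ, 1 ≤ n → mapH μ (itin f X n) ≤ u n + C) : rate f μ X ≤ a := by
  have h1 : Tendsto (fun n : ℕ => u n / n + C / n) atTop (𝓝 (a + 0)) :=
    hu.add (tendsto_const_nhds.div_atTop tendsto_natCast_atTop_atTop)
  rw [add_zero] at h1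
  refine le_of_tendsto_of_tendsto (tendsto_rate hX hf) h1 ?_
  filter_upwards [eventually_ge_atTop 1] with n hn
  rw [← add_div]
  gcongr
  exact h n hn

lemma rate_mix {a b : ℝ} (ha : 0 ≤ a) (hb : 0 ≤ b) {μ₁ μ₂ : Measure α} [IsProbabilityMeasure μ]
    [IsProbabilityMeasure μ₁] [IsProbabilityMeasure μ₂] (hX : FibMeas X)
    (hf : MeasurePreserving f μ μ) (hf₁ : MeasurePreserving f μ₁ μ₁)
    (hf₂ : MeasurePreserving f μ₂ μ₂)
    (h : ∀ s, MeasurableSet s → μ.real s = a * μ₁.real s + b * μ₂.real s) :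
    rate f μ X ≤ a * rate f μ₁ X + b * rate f μ₂ X := by
  refine rate_le_of hX hf
    (u := fun n => a * mapH μ₁ (itin f X n) + b * mapH μ₂ (itin f X n))
    (C := Real.negMulLog a + Real.negMulLog b) ?_ fun n _ =>
      mapH_mix ha hb (hX.itin hf.measurable n) fun i => h _ (hX.itin hf.measurable n i)
  have := ((tendsto_rate hX hf₁).const_mul a).add ((tendsto_rate hX hf₂).const_mul b)
  refine this.congr fun n => ?_
  ring

end Rate

section Partitions

variable {α : Type*} [MeasurableSpace α] {μ : Measure α} {f : α → α}

/-- The cell of a partition containing a given point. -/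
noncomputable def cellMap (P : Finset (Set α)) (hP : IsMeasPartition P) (x : α) : {p // p ∈ P} :=
  ⟨(mem_sUnion.1 (hP.2.1 ▸ mem_univ x : x ∈ ⋃₀ (↑P : Set (Set α)))).choose,
    (mem_sUnion.1 (hP.2.1 ▸ mem_univ x : x ∈ ⋃₀ (↑P : Set (Set α)))).choose_spec.1⟩

lemma mem_cellMap (P : Finset (Set α)) (hP : IsMeasPartition P) (x : α) :
    x ∈ (cellMap P hP x : Set α) :=
  (mem_sUnion.1 (hP.2.1 ▸ mem_univ x : x ∈ ⋃₀ (↑P : Set (Set α)))).choose_spec.2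

lemma cellMap_preimage (P : Finset (Set α)) (hP : IsMeasPartition P) (p : {p // p ∈ P}) :
    cellMap P hP ⁻¹' {p} = p := by
  ext x
  constructor
  · intro h
    rw [← (show cellMap P hP x = p from h)]
    exact mem_cellMap P hP x
  · intro h
    by_contra hne
    exact Set.disjoint_left.1 (hP.2.2 (cellMap P hP x).2 p.2 fun e => hne (Subtype.ext e))
      (mem_cellMap P hP x) h

lemma fibMeas_cellMap (P : Finset (Set α)) (hP : IsMeasPartition P) : FibMeas (cellMap P hP) :=
  fun p => by rw [cellMap_preimage]; exact hP.1 _ p.2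

lemma refinedInfo_eq (P : Finset (Set α)) (hP : IsMeasPartition P) (n : ℕ) :
    refinedInfo f μ P n = mapH μ (itin f (cellMap P hP) n) := by
  unfold refinedInfo mapH vecH
  refine Finset.sum_congr rfl fun w _ => ?_
  beta_reduce
  rw [itin_preimage]
  simp_rw [cellMap_preimage]
  unfold EF.negMulLog Real.negMulLog
  rw [neg_mul]
  rfl

lemma partEntropy_eq [IsProbabilityMeasure μ] (hf : MeasurePreserving f μ μ)
    (P : Finset (Set α)) (hP : IsMeasPartition P) :
    partEntropy f μ P = rate f μ (cellMap P hP) := by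
  unfold partEntropy
  simp_rw [refinedInfo_eq P hP]
  exact (tendsto_rate (fibMeas_cellMap P hP) hf).limsup_eq

lemma measEntropy_le [IsProbabilityMeasure μ] (hf : MeasurePreserving f μ μ) {a : ℝ}
    (h : ∀ P hP, rate f μ (cellMap P hP) ≤ a) : measEntropy f μ ≤ (a : EReal) := by
  refine iSup₂_le fun P hP => ?_
  rw [partEntropy_eq hf P hP]
  exact_mod_cast h P hP

lemma rate_le_measEntropy [IsProbabilityMeasure μ] (hf : MeasurePreserving f μ μ) {ι : Type*}
    [Fintype ι] [Nonempty ι] {X : α → ι} (hX : FibMeas X) :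
    ((rate f μ X : ℝ) : EReal) ≤ measEntropy f μ := by
  classical
  set P : Finset (Set α) := Finset.univ.image fun i => X ⁻¹' {i} with hPdef
  have hP : IsMeasPartition P := by
    refine ⟨?_, ?_, ?_⟩
    · intro p hp
      obtain ⟨i, -, rfl⟩ := Finset.mem_image.1 hp
      exact hX i
    · refine eq_univ_of_forall fun x => mem_sUnion.2 ⟨X ⁻¹' {X x}, ?_, rfl⟩
      exact Finset.mem_coe.2 (Finset.mem_image_of_mem _ (Finset.mem_univ _))
    · intro p hp q hq hpq
      obtain ⟨i, -, rfl⟩ := Finset.mem_image.1 (Finset.mem_coe.1 hp)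
      obtain ⟨j, -, rfl⟩ := Finset.mem_image.1 (Finset.mem_coe.1 hq)
      rw [Set.disjoint_left]
      intro x hx hx'
      exact hpq (by rw [← (show X x = i from hx), ← (show X x = j from hx')])
  have hc : ∀ p : {p // p ∈ P}, ∃ i, X ⁻¹' {i} = p := by
    intro p
    obtain ⟨i, -, h⟩ := Finset.mem_image.1 p.2
    exact ⟨i, h⟩
  choose g hg using hc
  have hXg : ∀ x, X x = g (cellMap P hP x) := by
    intro x
    have := mem_cellMap P hP x
    rw [← hg] at this
    exact this
  have h1 : rate f μ X ≤ rate f μ (cellMap P hP) := by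
    refine rate_le_of hX hf (u := fun n => mapH μ (itin f (cellMap P hP) n)) (C := 0)
      (tendsto_rate (fibMeas_cellMap P hP) hf) fun n _ => ?_
    rw [add_zero]
    exact mapH_mono ((fibMeas_cellMap P hP).itin hf.measurable n) (g := fun w i => g (w i))
      fun x => funext fun i => hXg _
  calc ((rate f μ X : ℝ) : EReal) ≤ ((partEntropy f μ P : ℝ) : EReal) := by
        rw [partEntropy_eq hf P hP]
        exact_mod_cast h1
    _ ≤ measEntropy f μ := le_iSup₂ (f := fun P (_ : IsMeasPartition P) =>
        ((partEntropy f μ P : ℝ) : EReal)) P hP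

end Partitions

end EFlow

namespace EFlow

section Relative

variable {M : Type*} [MetricSpace M] [CompactSpace M] [MeasurableSpace M] [BorelSpace M]
  {ι κ : Type*} [Fintype ι] [Fintype κ]

/-- Up to a set of small measure, the fibres of `X` are compact sets with positive distances. -/
lemma exists_inner_cells (μ : Measure M) [IsProbabilityMeasure μ] {X : M → ι} (hX : FibMeas X)
    {θ : ℝ} (hθ : 0 < θ) : ∃ (G : Set M) (ε : ℝ), MeasurableSet G ∧ 0 < ε ∧ μ.real Gᶜ ≤ θ ∧
      ∀ x ∈ G, ∀ y ∈ G, X x ≠ X y → ε < dist x y := by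
  classical
  haveI : Nonempty M := nonempty_of_isProbabilityMeasure μ
  haveI : Nonempty ι := ⟨X (Classical.arbitrary M)⟩
  have hr : (0 : ℝ) < Fintype.card ι := by exact_mod_cast Fintype.card_pos
  have h1 : ∀ i, ∃ K ⊆ X ⁻¹' {i}, IsCompact K ∧
      μ (X ⁻¹' {i} \ K) < ENNReal.ofReal (θ / Fintype.card ι) := fun i =>
    (hX i).exists_isCompact_diff_lt (measure_ne_top _ _) (by simpa using div_pos hθ hr)
  choose K hKX hK hKμ using h1
  have h2 : ∀ᶠ ε : ℝ in 𝓝[>] 0, ∀ i j, i ≠ j → ∀ x ∈ K i, ∀ y ∈ K j, ε < dist x y := by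
    rw [eventually_all]
    intro i
    rw [eventually_all]
    intro j
    by_cases hij : i = j
    · exact Eventually.of_forall fun _ h => absurd hij h
    have hd : Disjoint (K i) (K j) := by
      rw [Set.disjoint_left]
      intro x hx hx'
      exact hij (by rw [← (show X x = i from hKX i hx), ← (show X x = j from hKX j hx')])
    obtain ⟨r, hr, H⟩ := Metric.exists_pos_forall_lt_edist (hK i) (hK j).isClosed hd
    filter_upwards [Ioo_mem_nhdsGT (show (0 : ℝ) < r from hr)] with ε hε _ x hx y hy
    have := H x hx y hy
    rw [edist_nndist, ENNReal.coe_lt_coe] at this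
    exact hε.2.trans (by exact_mod_cast this)
  obtain ⟨ε, h2, hε⟩ := (h2.and self_mem_nhdsWithin).exists
  refine ⟨⋃ i, K i, ε, MeasurableSet.iUnion fun i => (hK i).measurableSet, hε, ?_, ?_⟩
  · have hsub : (⋃ i, K i)ᶜ ⊆ ⋃ i, (X ⁻¹' {i} \ K i) := by
      intro x hx
      rw [mem_compl_iff, mem_iUnion, not_exists] at hx
      exact mem_iUnion.2 ⟨X x, rfl, hx _⟩
    calc μ.real (⋃ i, K i)ᶜ ≤ μ.real (⋃ i, (X ⁻¹' {i} \ K i)) := measureReal_mono hsub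
      _ ≤ ∑ i, μ.real (X ⁻¹' {i} \ K i) := measureReal_iUnion_fintype_le _
      _ ≤ ∑ _i : ι, θ / Fintype.card ι := by
          refine Finset.sum_le_sum fun i _ => ?_
          exact ENNReal.toReal_le_of_le_ofReal (by positivity) (hKμ i).le
      _ = θ := by
          rw [Finset.sum_const, nsmul_eq_mul, Finset.card_univ]; field_simp
  · intro x hx y hy hne
    obtain ⟨i, hi⟩ := mem_iUnion.1 hx
    obtain ⟨j, hj⟩ := mem_iUnion.1 hy
    have e1 : X x = i := hKX i hi
    have e2 : X y = j := hKX j hj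
    exact h2 i j (by rwa [← e1, ← e2]) x hi y hj

/-- Bound for the number of names on a fibre of the reference map. -/
lemma card_names_le {f : M → M} {μ : Measure M} {Λ : Set M} (hΛ : μ Λᶜ = 0) {X : M → ι}
    {Z : M → κ} {G : Set M} [DecidablePred (· ∈ G)] {ε N : ℝ} (hN : 0 ≤ N)
    (hG : ∀ x ∈ G, ∀ y ∈ G, X x ≠ X y → ε < dist x y) (hε : 0 < ε) (k : ℕ)
    (hE : ∀ E : Finset M, ↑E ⊆ Λ → IsDynSep f k ε ↑E →
      (∀ x ∈ E, ∀ y ∈ E, ∀ j ≤ k, Z (f^[j] x) = Z (f^[j] y)) → (E.card : ℝ) ≤ N)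
    (z : Fin (k + 1) → κ) (v : Fin (k + 1) → Bool) :
    ((Finset.univ.filter fun w => μ.real (itin f X (k + 1) ⁻¹' {w} ∩
      (fun x => (itin f Z (k + 1) x, itin f (fun y => decide (y ∈ G)) (k + 1) x)) ⁻¹' {(z, v)}) ≠ 0).card : ℝ)
      ≤ (Fintype.card ι : ℝ) ^ (Finset.univ.filter fun i => v i = false).card * N := by
  classical
  set S := Finset.univ.filter fun w => μ.real (itin f X (k + 1) ⁻¹' {w} ∩
      (fun x => (itin f Z (k + 1) x, itin f (fun y => decide (y ∈ G)) (k + 1) x)) ⁻¹' {(z, v)}) ≠ 0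
    with hS
  have hp : ∀ w ∈ S, ∃ x ∈ Λ, itin f X (k + 1) x = w ∧ itin f Z (k + 1) x = z ∧
      itin f (fun y => decide (y ∈ G)) (k + 1) x = v := by
    intro w hw
    by_contra hcon
    push Not at hcon
    refine (Finset.mem_filter.1 hw).2 ?_
    rw [measureReal_def, measure_mono_null _ hΛ, ENNReal.toReal_zero]
    rintro x ⟨h1, h2⟩ hxΛ
    have h2' := Prod.mk.inj (show (_, _) = (z, v) from h2)
    exact hcon x hxΛ h1 h2'.1 h2'.2
  by_cases hSe : S = ∅
  · rw [hSe]; simp; positivity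
  obtain ⟨w₀, hw₀⟩ := Finset.nonempty_iff_ne_empty.2 hSe
  haveI : Nonempty M := ⟨(hp w₀ hw₀).choose⟩
  choose! p hpΛ hpX hpZ hpV using hp
  set ρ : (Fin (k + 1) → ι) → ({i // v i = false} → ι) := fun w i => w i with hρ
  have hfib : ∀ b ∈ S.image ρ, (S.filter fun w => ρ w = b).card ≤ ⌊N⌋₊ := by
    intro b _
    set F := S.filter fun w => ρ w = b with hF
    have hFS : ∀ w ∈ F, w ∈ S := fun w hw => (Finset.mem_filter.1 hw).1
    have hinj : Set.InjOn p ↑F := by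
      intro w hw w' hw' e
      rw [← hpX w (hFS w hw), ← hpX w' (hFS w' hw'), e]
    rw [← Finset.card_image_of_injOn hinj]
    apply Nat.le_floor
    refine hE _ ?_ ?_ ?_
    · rw [Finset.coe_image]
      rintro _ ⟨w, hw, rfl⟩
      exact hpΛ w (hFS w hw)
    · rw [Finset.coe_image]
      rintro _ ⟨w, hw, rfl⟩ _ ⟨w', hw', rfl⟩ hne
      have hww : w ≠ w' := fun e => hne (by rw [e])
      obtain ⟨i, hi⟩ := Function.ne_iff.1 hww
      have hv : v i ≠ false := by
        intro hv
        have e : ρ w = ρ w' := ((Finset.mem_filter.1 hw).2).trans ((Finset.mem_filter.1 hw').2).symm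
        exact hi (congrFun e ⟨i, hv⟩)
      have g1 : ∀ u ∈ F, f^[i] (p u) ∈ G := by
        intro u hu
        by_contra hcon
        refine hv ?_
        rw [← hpV u (hFS u hu)]
        simpa [itin] using hcon
      refine ⟨i, Nat.lt_succ_iff.1 i.2, hG _ (g1 w hw) _ (g1 w' hw') ?_⟩
      have e1 : X (f^[i] (p w)) = w i := congrFun (hpX w (hFS w hw)) i
      have e2 : X (f^[i] (p w')) = w' i := congrFun (hpX w' (hFS w' hw')) i
      rwa [e1, e2]
    · intro x hx y hy j hj
      obtain ⟨w, hw, rfl⟩ := Finset.mem_image.1 hx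
      obtain ⟨w', hw', rfl⟩ := Finset.mem_image.1 hy
      have e1 := congrFun (hpZ w (hFS w hw)) ⟨j, Nat.lt_succ_of_le hj⟩
      have e2 := congrFun (hpZ w' (hFS w' hw')) ⟨j, Nat.lt_succ_of_le hj⟩
      exact e1.trans e2.symm
  have h1 := Finset.card_le_mul_card_image S (f := ρ) _ hfib
  have h2 : (S.image ρ).card ≤ Fintype.card ι ^ (Finset.univ.filter fun i => v i = false).card := by
    refine (Finset.card_le_univ _).trans_eq ?_
    rw [Fintype.card_fun, Fintype.card_subtype]
  calc (S.card : ℝ) ≤ (⌊N⌋₊ : ℝ) * ((S.image ρ).card : ℝ) := by exact_mod_cast h1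
    _ ≤ N * (Fintype.card ι : ℝ) ^ (Finset.univ.filter fun i => v i = false).card := by
        gcongr
        · exact Nat.floor_le hN
        · exact_mod_cast h2
    _ = _ := mul_comm _ _

/-- The expected number of visits to the complement of `G` along an orbit segment. -/
lemma sum_visits {f : M → M} {μ : Measure M} [IsProbabilityMeasure μ]
    (hf : MeasurePreserving f μ μ) {Z : M → κ} (hZ : FibMeas Z) {G : Set M}
    [DecidablePred (· ∈ G)] (hG : MeasurableSet G) (n : ℕ) :
    ∑ y, μ.real ((fun x => (itin f Z n x, itin f (fun y => decide (y ∈ G)) n x)) ⁻¹' {y}) *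
      ((Finset.univ.filter fun i => y.2 i = false).card : ℝ) = n * μ.real Gᶜ := by
  classical
  have hV : FibMeas fun y => decide (y ∈ G) := by
    rintro (_ | _)
    · convert hG.compl using 1; ext x; simp
    · convert hG using 1; ext x; simp
  have hY := (hZ.itin hf.measurable n).prodMk (hV.itin hf.measurable n)
  set Y := fun x => (itin f Z n x, itin f (fun y => decide (y ∈ G)) n x) with hYdef
  have h1 : ∀ y : (Fin n → κ) × (Fin n → Bool),
      ((Finset.univ.filter fun i => y.2 i = false).card : ℝ) =
      ∑ i, if y.2 i = false then (1 : ℝ) else 0 := by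
    intro y; rw [Finset.sum_boole]
  simp_rw [h1, Finset.mul_sum]
  rw [Finset.sum_comm]
  have h2 : ∀ i : Fin n, ∑ y, μ.real (Y ⁻¹' {y}) * (if y.2 i = false then (1 : ℝ) else 0) =
      μ.real Gᶜ := by
    intro i
    simp_rw [mul_ite, mul_one, mul_zero]
    rw [← Finset.sum_filter, sum_real hY]
    rw [← (hf.iterate i).measureReal_preimage hG.compl.nullMeasurableSet]
    congr 1
    ext x
    simp [hYdef, itin]
  rw [Finset.sum_congr rfl fun i _ => h2 i]
  simp

/-- **Relative entropy bound.** If separated subsets of the fibres of the names of `Z` in `Λ` grow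
at an exponential rate no larger than `a`, then any `X` has an entropy rate exceeding that of `Z`
by no more than `a`. -/
lemma rate_le_rate_add {f : M → M} {μ : Measure M} [IsProbabilityMeasure μ]
    (hf : MeasurePreserving f μ μ) {Λ : Set M} (hΛ : μ Λᶜ = 0) {X : M → ι} {Z : M → κ}
    (hX : FibMeas X) (hZ : FibMeas Z) {a : ℝ}
    (hG : ∀ η : ℝ, 0 < η → ∀ ε : ℝ, 0 < ε → ∃ C : ℝ, 0 < C ∧ ∀ (n : ℕ) (E : Finset M), ↑E ⊆ Λ →
      IsDynSep f n ε ↑E → (∀ x ∈ E, ∀ y ∈ E, ∀ j ≤ n, Z (f^[j] x) = Z (f^[j] y)) →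
      (E.card : ℝ) ≤ C * Real.exp ((a + η) * n)) :
    rate f μ X ≤ rate f μ Z + a := by
  classical
  haveI : Nonempty M := nonempty_of_isProbabilityMeasure μ
  haveI : Nonempty ι := ⟨X (Classical.arbitrary M)⟩
  have hr : (0 : ℝ) < Fintype.card ι := by exact_mod_cast Fintype.card_pos
  refine le_of_forall_pos_le_add fun ξ hξ => ?_
  obtain ⟨θ, hθ, Hθ⟩ : ∃ θ : ℝ, 0 < θ ∧ ∀ p : ℝ, 0 ≤ p → p ≤ θ →
      Real.negMulLog (1 - p) + Real.negMulLog p + p * Real.log (Fintype.card ι) ≤ ξ / 2 := by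
    have hc : Continuous fun p : ℝ =>
        Real.negMulLog (1 - p) + Real.negMulLog p + p * Real.log (Fintype.card ι) := by
      have := Real.continuous_negMulLog
      fun_prop
    have h0 := hc.tendsto 0
    simp only [sub_zero, Real.negMulLog_one, Real.negMulLog_zero, zero_mul, add_zero] at h0
    obtain ⟨δ, hδ, H⟩ := Metric.eventually_nhds_iff.1
      (h0.eventually (Iic_mem_nhds (show (0 : ℝ) < ξ / 2 by positivity)))
    refine ⟨δ / 2, by positivity, fun p hp hpδ => H ?_⟩
    rw [Real.dist_eq, sub_zero, abs_of_nonneg hp]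
    linarith
  obtain ⟨G, ε, hGm, hε, hGθ, hGs⟩ := exists_inner_cells μ hX hθ
  obtain ⟨C, hC, HC⟩ := hG (ξ / 2) (by positivity) ε hε
  set V : M → Bool := fun y => decide (y ∈ G) with hVdef
  have hVf : V ⁻¹' {false} = Gᶜ := by ext x; simp [hVdef]
  have hVt : V ⁻¹' {true} = G := by ext x; simp [hVdef]
  have hV : FibMeas V := by
    rintro (_ | _)
    · rw [hVf]; exact hGm.compl
    · rw [hVt]; exact hGm
  set p := μ.real Gᶜ with hp
  have hVH : rate f μ V ≤ Real.negMulLog (1 - p) + Real.negMulLog p := by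
    have h1 := rate_mul_le (f := f) (μ := μ) (X := V) 1
    have h2 : mapH μ (itin f V 1) ≤ mapH μ V := mapH_mono hV (g := fun b _ => b) fun x => by
      funext i; simp [itin]
    have h3 : mapH μ V = Real.negMulLog (1 - p) + Real.negMulLog p := by
      unfold mapH vecH
      rw [Fintype.sum_bool]
      beta_reduce
      rw [hVf, hVt, hp, probReal_compl_eq_one_sub hGm]
      simp
    rw [Nat.cast_one, mul_one] at h1
    linarith
  have key : ∀ n : ℕ, 1 ≤ n → mapH μ (itin f X n) ≤
      (mapH μ (itin f Z n) + mapH μ (itin f V n) +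
        n * (p * Real.log (Fintype.card ι) + (a + ξ / 2))) + (Real.log C - (a + ξ / 2)) := by
    intro n hn
    obtain ⟨k, rfl⟩ : ∃ k, n = k + 1 := ⟨n - 1, by omega⟩
    have hY := (hZ.itin hf.measurable (k + 1)).prodMk (hV.itin hf.measurable (k + 1))
    set N := C * Real.exp ((a + ξ / 2) * k) with hN
    have hN0 : 0 < N := by positivity
    have h1 := mapH_le_cond (μ := μ) (hX.itin hf.measurable (k + 1)) hY
      (fun y => (Fintype.card ι : ℝ) ^ (Finset.univ.filter fun i => y.2 i = false).card * N)
      (fun y => by positivity) (fun y => card_names_le hΛ hN0.le hGs hε k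
        (fun E => HC k E) y.1 y.2)
    have h2 := mapH_prod_le (μ := μ) (hZ.itin hf.measurable (k + 1)) (hV.itin hf.measurable (k + 1))
    have h3 : ∀ y : (Fin (k + 1) → κ) × (Fin (k + 1) → Bool),
        Real.log ((Fintype.card ι : ℝ) ^ (Finset.univ.filter fun i => y.2 i = false).card * N) =
        ((Finset.univ.filter fun i => y.2 i = false).card : ℝ) * Real.log (Fintype.card ι) +
          (Real.log C + (a + ξ / 2) * k) := by
      intro y
      rw [Real.log_mul (by positivity) hN0.ne', Real.log_pow, hN,
        Real.log_mul hC.ne' (Real.exp_pos _).ne', Real.log_exp]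
    simp_rw [h3, mul_add, ← mul_assoc] at h1
    rw [Finset.sum_add_distrib, ← Finset.sum_mul, sum_visits hf hZ hGm,
      Finset.sum_add_distrib, ← Finset.sum_mul] at h1
    have h4 : ∑ y, μ.real ((fun x => (itin f Z (k + 1) x, itin f V (k + 1) x)) ⁻¹' {y}) = 1 := by
      rw [sum_real hY]; simp
    simp_rw [mul_assoc] at h1
    rw [← Finset.sum_mul, h4] at h1
    push_cast at h1 ⊢
    linarith
  have h5 := rate_le_of hX hf (a := rate f μ Z + rate f μ V +
    (p * Real.log (Fintype.card ι) + (a + ξ / 2))) ?_ key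
  · have := Hθ p measureReal_nonneg hGθ
    linarith
  · refine (((tendsto_rate hZ hf).add (tendsto_rate hV hf)).add_const _).congr' ?_
    filter_upwards [eventually_ge_atTop 1] with n hn
    have hn' : (n : ℝ) ≠ 0 := by positivity
    field_simp

end Relative

end EFlow

namespace EFlow

/-! ### Generators and weak limits -/

section Gen
variable {M : Type*} [MetricSpace M] [CompactSpace M] [MeasurableSpace M] [BorelSpace M]
variable {ι κ : Type*} [Fintype ι] [Fintype κ]

lemma flow_measurable (φ : Flow ℝ M) (t : ℝ) : Measurable (φ.toFun t) :=
  (φ.continuous_toFun t).measurable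

/-- The entropy rate with respect to a measure carried by `Λ` is at most the topological entropy
of `Λ`. -/
lemma rate_le_top {f : M → M} {μ : Measure M} [IsProbabilityMeasure μ]
    (hf : MeasurePreserving f μ μ) {Λ : Set M} (hΛ : μ Λᶜ = 0) {X : M → ι} (hX : FibMeas X)
    {c : ℝ} (hc : 0 ≤ c) (htop : topEntropyOn f Λ ≤ (c : EReal)) : rate f μ X ≤ c := by
  have hZ : FibMeas (fun _ : M => ()) := fun _ => by simp
  have h := rate_le_rate_add hf hΛ hX hZ (a := c) (fun η hη ε hε => by
    obtain ⟨C, hC, H⟩ := (topEntropyOn_le_iff hc).1 htop η hη ε hε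
    refine ⟨C, hC, fun n E hE hs _ => le_trans ?_ (H n)⟩
    exact_mod_cast card_le_sepCount hε hE hs)
  have h0 : rate f μ (fun _ : M => ()) ≤ 0 := by
    have h1 := rate_mul_le (f := f) (μ := μ) (X := fun _ : M => ()) 1
    have h2 := mapH_itin_le (μ := μ) hZ hf.measurable 1
    simp at h1 h2
    linarith
  linarith

lemma rate_le_of_small {φ : Flow ℝ M} (hexp : FlowExpansive φ) {ε₀ η₀ : ℝ}
    (hD : DriftConst φ ε₀ η₀) {μ : Measure M} [IsProbabilityMeasure μ]
    (hf : MeasurePreserving (φ.toFun 1) μ μ) {X : M → ι} (hX : FibMeas X) {Z : M → κ}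
    (hZ : FibMeas Z) (hs : ∀ x y, Z x = Z y → dist x y ≤ ε₀) :
    rate (φ.toFun 1) μ X ≤ rate (φ.toFun 1) μ Z := by
  have h := rate_le_rate_add hf (Λ := univ) (by simp) hX hZ (a := 0) (fun η hη ε hε => by
    obtain ⟨C, hC, H⟩ := bowen_ball_count hexp hD hε hη
    refine ⟨C, hC, fun n E _ hsep hE => ?_⟩
    rcases E.eq_empty_or_nonempty with rfl | ⟨w, hw⟩
    · simp; positivity
    · rw [zero_add]
      exact H n w E hsep fun z hz j hj => hs _ _ (hE z hz w hw j hj))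
  simpa using h

/-- A finite-valued map with fibres of diameter at most `ε₀` is a generator. -/
lemma measEntropy_eq_rate {φ : Flow ℝ M} (hexp : FlowExpansive φ) {ε₀ η₀ : ℝ}
    (hD : DriftConst φ ε₀ η₀) {μ : Measure M} [IsProbabilityMeasure μ]
    (hf : MeasurePreserving (φ.toFun 1) μ μ) {Z : M → κ}
    (hZ : FibMeas Z) (hs : ∀ x y, Z x = Z y → dist x y ≤ ε₀) :
    measEntropy (φ.toFun 1) μ = (rate (φ.toFun 1) μ Z : ℝ) := by
  haveI : Nonempty M := nonempty_of_isProbabilityMeasure μ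
  haveI : Nonempty κ := ⟨Z (Classical.arbitrary M)⟩
  exact le_antisymm
    (measEntropy_le hf fun P hP => rate_le_of_small hexp hD hf (fibMeas_cellMap P hP) hZ hs)
    (rate_le_measEntropy hf hZ)

/-- `X` is locally constant at `μ`-almost every point. -/
def AEC (μ : Measure M) (X : M → ι) : Prop := ∀ᵐ x ∂μ, ∀ᶠ y in 𝓝 x, X y = X x

lemma AEC.itin {f : M → M} {μ : Measure M} (hf : MeasurePreserving f μ μ) (hc : Continuous f)
    {X : M → ι} (hX : AEC μ X) (n : ℕ) : AEC μ (itin f X n) := by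
  have h : ∀ i : Fin n, ∀ᵐ x ∂μ, ∀ᶠ y in 𝓝 x, X (f^[i] y) = X (f^[i] x) := fun i => by
    filter_upwards [(hf.iterate i).quasiMeasurePreserving.ae hX] with x hx
    exact (hc.iterate i).continuousAt.eventually hx
  filter_upwards [ae_all_iff.2 h] with x hx
  filter_upwards [eventually_all.2 hx] with y hy
  funext i
  exact hy i

lemma AEC.frontier {μ : Measure M} {X : M → ι} (hX : AEC μ X) (s : Set ι) :
    μ (frontier (X ⁻¹' s)) = 0 := by
  refine measure_mono_null (t := {x | ¬ ∀ᶠ y in 𝓝 x, X y = X x}) (fun x hx h => ?_) (ae_iff.1 hX)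
  rw [frontier_eq_closure_inter_closure] at hx
  obtain ⟨y, hy, hy'⟩ := ((mem_closure_iff_frequently.1 hx.1).and_eventually h).exists
  obtain ⟨z, hz, hz'⟩ := ((mem_closure_iff_frequently.1 hx.2).and_eventually h).exists
  exact hz (by rw [mem_preimage, hz', ← hy']; exact hy)

lemma tendsto_mapH {J : Type*} {F : Filter J} {μs : J → ProbabilityMeasure M}
    {μ : ProbabilityMeasure M} (h : Tendsto μs F (𝓝 μ)) {X : M → ι} (hX : AEC (μ : Measure M) X) :
    Tendsto (fun j => mapH (μs j : Measure M) X) F (𝓝 (mapH (μ : Measure M) X)) := by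
  refine tendsto_finsetSum _ fun i _ => ?_
  refine (Real.continuous_negMulLog.tendsto _).comp ?_
  exact (ENNReal.tendsto_toReal (measure_ne_top _ _)).comp
    (ProbabilityMeasure.tendsto_measure_of_null_frontier_of_tendsto' h (hX.frontier _))

/-- Fine partitions into pieces with `μ`-null boundary. -/
lemma exists_null_cells (μ : Measure M) [IsFiniteMeasure μ] {ε : ℝ} (hε : 0 < ε) :
    ∃ (t : Finset M) (Z : M → (t → Bool)), FibMeas Z ∧ (∀ x y, Z x = Z y → dist x y ≤ ε) ∧
      AEC μ Z := by
  classical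
  have h : ∀ x : M, ∃ r ∈ Ioo 0 (ε / 2), μ (frontier (Metric.thickening r {x})) = 0 :=
    fun x => exists_null_frontier_thickening μ {x} (by positivity)
  choose r hr hr0 using h
  simp_rw [Metric.thickening_singleton] at hr0
  obtain ⟨t, ht⟩ := CompactSpace.elim_nhds_subcover (fun x => Metric.ball x (r x))
    fun x => Metric.ball_mem_nhds x (hr x).1
  refine ⟨t, fun x i => decide (x ∈ Metric.ball (i : M) (r i)), ?_, ?_, ?_⟩
  · intro w
    have : (fun (x : M) (i : t) => decide (x ∈ Metric.ball (i : M) (r i))) ⁻¹' {w} =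
        ⋂ i : t, {x | (x ∈ Metric.ball (i : M) (r i)) ↔ w i = true} := by
      ext x
      simp only [mem_preimage, mem_singleton_iff, funext_iff, mem_iInter, mem_setOf_eq]
      refine forall_congr' fun i => ?_
      cases w i <;> simp
    rw [this]
    refine MeasurableSet.iInter fun i => ?_
    exact measurableSet_eq_fun (f := fun x => x ∈ Metric.ball (i : M) (r i))
      (g := fun _ => w i = true) Metric.isOpen_ball.measurableSet.mem measurable_const |> fun h => by
        simpa only [eq_iff_iff] using h
  · intro x y hxy
    obtain ⟨i, hi, hx⟩ := mem_iUnion₂.1 (ht.symm ▸ mem_univ x : x ∈ ⋃ x ∈ t, Metric.ball x (r x))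
    have h1 := congrFun hxy ⟨i, hi⟩
    have hy : y ∈ Metric.ball i (r i) := by
      simp only [decide_eq_decide] at h1
      exact h1.1 hx
    have := (hr i).2
    rw [Metric.mem_ball] at hx hy
    linarith [dist_triangle_right x y i]
  · have h1 : ∀ i : t, ∀ᵐ x ∂μ, x ∉ frontier (Metric.ball (i : M) (r i)) := fun i => by
      rw [ae_iff]; simpa using hr0 i
    filter_upwards [ae_all_iff.2 h1] with x hx
    have h2 : ∀ i : t, ∀ᶠ y in 𝓝 x,
        decide (y ∈ Metric.ball (i : M) (r i)) = decide (x ∈ Metric.ball (i : M) (r i)) := by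
      intro i
      by_cases hxi : x ∈ Metric.ball (i : M) (r i)
      · filter_upwards [Metric.isOpen_ball.mem_nhds hxi] with y hy
        simp [hxi, hy]
      · have : x ∉ closure (Metric.ball (i : M) (r i)) := fun hcl =>
          hx i ⟨hcl, by rwa [Metric.isOpen_ball.interior_eq]⟩
        filter_upwards [isClosed_closure.isOpen_compl.mem_nhds this] with y hy
        have : y ∉ Metric.ball (i : M) (r i) := fun h => hy (subset_closure h)
        simp only [hxi, this]
    filter_upwards [eventually_all.2 h2] with y hy
    funext i
    exact hy i

/-- Upper semicontinuity of the entropy of the time-one map. -/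
lemma le_measEntropy_of_tendsto {φ : Flow ℝ M} (hexp : FlowExpansive φ) {ε₀ η₀ : ℝ}
    (hD : DriftConst φ ε₀ η₀) {J : Type*} {F : Filter J} [F.NeBot] {μs : J → ProbabilityMeasure M}
    {μ : ProbabilityMeasure M} (h : Tendsto μs F (𝓝 μ))
    (hfs : ∀ j, MeasurePreserving (φ.toFun 1) (μs j : Measure M) (μs j : Measure M))
    (hf : MeasurePreserving (φ.toFun 1) (μ : Measure M) (μ : Measure M)) {c : ℝ}
    (hc : ∀ j, (c : EReal) ≤ measEntropy (φ.toFun 1) (μs j : Measure M)) :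
    (c : EReal) ≤ measEntropy (φ.toFun 1) (μ : Measure M) := by
  classical
  obtain ⟨t, Z, hZ, hs, hA⟩ := exists_null_cells (μ : Measure M) hD.1
  rw [measEntropy_eq_rate hexp hD hf hZ hs, EReal.coe_le_coe_iff]
  refine le_rate fun n _ => ?_
  refine ge_of_tendsto (tendsto_mapH h (hA.itin hf (φ.continuous_toFun 1) n))
    (Eventually.of_forall fun j => le_trans ?_ (rate_mul_le n))
  have := hc j
  rw [measEntropy_eq_rate hexp hD (hfs j) hZ hs, EReal.coe_le_coe_iff] at this
  gcongr

end Gen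

end EFlow

namespace EFlow

/-! ### Invariant measures built from separated sets -/

section Mis
variable {M : Type*} [MetricSpace M] [CompactSpace M] [MeasurableSpace M] [BorelSpace M]
variable {ι : Type*} [Fintype ι]

/-- The uniform probability measure on a finite family of points. -/
noncomputable def avg {J : Type*} (s : Finset J) (p : J → M) : Measure M :=
  ∑ j ∈ s, (s.card : ℝ≥0∞)⁻¹ • Measure.dirac (p j)

lemma avg_prob {J : Type*} {s : Finset J} (hs : s.Nonempty) (p : J → M) :
    IsProbabilityMeasure (avg s p) := by
  refine ⟨?_⟩
  have h : (s.card : ℝ≥0∞) ≠ 0 := by exact_mod_cast hs.card_pos.ne'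
  simp [avg, ENNReal.mul_inv_cancel h]

lemma avg_null {J : Type*} {s : Finset J} {p : J → M} {A : Set M} (hA : MeasurableSet A)
    (h : ∀ j ∈ s, p j ∉ A) : avg s p A = 0 := by
  simp only [avg, Measure.coe_finsetSum, Measure.coe_smul, Finset.sum_apply, Pi.smul_apply,
    smul_eq_mul]
  refine Finset.sum_eq_zero fun j hj => ?_
  rw [Measure.dirac_apply' _ hA]
  simp [h j hj]

lemma integral_avg {J : Type*} (s : Finset J) (p : J → M) (g : M → ℝ) :
    ∫ x, g x ∂(avg s p) = (∑ j ∈ s, g (p j)) / s.card := by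
  unfold avg
  rcases s.eq_empty_or_nonempty with rfl | hs
  · simp
  have h : (s.card : ℝ≥0∞) ≠ 0 := by exact_mod_cast hs.card_pos.ne'
  rw [integral_finsetSum_measure]
  · simp_rw [integral_smul_measure, integral_dirac]
    rw [← Finset.smul_sum]
    simp [div_eq_inv_mul]
  · intro j _
    exact (integrable_dirac (by simp [enorm_lt_top])).smul_measure (ENNReal.inv_ne_top.2 h)

lemma avg_real {J : Type*} (s : Finset J) (p : J → M) {A : Set M} (hA : MeasurableSet A) :
    (avg s p).real A = (∑ j ∈ s, A.indicator 1 (p j)) / s.card := by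
  rw [← integral_avg s p (A.indicator 1), integral_indicator_one hA]

lemma avg_map {J : Type*} (s : Finset J) (p : J → M) {f : M → M} (hf : Measurable f) :
    (avg s p).map f = avg s (fun j => f (p j)) := by
  unfold avg
  rw [← Measure.mapₗ_apply_of_measurable hf, map_sum]
  simp_rw [Measure.mapₗ_apply_of_measurable hf, Measure.map_smul, Measure.map_dirac' hf]

/-- A partition into sets of measure at most `1 / N` has entropy at least `log N`. -/
lemma log_le_mapH {α : Type*} [MeasurableSpace α] {μ : Measure α} [IsProbabilityMeasure μ]
    {X : α → ι} (hX : FibMeas X) {N : ℝ} (hN : 0 < N) (h : ∀ i, μ.real (X ⁻¹' {i}) ≤ N⁻¹) :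
    Real.log N ≤ mapH μ X := by
  have h1 : ∑ i, μ.real (X ⁻¹' {i}) * Real.log N = Real.log N := by
    rw [← Finset.sum_mul, sum_real hX]; simp
  rw [← h1]
  refine Finset.sum_le_sum fun i _ => ?_
  beta_reduce
  rcases (measureReal_nonneg : 0 ≤ μ.real (X ⁻¹' {i})).eq_or_lt with h0 | h0
  · simp [← h0]
  · have h2 := Real.log_le_log h0 (h i)
    rw [Real.log_inv] at h2
    unfold Real.negMulLog
    nlinarith

/-- The block of length `N` is cut into blocks of length `m` in `m` different ways. -/
lemma tiling {σ : Measure M} [IsProbabilityMeasure σ] [Nonempty ι] {f : M → M} (hf : Measurable f)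
    {Z : M → ι} (hZ : FibMeas Z) (m N : ℕ) :
    m * mapH σ (itin f Z N) ≤ m * (m * Real.log (Fintype.card ι)) +
      ∑ q ∈ Finset.range N, mapH (σ.map f^[q]) (itin f Z m) := by
  have hlog : 0 ≤ Real.log (Fintype.card ι) := Real.log_natCast_nonneg _
  have key : ∑ i ∈ Finset.range m, mapH σ (itin f Z (N + i)) ≤
      m * (m * Real.log (Fintype.card ι)) +
        ∑ q ∈ Finset.range N, mapH (σ.map f^[q]) (itin f Z m) := by
    induction N with
    | zero =>
      simp only [Finset.range_zero, Finset.sum_empty, add_zero]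
      refine (Finset.sum_le_card_nsmul _ _ (m * Real.log (Fintype.card ι)) fun i hi => ?_).trans
        (by simp)
      have : (i : ℝ) ≤ m := by exact_mod_cast (Finset.mem_range.1 hi).le
      rw [zero_add]
      exact (mapH_itin_le (μ := σ) hZ hf i).trans (by gcongr)
    | succ N ih =>
      have h1 := Finset.sum_range_succ (fun i => mapH σ (itin f Z (N + i))) m
      rw [Finset.sum_range_succ'] at h1
      have h2 := mapH_itin_add (μ := σ) hZ hf N m
      rw [Finset.sum_range_succ]
      have h3 : ∑ i ∈ Finset.range m, mapH σ (itin f Z (N + 1 + i)) =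
          ∑ i ∈ Finset.range m, mapH σ (itin f Z (N + (i + 1))) :=
        Finset.sum_congr rfl fun i _ => by rw [show N + 1 + i = N + (i + 1) by ring]
      rw [add_zero] at h1
      linarith
  refine le_trans ?_ key
  have h4 := Finset.card_nsmul_le_sum (Finset.range m) (fun i => mapH σ (itin f Z (N + i)))
    (mapH σ (itin f Z N)) fun i _ => mapH_itin_mono hZ hf (Nat.le_add_right _ _)
  simpa using h4

/-- Jensen's inequality: the entropy of an average of measures is at least the average of the
entropies. -/
lemma mapH_concave {α : Type*} [MeasurableSpace α] {μ : Measure α} {X : α → ι} {N : ℕ} (hN : 0 < N)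
    {ν : ℕ → Measure α} (h : ∀ i, μ.real (X ⁻¹' {i}) =
      (∑ q ∈ Finset.range N, (ν q).real (X ⁻¹' {i})) / N) :
    ∑ q ∈ Finset.range N, mapH (ν q) X ≤ N * mapH μ X := by
  have hN' : (0 : ℝ) < N := by exact_mod_cast hN
  unfold mapH vecH
  rw [Finset.sum_comm, Finset.mul_sum]
  refine Finset.sum_le_sum fun i _ => ?_
  beta_reduce
  have h1 := Real.concaveOn_negMulLog.le_map_sum (t := Finset.range N) (w := fun _ => (N : ℝ)⁻¹)
    (p := fun q => (ν q).real (X ⁻¹' {i})) (fun _ _ => by positivity)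
    (by simp [hN'.ne']) (fun _ _ => measureReal_nonneg)
  simp only [smul_eq_mul, ← Finset.mul_sum] at h1
  rw [h i, div_eq_inv_mul]
  rwa [inv_mul_le_iff₀ hN'] at h1

/-- Averages along the orbits of a maximal separated set have large block entropy. -/
lemma mapH_avg_ge {f : M → M} (hf : Measurable f) [Nonempty ι] {Z : M → ι} (hZ : FibMeas Z)
    {ε : ℝ} (hs : ∀ x y, Z x = Z y → dist x y ≤ ε) {n : ℕ} {E : Finset M} (hE : E.Nonempty)
    (hsep : IsDynSep f n ε ↑E) (m : ℕ) :
    m * Real.log E.card - m * (m * Real.log (Fintype.card ι)) ≤ ((n + 1 : ℕ) : ℝ) *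
      mapH (avg (Finset.range (n + 1) ×ˢ E) fun p => f^[p.1] p.2) (itin f Z m) := by
  classical
  have hEc : (0 : ℝ) < E.card := by exact_mod_cast hE.card_pos
  haveI := avg_prob hE (fun x => x)
  have h1 := tiling (σ := avg E (fun x => x)) hf hZ m (n + 1)
  have h2 : Real.log E.card ≤ mapH (avg E (fun x => x)) (itin f Z (n + 1)) := by
    refine log_le_mapH (hZ.itin hf _) hEc fun w => ?_
    rw [avg_real _ _ (hZ.itin hf _ w), ← one_div]
    gcongr
    have h3 : ∀ x : M, (itin f Z (n + 1) ⁻¹' {w}).indicator (1 : M → ℝ) x =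
        if itin f Z (n + 1) x = w then 1 else 0 := fun x => by
      simp [indicator_apply]
    simp_rw [h3]
    rw [Finset.sum_boole]
    have : (E.filter fun x => itin f Z (n + 1) x = w).card ≤ 1 := by
      rw [Finset.card_le_one]
      intro x hx y hy
      rw [Finset.mem_filter] at hx hy
      by_contra hne
      obtain ⟨j, hj, hd⟩ := hsep hx.1 hy.1 hne
      have h4 := congrFun (hx.2.trans hy.2.symm) ⟨j, by omega⟩
      exact absurd (hs _ _ h4) (not_le.2 hd)
    exact_mod_cast this
  have h5 := mapH_concave (μ := avg (Finset.range (n + 1) ×ˢ E) fun p => f^[p.1] p.2)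
    (X := itin f Z m) (Nat.succ_pos n) (ν := fun q => (avg E (fun x => x)).map f^[q]) (fun w => by
      rw [avg_real _ _ (hZ.itin hf _ w), Finset.sum_product]
      simp_rw [avg_map E (fun x => x) (hf.iterate _), avg_real E _ (hZ.itin hf _ w)]
      rw [← Finset.sum_div, div_div, Finset.card_product, Finset.card_range]
      push_cast
      rw [mul_comm (E.card : ℝ)])
  have hm : (0 : ℝ) ≤ m := by positivity
  have h6 := mul_le_mul_of_nonneg_left h2 hm
  linarith

lemma exists_large_sep {φ : Flow ℝ M} (hexp : FlowExpansive φ) {ε₀ η₀ : ℝ}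
    (hD : DriftConst φ ε₀ η₀) {Λ : Set M} (hne : Λ.Nonempty) {c : ℝ}
    (htop : (c : EReal) ≤ topEntropyOn (φ.toFun 1) Λ) (k : ℕ) :
    ∃ n : ℕ, k ≤ n ∧
      Real.exp ((c - 1 / ((k : ℝ) + 1)) * n) ≤ sepCount (φ.toFun 1) Λ n ε₀ := by
  by_contra hcon
  push Not at hcon
  set a := c - 1 / ((k : ℝ) + 1) with ha
  have hk : 0 < 1 / ((k : ℝ) + 1) := by positivity
  rcases le_or_gt 0 a with h0 | h0
  · have h1 := topEntropyOn_le_of_scale hexp hD (K := Λ) h0 (fun κ hκ => by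
      refine ⟨1 + ∑ i ∈ Finset.range k, (sepCount (φ.toFun 1) Λ i ε₀ : ℝ), by positivity,
        fun n => ?_⟩
      have hS : 0 ≤ ∑ i ∈ Finset.range k, (sepCount (φ.toFun 1) Λ i ε₀ : ℝ) := by positivity
      rcases lt_or_ge n k with hn | hn
      · have h2 := Finset.single_le_sum (f := fun i => (sepCount (φ.toFun 1) Λ i ε₀ : ℝ))
          (fun i _ => by positivity) (Finset.mem_range.2 hn)
        have h3 : 1 ≤ Real.exp ((a + κ) * n) := Real.one_le_exp (by positivity)
        beta_reduce at h2
        nlinarith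
      · have h2 := hcon n hn
        have h3 : Real.exp (a * n) ≤ Real.exp ((a + κ) * n) := by gcongr; linarith
        have h4 := Real.exp_pos ((a + κ) * n)
        nlinarith)
    have h2 := htop.trans h1
    rw [EReal.coe_le_coe_iff] at h2
    linarith
  · obtain ⟨x, hx⟩ := hne
    have h1 := hcon k le_rfl
    have h2 := card_le_sepCount (f := φ.toFun 1) (K := Λ) (n := k) hD.1 (Q := {x})
      (by simpa using hx) (by simp [IsDynSep])
    have h3 : Real.exp (a * k) ≤ 1 := Real.exp_le_one_iff.2
      (mul_nonpos_of_nonpos_of_nonneg h0.le (by positivity))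
    have h4 : (1 : ℝ) ≤ sepCount (φ.toFun 1) Λ k ε₀ := by exact_mod_cast (by simpa using h2)
    linarith

lemma measurePreserving_of_integral {f : M → M} (hf : Continuous f) {μ : Measure M}
    [IsProbabilityMeasure μ]
    (h : ∀ g : BoundedContinuousFunction M ℝ, ∫ x, g (f x) ∂μ = ∫ x, g x ∂μ) :
    MeasurePreserving f μ μ := by
  haveI := Measure.isProbabilityMeasure_map (μ := μ) hf.measurable.aemeasurable
  refine ⟨hf.measurable, ext_of_forall_integral_eq_of_IsFiniteMeasure fun g => ?_⟩
  rw [integral_map hf.measurable.aemeasurable g.continuous.aestronglyMeasurable, h g]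

lemma null_of_tendsto {J : Type*} {F : Filter J} [F.NeBot] {μs : J → ProbabilityMeasure M}
    {μ : ProbabilityMeasure M} (h : Tendsto μs F (𝓝 μ)) {Λ : Set M} (hΛ : IsClosed Λ)
    (h0 : ∀ j, (μs j : Measure M) Λᶜ = 0) : (μ : Measure M) Λᶜ = 0 := by
  have h1 := ProbabilityMeasure.le_liminf_measure_open_of_tendsto h hΛ.isOpen_compl
  simp_rw [h0] at h1
  simpa using h1

/-- A compact invariant set carries an invariant measure of full entropy. -/
lemma exists_inv_measure {φ : Flow ℝ M} (hexp : FlowExpansive φ) {ε₀ η₀ : ℝ}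
    (hD : DriftConst φ ε₀ η₀) {Λ : Set M} (hcl : IsClosed Λ) (hne : Λ.Nonempty)
    (hinv : MapsTo (φ.toFun 1) Λ Λ) {c : ℝ}
    (htop : (c : EReal) ≤ topEntropyOn (φ.toFun 1) Λ) :
    ∃ μ : ProbabilityMeasure M, MeasurePreserving (φ.toFun 1) (μ : Measure M) (μ : Measure M) ∧
      (μ : Measure M) Λᶜ = 0 ∧ (c : EReal) ≤ measEntropy (φ.toFun 1) (μ : Measure M) := by
  classical
  set f := φ.toFun 1 with hfdef
  have hfc : Continuous f := φ.continuous_toFun 1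
  choose n hkn hn using exists_large_sep hexp hD hne htop
  choose E hEΛ hEsep hEcard _ using fun k => exists_max_sep f Λ (n k) hD.1
  have hEpos : ∀ k, (0 : ℝ) < (E k).card := fun k => by
    rw [hEcard]; exact (Real.exp_pos _).trans_le (hn k)
  have hEne : ∀ k, (E k).Nonempty := fun k => Finset.card_pos.1 (by exact_mod_cast hEpos k)
  have hPne : ∀ k, (Finset.range (n k + 1) ×ˢ E k).Nonempty := fun k =>
    Finset.Nonempty.product (by simp) (hEne k)
  set μs : ℕ → ProbabilityMeasure M := fun k =>
    ⟨avg (Finset.range (n k + 1) ×ˢ E k) fun p => f^[p.1] p.2, avg_prob (hPne k) _⟩ with hμs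
  have hU : (hyperfilter ℕ : Filter ℕ) ≤ atTop := by
    rw [← Nat.cofinite_eq_atTop]; exact hyperfilter_le_cofinite
  haveI : Nonempty (ProbabilityMeasure M) := ⟨μs 0⟩
  set μ := (Ultrafilter.map μs (hyperfilter ℕ)).lim with hμ
  have hlim : Tendsto μs (hyperfilter ℕ : Filter ℕ) (𝓝 μ) :=
    (Ultrafilter.map μs (hyperfilter ℕ)).le_nhds_lim
  have hNtop : Tendsto (fun k => ((n k + 1 : ℕ) : ℝ)) atTop atTop := by
    refine tendsto_natCast_atTop_atTop.comp (tendsto_atTop_mono (fun k => ?_) tendsto_id)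
    exact (hkn k).trans (Nat.le_succ _)
  have hNinv : Tendsto (fun k => 1 / ((n k + 1 : ℕ) : ℝ)) atTop (𝓝 0) :=
    tendsto_const_nhds.div_atTop hNtop
  have hmp : MeasurePreserving f (μ : Measure M) (μ : Measure M) := by
    refine measurePreserving_of_integral hfc fun g => ?_
    have hconv := ProbabilityMeasure.tendsto_iff_forall_integral_tendsto.1 hlim
    have h1 := (hconv (g.compContinuous ⟨f, hfc⟩)).sub (hconv g)
    have h2 : Tendsto (fun k => ∫ x, (g.compContinuous ⟨f, hfc⟩) x ∂(μs k : Measure M) -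
        ∫ x, g x ∂(μs k : Measure M)) (hyperfilter ℕ : Filter ℕ) (𝓝 0) := by
      refine Tendsto.mono_left ?_ hU
      refine squeeze_zero_norm (a := fun k => 2 * ‖g‖ * (1 / ((n k + 1 : ℕ) : ℝ))) (fun k => ?_) ?_
      · simp only [hμs, ProbabilityMeasure.coe_mk]
        rw [integral_avg, integral_avg, ← sub_div, ← Finset.sum_sub_distrib, Finset.sum_product_right]
        have h3 : ∀ x : M, ∑ q ∈ Finset.range (n k + 1),
            ((g.compContinuous ⟨f, hfc⟩) (f^[q] x) - g (f^[q] x)) = g (f^[n k + 1] x) - g x := by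
          intro x
          refine Eq.trans ?_ (Finset.sum_range_sub (fun q => g (f^[q] x)) (n k + 1))
          refine Finset.sum_congr rfl fun q _ => ?_
          rw [Function.iterate_succ_apply']
          rfl
        simp_rw [h3]
        rw [norm_div, Finset.card_product, Finset.card_range]
        have h4 : ‖∑ x ∈ E k, (g (f^[n k + 1] x) - g x)‖ ≤ (E k).card * (2 * ‖g‖) := by
          refine (norm_sum_le_of_le _ (n := fun _ => 2 * ‖g‖) fun x _ => ?_).trans (by simp)
          rw [← dist_eq_norm]
          exact g.dist_le_two_norm _ _
        have h5 := hEpos k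
        have h6 : (0 : ℝ) < ((n k + 1 : ℕ) : ℝ) := by positivity
        rw [div_le_iff₀ (by simp; positivity)]
        refine h4.trans (le_of_eq ?_)
        rw [Real.norm_of_nonneg (by positivity)]
        push_cast at h6 ⊢
        field_simp
      · simpa using hNinv.const_mul (2 * ‖g‖)
    have h3 := tendsto_nhds_unique h1 h2
    exact sub_eq_zero.1 h3
  refine ⟨μ, hmp, null_of_tendsto hlim hcl fun k => ?_, ?_⟩
  · refine avg_null hcl.isOpen_compl.measurableSet fun p hp => ?_
    rw [Finset.mem_product] at hp
    exact not_not_intro (hinv.iterate p.1 (hEΛ k hp.2))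
  obtain ⟨t, Z, hZ, hs, hA⟩ := exists_null_cells (μ : Measure M) hD.1
  rw [measEntropy_eq_rate hexp hD hmp hZ hs, EReal.coe_le_coe_iff]
  refine le_rate fun m _ => ?_
  set r := Real.log (Fintype.card (t → Bool))
  have hl : Tendsto (fun k : ℕ => m * ((c - 1 / ((k : ℝ) + 1)) * (1 - 1 / ((n k + 1 : ℕ) : ℝ))) -
      m * (m * r) * (1 / ((n k + 1 : ℕ) : ℝ))) (hyperfilter ℕ : Filter ℕ) (𝓝 (c * m)) := by
    have h1 := (((tendsto_const_nhds (x := c)).sub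
      (tendsto_one_div_add_atTop_nhds_zero_nat (𝕜 := ℝ))).mul
      ((tendsto_const_nhds (x := (1 : ℝ))).sub hNinv)).const_mul (m : ℝ) |>.sub
      (hNinv.const_mul (m * (m * r)))
    have h2 : (m : ℝ) * ((c - 0) * (1 - 0)) - m * (m * r) * 0 = c * m := by ring
    rw [h2] at h1
    exact h1.mono_left hU
  refine le_of_tendsto_of_tendsto' hl (tendsto_mapH hlim (hA.itin hmp hfc m)) fun k => ?_
  have h1 := mapH_avg_ge hfc.measurable hZ hs (hEne k) (hEsep k) m
  have h2 : (c - 1 / ((k : ℝ) + 1)) * n k ≤ Real.log (E k).card := by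
    rw [Real.le_log_iff_exp_le (hEpos k), hEcard]
    exact hn k
  have h6 : (0 : ℝ) < ((n k + 1 : ℕ) : ℝ) := by positivity
  have h7 : (m : ℝ) * ((c - 1 / ((k : ℝ) + 1)) * n k) ≤ m * Real.log (E k).card := by gcongr
  have h8 : m * ((c - 1 / ((k : ℝ) + 1)) * (1 - 1 / ((n k + 1 : ℕ) : ℝ))) -
      m * (m * r) * (1 / ((n k + 1 : ℕ) : ℝ)) =
      (m * ((c - 1 / ((k : ℝ) + 1)) * n k) - m * (m * r)) / ((n k + 1 : ℕ) : ℝ) := by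
    push_cast at h6 ⊢
    field_simp
    ring
  rw [h8, div_le_iff₀ h6, mul_comm (mapH _ _)]
  exact le_trans (by linarith) h1

end Mis

end EFlow

namespace EFlow

/-! ### Flow-invariant measures of prescribed entropy -/

section Avg
variable {M : Type*} [MetricSpace M] [CompactSpace M] [MeasurableSpace M] [BorelSpace M]

/-- The average over `s ∈ (0, 1]` of the images of `μ` under the time-`s` maps. -/
noncomputable def flowAvg (φ : Flow ℝ M) (μ : Measure M) : Measure M :=
  (((volume : Measure ℝ).restrict (Ioc 0 1)).prod μ).map fun p => φ.toFun p.1 p.2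

lemma measurable_flow (φ : Flow ℝ M) : Measurable fun p : ℝ × M => φ.toFun p.1 p.2 :=
  φ.cont'.measurable

instance isProb_Ioc : IsProbabilityMeasure ((volume : Measure ℝ).restrict (Ioc 0 1)) :=
  ⟨by simp⟩

lemma flowAvg_prob (φ : Flow ℝ M) (μ : Measure M) [IsProbabilityMeasure μ] :
    IsProbabilityMeasure (flowAvg φ μ) :=
  Measure.isProbabilityMeasure_map (measurable_flow φ).aemeasurable

lemma measurable_fibre (φ : Flow ℝ M) (μ : Measure M) [IsProbabilityMeasure μ] {A : Set M}
    (hA : MeasurableSet A) : Measurable fun s : ℝ => μ.real (φ.toFun s ⁻¹' A) :=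
  (measurable_measure_prodMk_left (ν := μ) (measurable_flow φ hA)).ennreal_toReal

lemma flowAvg_real (φ : Flow ℝ M) (μ : Measure M) [IsProbabilityMeasure μ] {A : Set M}
    (hA : MeasurableSet A) :
    (flowAvg φ μ).real A = ∫ s in Ioc (0 : ℝ) 1, μ.real (φ.toFun s ⁻¹' A) := by
  unfold flowAvg Measure.real
  rw [Measure.map_apply (measurable_flow φ) hA, Measure.prod_apply (measurable_flow φ hA)]
  exact (integral_toReal
    (measurable_measure_prodMk_left (ν := μ) (measurable_flow φ hA)).aemeasurable
    (Eventually.of_forall fun s => measure_lt_top _ _)).symm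

lemma preimage_flow (φ : Flow ℝ M) (s t : ℝ) (A : Set M) :
    φ.toFun s ⁻¹' (φ.toFun t ⁻¹' A) = φ.toFun (s + t) ⁻¹' A := by
  ext x
  simp only [mem_preimage]
  rw [add_comm s t]
  exact iff_of_eq (congrArg (· ∈ A) (φ.map_add t s x).symm)

lemma flowAvg_inv (φ : Flow ℝ M) {μ : Measure M} [IsProbabilityMeasure μ]
    (hf : MeasurePreserving (φ.toFun 1) μ μ) : FlowInvariant φ (flowAvg φ μ) := by
  intro t
  haveI := flowAvg_prob φ μ
  refine ⟨flow_measurable φ t, Measure.ext fun A hA => ?_⟩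
  rw [Measure.map_apply (flow_measurable φ t) hA]
  refine (ENNReal.toReal_eq_toReal_iff' (measure_ne_top _ _) (measure_ne_top _ _)).1 ?_
  change (flowAvg φ μ).real _ = (flowAvg φ μ).real _
  rw [flowAvg_real φ μ hA, flowAvg_real φ μ (flow_measurable φ t hA)]
  simp_rw [preimage_flow]
  rw [← intervalIntegral.integral_of_le zero_le_one, ← intervalIntegral.integral_of_le zero_le_one,
    intervalIntegral.integral_comp_add_right (fun s => μ.real (φ.toFun s ⁻¹' A))]
  have hper : Function.Periodic (fun s => μ.real (φ.toFun s ⁻¹' A)) (1 : ℝ) := fun s => by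
    beta_reduce
    rw [add_comm s 1, ← preimage_flow, measureReal_def, measureReal_def,
      hf.measure_preimage (flow_measurable φ s hA).nullMeasurableSet]
  have h := hper.intervalIntegral_add_eq (0 + t) 0
  rw [zero_add (1 : ℝ)] at h
  rw [← h]
  congr 1
  ring

lemma flowAvg_null (φ : Flow ℝ M) {μ : Measure M} [IsProbabilityMeasure μ] {Λ : Set M}
    (hcl : IsClosed Λ) (hΛ : ∀ t, φ.toFun t '' Λ = Λ) (h0 : μ Λᶜ = 0) :
    flowAvg φ μ Λᶜ = 0 := by
  have hm : MeasurableSet Λᶜ := hcl.isOpen_compl.measurableSet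
  haveI := flowAvg_prob φ μ
  rw [← measureReal_eq_zero_iff, flowAvg_real φ μ hm]
  refine integral_eq_zero_of_ae (Eventually.of_forall fun s => ?_)
  refine (measureReal_eq_zero_iff).2 (measure_mono_null (t := Λᶜ)
    (fun x hx hxΛ => hx ?_) h0)
  rw [← hΛ s]
  exact mem_image_of_mem _ hxΛ

/-- Jensen's inequality for the average of a measure along the flow. -/
lemma flowAvg_mapH (φ : Flow ℝ M) {μ : Measure M} [IsProbabilityMeasure μ] {ι : Type*} [Fintype ι]
    {W : M → ι} (hW : FibMeas W) {a : ℝ}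
    (h : ∀ s ∈ Ioc (0 : ℝ) 1, a ≤ mapH μ fun x => W (φ.toFun s x)) :
    a ≤ mapH (flowAvg φ μ) W := by
  obtain ⟨C, hC⟩ := (isCompact_Icc (a := (0 : ℝ)) (b := 1)).exists_bound_of_continuousOn
    Real.continuous_negMulLog.continuousOn
  have hmeas : ∀ i, Measurable fun s : ℝ => μ.real (φ.toFun s ⁻¹' (W ⁻¹' {i})) := fun i =>
    measurable_fibre φ μ (hW i)
  have hI1 : ∀ i, Integrable (fun s : ℝ => μ.real (φ.toFun s ⁻¹' (W ⁻¹' {i})))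
      (volume.restrict (Ioc 0 1)) := fun i =>
    Integrable.of_bound (hmeas i).aestronglyMeasurable 1 (Eventually.of_forall fun s => by
      rw [Real.norm_of_nonneg measureReal_nonneg]; exact measureReal_le_one)
  have hI2 : ∀ i, Integrable (fun s : ℝ => Real.negMulLog (μ.real (φ.toFun s ⁻¹' (W ⁻¹' {i}))))
      (volume.restrict (Ioc 0 1)) := fun i =>
    Integrable.of_bound (Real.continuous_negMulLog.measurable.comp (hmeas i)).aestronglyMeasurable C
      (Eventually.of_forall fun s => hC _ ⟨measureReal_nonneg, measureReal_le_one⟩)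
  have h1 : ∑ i, ∫ s in Ioc (0 : ℝ) 1, Real.negMulLog (μ.real (φ.toFun s ⁻¹' (W ⁻¹' {i}))) ≤
      mapH (flowAvg φ μ) W := by
    refine Finset.sum_le_sum fun i _ => ?_
    beta_reduce
    rw [flowAvg_real φ μ (hW i)]
    exact Real.concaveOn_negMulLog.le_map_integral Real.continuous_negMulLog.continuousOn isClosed_Ici
      (Eventually.of_forall fun s => measureReal_nonneg) (hI1 i) (hI2 i)
  refine le_trans ?_ h1
  rw [← integral_finsetSum _ fun i _ => hI2 i]
  have h2 : a = ∫ _ in Ioc (0 : ℝ) 1, a := by simp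
  rw [h2]
  exact setIntegral_mono_on (integrable_const _) (integrable_finsetSum _ fun i _ => hI2 i)
    measurableSet_Ioc h

lemma flowAvg_entropy {φ : Flow ℝ M} (hexp : FlowExpansive φ) {ε₀ η₀ : ℝ}
    (hD : DriftConst φ ε₀ η₀) {μ : Measure M} [IsProbabilityMeasure μ]
    (hf : MeasurePreserving (φ.toFun 1) μ μ) {c : ℝ}
    (hc : (c : EReal) ≤ measEntropy (φ.toFun 1) μ) :
    (c : EReal) ≤ measEntropy (φ.toFun 1) (flowAvg φ μ) := by
  classical
  haveI := flowAvg_prob φ μ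
  obtain ⟨δ, hδ, H⟩ := flow_unif φ 1 hD.1
  obtain ⟨t, Z, hZ, hs, -⟩ := exists_null_cells μ (lt_min hδ hD.1)
  rw [measEntropy_eq_rate hexp hD (flowAvg_inv φ hf 1) hZ
    fun x y h => (hs x y h).trans (min_le_right _ _), EReal.coe_le_coe_iff]
  refine le_rate fun m _ => flowAvg_mapH φ (hZ.itin (flow_measurable φ 1) m) fun s hs' => ?_
  have hZs : FibMeas fun x => Z (φ.toFun s x) := hZ.comp_right (flow_measurable φ s)
  -- the fibres of `Z ∘ φ_s` are small as well, so this map is again a generator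
  have hsmall : ∀ x y, Z (φ.toFun s x) = Z (φ.toFun s y) → dist x y ≤ ε₀ := fun x y hxy => by
    have h1 := H (-s) (-s) (φ.toFun s x) (φ.toFun s y)
      (by rw [abs_neg, abs_of_pos hs'.1]; exact hs'.2)
      (by rw [abs_neg, abs_of_pos hs'.1]; exact hs'.2) (by simpa using hδ.le)
      ((hs _ _ hxy).trans (min_le_left _ _))
    have h2 : ∀ z, φ (-s) (φ.toFun s z) = z := fun z => by
      have h3 := φ.map_add (-s) s z
      rw [neg_add_cancel, φ.map_zero_apply] at h3
      exact h3.symm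
    rwa [h2, h2] at h1
  rw [measEntropy_eq_rate hexp hD hf hZs hsmall, EReal.coe_le_coe_iff] at hc
  have h4 : (fun x => itin (φ.toFun 1) Z m (φ.toFun s x)) =
      itin (φ.toFun 1) (fun x => Z (φ.toFun s x)) m := by
    funext x i
    simp only [itin]
    rw [iterate_flow, iterate_flow]
    congr 1
    have h5 := φ.map_add (i : ℝ) s x
    have h6 := φ.map_add s (i : ℝ) x
    rw [add_comm] at h5
    exact h5.symm.trans h6
  rw [h4]
  exact le_trans (by gcongr) (rate_mul_le m)

/-- The flow-invariant probability measures carried by `Λ` of entropy at least `c`. -/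
def bigMeas (φ : Flow ℝ M) (Λ : Set M) (c : ℝ) : Set (ProbabilityMeasure M) :=
  {ν | FlowInvariant φ (ν : Measure M) ∧ (ν : Measure M) Λᶜ = 0 ∧
    (c : EReal) ≤ measEntropy (φ.toFun 1) (ν : Measure M)}

lemma bigMeas_closed {φ : Flow ℝ M} (hexp : FlowExpansive φ) {ε₀ η₀ : ℝ}
    (hD : DriftConst φ ε₀ η₀) {Λ : Set M} (hcl : IsClosed Λ) (c : ℝ) :
    IsClosed (bigMeas φ Λ c) := by
  refine isClosed_of_closure_subset fun ν hν => ?_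
  rw [mem_closure_iff_comap_neBot] at hν
  have hlim : Tendsto ((↑) : bigMeas φ Λ c → ProbabilityMeasure M)
    (comap (↑) (𝓝 ν)) (𝓝 ν) := tendsto_comap
  have hinv : FlowInvariant φ (ν : Measure M) := fun t => by
    refine measurePreserving_of_integral (φ.continuous_toFun t) fun g => ?_
    have hconv := ProbabilityMeasure.tendsto_iff_forall_integral_tendsto.1 hlim
    refine tendsto_nhds_unique (hconv (g.compContinuous ⟨_, φ.continuous_toFun t⟩))
      ((hconv g).congr fun j => ?_)
    have hj := j.2.1 t
    conv_lhs => rw [← hj.map_eq]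
    rw [integral_map hj.measurable.aemeasurable g.continuous.aestronglyMeasurable]
    rfl
  exact ⟨hinv, null_of_tendsto hlim hcl fun j => j.2.2.1,
    le_measEntropy_of_tendsto hexp hD hlim (fun j => j.2.1 1) (hinv 1) fun j => j.2.2.2⟩

lemma bigMeas_nonempty {φ : Flow ℝ M} (hexp : FlowExpansive φ) {ε₀ η₀ : ℝ}
    (hD : DriftConst φ ε₀ η₀) {Λ : Set M} (hcl : IsClosed Λ) (hne : Λ.Nonempty)
    (hinv : ∀ t, φ.toFun t '' Λ = Λ) {c : ℝ}
    (htop : (c : EReal) ≤ topEntropyOn (φ.toFun 1) Λ) : (bigMeas φ Λ c).Nonempty := by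
  obtain ⟨μ, h1, h2, h3⟩ := exists_inv_measure hexp hD hcl hne
    (fun x hx => by rw [← hinv 1]; exact mem_image_of_mem _ hx) htop
  exact ⟨⟨flowAvg φ μ, flowAvg_prob φ μ⟩, flowAvg_inv φ h1, flowAvg_null φ hcl hinv h2,
    flowAvg_entropy hexp hD h1 h3⟩

/-- Conditioning on an invariant set preserves invariance of the measure. -/
lemma cond_inv {φ : Flow ℝ M} {μ : Measure M} (hμ : FlowInvariant φ μ)
    {s : Set M} (hs : MeasurableSet s) (hinv : ∀ t, φ.toFun t ⁻¹' s = s) :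
    FlowInvariant φ (ProbabilityTheory.cond μ s) := by
  intro t
  have h := (hμ t).restrict_preimage hs
  rw [hinv t] at h
  exact h.smul_measure _

/-- An extreme point of the compact set `bigMeas φ Λ c` is ergodic, provided the topological entropy
of `Λ` is `c`. -/
lemma exists_ergodic {φ : Flow ℝ M} (hexp : FlowExpansive φ) {Λ : Set M} (hcl : IsClosed Λ)
    (hne : Λ.Nonempty) (hinv : ∀ t, φ.toFun t '' Λ = Λ) {c : ℝ} (hc : 0 ≤ c)
    (htop : topEntropyOn (φ.toFun 1) Λ = (c : EReal)) :
    ∃ μ : Measure M, IsProbabilityMeasure μ ∧ FlowErgodic φ μ ∧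
      measEntropy (φ.toFun 1) μ = (c : EReal) := by
  classical
  obtain ⟨ε₀, η₀, hD⟩ := exists_driftConst hexp
  set L : ProbabilityMeasure M → (BoundedContinuousFunction M ℝ → ℝ) :=
    fun ν g => ∫ x, g x ∂(ν : Measure M) with hL
  have hLc : Continuous L := continuous_pi fun g => continuous_iff_continuousAt.2 fun ν =>
    ProbabilityMeasure.tendsto_iff_forall_integral_tendsto.1 tendsto_id g
  have hK : IsCompact (L '' bigMeas φ Λ c) :=
    (bigMeas_closed hexp hD hcl c).isCompact.image hLc
  obtain ⟨x, hx⟩ := hK.extremePoints_nonempty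
    ((bigMeas_nonempty hexp hD hcl hne hinv htop.ge).image L)
  rw [mem_extremePoints] at hx
  obtain ⟨⟨ν, ⟨hν, hν0, hνc⟩, rfl⟩, hext⟩ := hx
  refine ⟨ν, inferInstance, ⟨hν, fun s hs hsi => ?_⟩, le_antisymm
    (measEntropy_le (hν 1) fun P hP =>
      rate_le_top (hν 1) hν0 (fibMeas_cellMap P hP) hc htop.le) hνc⟩
  by_contra hcon
  push Not at hcon
  obtain ⟨hs0, hs1⟩ := hcon
  have hsc0 : (ν : Measure M) sᶜ ≠ 0 := fun h => hs1 ((prob_compl_eq_zero_iff hs).1 h)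
  haveI hp1 : IsProbabilityMeasure (ProbabilityTheory.cond (ν : Measure M) s) :=
    ProbabilityTheory.cond_isProbabilityMeasure hs0
  haveI hp2 : IsProbabilityMeasure (ProbabilityTheory.cond (ν : Measure M) sᶜ) :=
    ProbabilityTheory.cond_isProbabilityMeasure hsc0
  have hi1 := cond_inv hν hs hsi
  have hi2 := cond_inv hν hs.compl (fun t => by rw [preimage_compl, hsi t])
  have hn1 : ProbabilityTheory.cond (ν : Measure M) s Λᶜ = 0 :=
    ProbabilityTheory.cond_absolutelyContinuous hν0
  have hn2 : ProbabilityTheory.cond (ν : Measure M) sᶜ Λᶜ = 0 :=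
    ProbabilityTheory.cond_absolutelyContinuous hν0
  set a := (ν : Measure M).real s with ha
  set b := (ν : Measure M).real sᶜ with hb
  have ha0 : 0 < a := ENNReal.toReal_pos hs0 (measure_ne_top _ _)
  have hb0 : 0 < b := ENNReal.toReal_pos hsc0 (measure_ne_top _ _)
  have hab : a + b = 1 := by
    rw [hb, probReal_compl_eq_one_sub hs]; ring
  have hmix : ∀ A, MeasurableSet A → (ν : Measure M).real A =
      a * (ProbabilityTheory.cond (ν : Measure M) s).real A +
      b * (ProbabilityTheory.cond (ν : Measure M) sᶜ).real A := fun A hA => by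
    have hcr : ∀ u : Set M, MeasurableSet u → (ProbabilityTheory.cond (ν : Measure M) u).real A =
        ((ν : Measure M).real u)⁻¹ * (ν : Measure M).real (u ∩ A) := fun u hu => by
      simp [measureReal_def, ProbabilityTheory.cond_apply hu]
    rw [hcr s hs, hcr _ hs.compl, mul_inv_cancel_left₀ ha0.ne', mul_inv_cancel_left₀ hb0.ne', inter_comm s, inter_comm sᶜ]
    exact (measureReal_inter_add_sdiff₀ hs.nullMeasurableSet).symm
  obtain ⟨t, Z, hZ, hsm, -⟩ := exists_null_cells (ν : Measure M) hD.1
  have hr := rate_mix ha0.le hb0.le hZ (hν 1) (hi1 1) (hi2 1) hmix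
  have hr1 := rate_le_top (hi1 1) hn1 hZ hc htop.le
  have hr2 := rate_le_top (hi2 1) hn2 hZ hc htop.le
  rw [measEntropy_eq_rate hexp hD (hν 1) hZ hsm, EReal.coe_le_coe_iff] at hνc
  have hm1 : (⟨_, hp1⟩ : ProbabilityMeasure M) ∈ bigMeas φ Λ c := ⟨hi1, hn1, by
    change _ ≤ measEntropy _ (ProbabilityTheory.cond (ν : Measure M) s)
    rw [measEntropy_eq_rate hexp hD (hi1 1) hZ hsm, EReal.coe_le_coe_iff]
    nlinarith⟩
  have hm2 : (⟨_, hp2⟩ : ProbabilityMeasure M) ∈ bigMeas φ Λ c := ⟨hi2, hn2, by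
    change _ ≤ measEntropy _ (ProbabilityTheory.cond (ν : Measure M) sᶜ)
    rw [measEntropy_eq_rate hexp hD (hi2 1) hZ hsm, EReal.coe_le_coe_iff]
    nlinarith⟩
  have hseg := hext _ (mem_image_of_mem L hm1) _ (mem_image_of_mem L hm2)
    ⟨a, b, ha0, hb0, hab, by
      funext g
      simp only [hL, Pi.add_apply, Pi.smul_apply, smul_eq_mul, ProbabilityMeasure.coe_mk]
      unfold ProbabilityTheory.cond
      rw [integral_smul_measure, integral_smul_measure, ENNReal.toReal_inv, ENNReal.toReal_inv]
      change a * (a⁻¹ * _) + b * (b⁻¹ * _) = _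
      rw [mul_inv_cancel_left₀ ha0.ne', mul_inv_cancel_left₀ hb0.ne']
      exact integral_add_compl hs (g.integrable _)⟩
  have heq : ProbabilityTheory.cond (ν : Measure M) s = (ν : Measure M) :=
    ext_of_forall_integral_eq_of_IsFiniteMeasure fun g => congrFun hseg.1 g
  apply hs1
  rw [← heq, ProbabilityTheory.cond_apply hs, inter_self]
  exact ENNReal.inv_mul_cancel hs0 (measure_ne_top _ _)

end Avg

end EFlow

/-- Every continuous expansive flow with the shadowing property on a
compact metric space has entropy flexibility. -/
theorem expansive_shadowing_flow_entropy_flexibility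
    {M : Type*} [MetricSpace M] [CompactSpace M] [MeasurableSpace M] [BorelSpace M]
    (φ : Flow ℝ M) (hexp : FlowExpansive φ) (hsh : FlowShadowing φ) :
    FlowEntropyFlexible φ := by
  intro c hc htop
  obtain ⟨Λ, hΛ, hne, hinv, hΛc⟩ := EFlow.exists_subsystem hexp hsh hc htop
  obtain ⟨μ, hμ, herg, hμc⟩ := EFlow.exists_ergodic hexp hΛ.isClosed hne hinv hc hΛc
  exact ⟨μ, Λ, hμ, herg, hΛ, hinv, hΛc, hμc⟩
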